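/- Let R be a d-dimensional Noetherian local ring containing a field, let x_1,…,x_d be a system of parameters of R, and let Min_d(R) denote the set of minimal primes P of R with dim(R/P) = d. Then for every finitely generated R-module M, 𝔥^d_x(M) = max{ rank_{R/P}(M/PM) : P ∈ Min_d(R) }, where for a domain T, rank_T of a T-module is the dimension over Frac(T) of its base change to Frac(T). -/

import Mathlib

open scoped BigOperators ENNReal

universe u v

/-- A filtration of `M` of length `h` whose factors are cyclic modules killed by `J`. -/
def HasQLFiltration (S : Type u) [CommRing S] (J : Ideal S)
    (M : Type v) [AddCommGroup M] [Module S M] (h : ℕ) : Prop :=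
  ∃ c : Fin (h + 1) → Submodule S M,
    Monotone c ∧ c 0 = ⊥ ∧ c (Fin.last h) = ⊤ ∧
    ∀ i : Fin h,
      (∃ m : M, c i.succ = c i.castSucc ⊔ Submodule.span S {m}) ∧
      ∀ a ∈ J, ∀ x ∈ c i.succ, a • x ∈ c i.castSucc

/-- The `J`-quasilength of `M`. -/
noncomputable def quasilength (S : Type u) [CommRing S] (J : Ideal S)
    (M : Type v) [AddCommGroup M] [Module S M] : ℕ∞ :=
  sInf {n : ℕ∞ | ∃ h : ℕ, n = (h : ℕ∞) ∧ HasQLFiltration S J M h}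

/-- The ideal `(x₁^{t₁}, …, x_d^{t_d})`. -/
def powerIdeal {R : Type u} [CommRing R] {d : ℕ} (x : Fin d → R) (t : Fin d → ℕ) : Ideal R :=
  Ideal.span (Set.range fun i => x i ^ t i)

/-- The content `𝔥^d_x(M)` of `M` with respect to `x₁, …, x_d`. -/
noncomputable def content {R : Type u} [CommRing R] {d : ℕ} (x : Fin d → R)
    (M : Type v) [AddCommGroup M] [Module R M] : ℝ≥0∞ :=
  ⨆ s : ℕ, ⨅ t : {t : Fin d → ℕ // ∀ i, s ≤ t i ∧ 0 < t i},
    (quasilength R (Ideal.span (Set.range x))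
        (M ⧸ (powerIdeal x (t : Fin d → ℕ) • (⊤ : Submodule R M))) : ℝ≥0∞) /
      ∏ i, ((t : Fin d → ℕ) i : ℝ≥0∞)


section PartA1
section QC
variable {S : Type*} [CommRing S] (J : Ideal S) {M : Type*} [AddCommGroup M] [Module S M]
  {N : Type*} [AddCommGroup N] [Module S N]

/-- Chains of submodules with cyclic factors killed by `J`. -/
inductive QC (B : Submodule S M) : ℕ → Submodule S M → Prop
  | zero : QC B 0 B
  | step {h : ℕ} {N : Submodule S M} (m : M) : QC B h N → (∀ a ∈ J, a • m ∈ N) →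
      QC B (h+1) (N ⊔ Submodule.span S {m})

variable {J}

theorem QC.trans {B C D : Submodule S M} {h k : ℕ} (h1 : QC J B h C) (h2 : QC J C k D) :
    QC J B (h + k) D := by
  induction h2 with
  | zero => exact h1
  | step m _ hm ih => exact QC.step m ih hm

theorem QC.map {B C : Submodule S M} {h : ℕ} (f : M →ₗ[S] N) (h1 : QC J B h C) :
    QC J (B.map f) h (C.map f) := by
  induction h1 with
  | zero => exact QC.zero
  | step m _ hm ih =>
    rw [Submodule.map_sup, Submodule.map_span, Set.image_singleton]
    refine QC.step (f m) ih fun a ha => ?_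
    rw [← map_smul]
    exact Submodule.mem_map_of_mem (hm a ha)

theorem QC.comap {B C : Submodule S N} {h : ℕ} (f : M →ₗ[S] N) (hf : Function.Surjective f)
    (h1 : QC J B h C) : QC J (B.comap f) h (C.comap f) := by
  induction h1 with
  | zero => exact QC.zero
  | step m h1 hm ih =>
    rename_i h' N'
    obtain ⟨m, rfl⟩ := hf m
    have : (N' ⊔ Submodule.span S {f m}).comap f = N'.comap f ⊔ Submodule.span S {m} := by
      have hk : LinearMap.ker f ≤ N'.comap f := by
        intro x hx; simp only [Submodule.mem_comap]; rw [LinearMap.mem_ker.mp hx]; exact zero_mem _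
      have e1 : N' ⊔ Submodule.span S {f m} = (N'.comap f ⊔ Submodule.span S {m}).map f := by
        rw [Submodule.map_sup, Submodule.map_comap_eq_of_surjective hf, Submodule.map_span,
          Set.image_singleton]
      rw [e1, Submodule.comap_map_eq, sup_eq_left]
      exact hk.trans le_sup_left
    rw [this]
    refine QC.step m ih fun a ha => ?_
    simpa using hm a ha

theorem QC.le {B C : Submodule S M} {h : ℕ} (h1 : QC J B h C) : B ≤ C := by
  induction h1 with
  | zero => exact le_rfl
  | step m _ hm ih => exact ih.trans le_sup_left

theorem HasQLFiltration.toQC {h : ℕ} (H : HasQLFiltration S J M h) : QC J (⊥ : Submodule S M) h ⊤ := by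
  obtain ⟨c, -, h0, hl, hs⟩ := H
  rw [← hl]
  have : ∀ k : ℕ, ∀ hk : k < h + 1, QC J (⊥ : Submodule S M) k (c ⟨k, hk⟩) := by
    intro k
    induction k with
    | zero => intro hk; rw [← h0]; exact QC.zero
    | succ k ih =>
      intro hk
      obtain ⟨⟨m, hm⟩, ha⟩ := hs ⟨k, by omega⟩
      have e1 : (⟨k, by omega⟩ : Fin h).succ = ⟨k+1, hk⟩ := rfl
      have e2 : (⟨k, by omega⟩ : Fin h).castSucc = ⟨k, by omega⟩ := rfl
      rw [e1, e2] at hm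
      rw [e1, e2] at ha
      rw [hm]
      refine QC.step m (ih _) fun a haJ => ha a haJ m ?_
      rw [hm]
      exact Submodule.mem_sup_right (Submodule.mem_span_singleton_self m)
  exact this h _

theorem QC.exists_chain {B : Submodule S M} {h : ℕ} {C : Submodule S M} (H : QC J B h C) :
    ∃ c : ℕ → Submodule S M, c 0 = B ∧ c h = C ∧ ∀ i < h,
      (∃ m : M, c (i+1) = c i ⊔ Submodule.span S {m} ∧ ∀ a ∈ J, a • m ∈ c i) := by
  induction H with
  | zero => exact ⟨fun _ => B, rfl, rfl, by simp⟩
  | step m h1 hm ih =>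
    rename_i h N'
    obtain ⟨c, h0, hh, hc⟩ := ih
    refine ⟨fun i => if i ≤ h then c i else N' ⊔ Submodule.span S {m}, by simpa using h0, by simp, ?_⟩
    intro i hi
    rcases Nat.lt_succ_iff_lt_or_eq.mp hi with hi | rfl
    · simp only [hi.le, Nat.succ_le_of_lt hi, if_true]
      exact hc i hi
    · refine ⟨m, ?_, ?_⟩
      · simp [hh]
      · simpa [hh] using hm

theorem QC.toHas {h : ℕ} (H : QC J (⊥ : Submodule S M) h ⊤) : HasQLFiltration S J M h := by
  obtain ⟨c, h0, hh, hc⟩ := H.exists_chain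
  refine ⟨fun i => c i, ?_, h0, hh, ?_⟩
  · rw [Fin.monotone_iff_le_succ]
    intro i
    obtain ⟨m, hm, -⟩ := hc i i.2
    simp only [Fin.val_castSucc, Fin.val_succ]
    rw [hm]; exact le_sup_left
  · intro i
    obtain ⟨m, hm, ha⟩ := hc i i.2
    simp only [Fin.val_castSucc, Fin.val_succ]
    refine ⟨⟨m, hm⟩, fun a haJ x hx => ?_⟩
    rw [hm] at hx
    obtain ⟨y, hy, z, hz, rfl⟩ := Submodule.mem_sup.mp hx
    obtain ⟨b, rfl⟩ := Submodule.mem_span_singleton.mp hz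
    rw [smul_add, smul_comm]
    exact add_mem (Submodule.smul_mem _ _ hy) (Submodule.smul_mem _ _ (ha a haJ))

theorem hasQL_iff {h : ℕ} : HasQLFiltration S J M h ↔ QC J (⊥ : Submodule S M) h ⊤ :=
  ⟨fun H => H.toQC, fun H => H.toHas⟩

theorem quasilength_le_of {h : ℕ} (H : QC J (⊥ : Submodule S M) h ⊤) :
    quasilength S J M ≤ h := sInf_le ⟨h, rfl, H.toHas⟩

theorem exists_of_quasilength_ne_top (H : quasilength S J M ≠ ⊤) :
    ∃ h : ℕ, quasilength S J M = h ∧ QC J (⊥ : Submodule S M) h ⊤ := by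
  have hne : {n : ℕ∞ | ∃ h : ℕ, n = (h : ℕ∞) ∧ HasQLFiltration S J M h}.Nonempty := by
    by_contra hne
    rw [Set.not_nonempty_iff_eq_empty] at hne
    apply H
    unfold quasilength
    rw [hne, sInf_empty]
  obtain ⟨h, hh, hq⟩ := csInf_mem hne
  exact ⟨h, hh, hq.toQC⟩

theorem quasilength_exact {M' : Type*} [AddCommGroup M'] [Module S M']
    (f : N →ₗ[S] M) (g : M →ₗ[S] M') (hg : Function.Surjective g)
    (hfg : LinearMap.ker g ≤ LinearMap.range f) :
    quasilength S J M ≤ quasilength S J N + quasilength S J M' := by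
  by_cases h1 : quasilength S J N = ⊤
  · simp [h1]
  by_cases h2 : quasilength S J M' = ⊤
  · simp [h2]
  obtain ⟨a, ha, ca⟩ := exists_of_quasilength_ne_top h1
  obtain ⟨b, hb, cb⟩ := exists_of_quasilength_ne_top h2
  rw [ha, hb, ← Nat.cast_add]
  refine quasilength_le_of ?_
  have c1 := ca.map f
  rw [Submodule.map_bot, Submodule.map_top] at c1
  have c2 := cb.comap g hg
  rw [Submodule.comap_top] at c2
  -- push c2 to start from range f
  have c3 : QC J (LinearMap.range f) b (⊤ : Submodule S M) := by
    have c4 := (c2.map (LinearMap.range f).mkQ).comap _ (Submodule.mkQ_surjective _)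
    rw [Submodule.comap_map_mkQ, Submodule.comap_map_mkQ, sup_top_eq] at c4
    rwa [sup_eq_left.mpr] at c4
    rw [Submodule.comap_bot]; exact hfg
  exact c1.trans c3

theorem quasilength_surj (g : M →ₗ[S] N) (hg : Function.Surjective g) :
    quasilength S J N ≤ quasilength S J M := by
  by_cases h1 : quasilength S J M = ⊤
  · simp [h1]
  obtain ⟨a, ha, ca⟩ := exists_of_quasilength_ne_top h1
  rw [ha]
  have := ca.map g
  rw [Submodule.map_bot, Submodule.map_top, LinearMap.range_eq_top.mpr hg] at this
  exact quasilength_le_of this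

theorem quasilength_of_subsingleton [Subsingleton M] : quasilength S J M = 0 := by
  refine le_antisymm (quasilength_le_of (h := 0) ?_) zero_le
  have : (⊥ : Submodule S M) = ⊤ := Subsingleton.elim _ _
  rw [← this]; exact QC.zero

/-- a cyclic module killed by `J` has quasilength at most one -/
theorem quasilength_cyclic_le_one (m : M) (hm : Submodule.span S {m} = ⊤)
    (hJ : ∀ a ∈ J, a • m = 0) : quasilength S J M ≤ 1 := by
  have : QC J (⊥ : Submodule S M) (0+1) (⊥ ⊔ Submodule.span S {m}) :=
    QC.step m QC.zero (fun a ha => by simp [hJ a ha])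
  rw [hm, bot_sup_eq] at this
  exact quasilength_le_of this

/-- if `M` is a sum of `k` cyclic submodules then quasilength is at most `k` times -/
theorem quasilength_of_gens {ι : Type*} (s : Finset ι) (f : ι → (N →ₗ[S] M))
    (hf : ⨆ i ∈ s, LinearMap.range (f i) = ⊤) :
    quasilength S J M ≤ s.card * quasilength S J N := by
  classical
  by_cases h1 : quasilength S J N = ⊤
  · rcases s.eq_empty_or_nonempty with rfl | hs
    · have : Subsingleton M := by
        rw [← Submodule.subsingleton_iff S, ← subsingleton_iff_bot_eq_top]; simpa using hf
      rw [quasilength_of_subsingleton]; exact zero_le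
    · rw [h1, ENat.mul_top (by simpa using hs.ne_empty)]; exact le_top
  obtain ⟨a, ha, ca⟩ := exists_of_quasilength_ne_top h1
  rw [ha, ← Nat.cast_mul]
  refine quasilength_le_of ?_
  rw [← hf]
  clear hf
  induction s using Finset.induction_on with
  | empty => simpa using QC.zero
  | insert i s hi ih =>
    rw [Finset.card_insert_of_notMem hi, add_mul, one_mul, Finset.iSup_insert]
    refine ih.trans ?_
    set B := ⨆ j ∈ s, LinearMap.range (f j)
    have := ((ca.map (f i)).map B.mkQ).comap _ (Submodule.mkQ_surjective _)
    rw [Submodule.comap_map_mkQ, Submodule.comap_map_mkQ, Submodule.map_bot, Submodule.map_top,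
      sup_bot_eq, sup_comm] at this
    exact this

end QC

end PartA1

section PartA2
section SUB
variable {d : ℕ}

theorem lam_step (lam : (Fin d → ℕ) → ℕ∞)
    (sub : ∀ t i a b, lam (Function.update t i (a+b)) ≤
      lam (Function.update t i a) + lam (Function.update t i b))
    (t : Fin d → ℕ) (i : Fin d) (k : ℕ) :
    lam (Function.update t i ((k+1) * t i)) ≤ (k+1 : ℕ) * lam t := by
  induction k with
  | zero => simp
  | succ k ih =>
    have e : (k + 1 + 1) * t i = (k+1) * t i + t i := by ring
    rw [e]
    refine (sub _ _ _ _).trans ?_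
    rw [Function.update_eq_self]
    have : ((k + 1 + 1 : ℕ) : ℕ∞) * lam t = (k+1:ℕ) * lam t + lam t := by
      push_cast; ring
    rw [this]
    gcongr

theorem lam_mul (lam : (Fin d → ℕ) → ℕ∞)
    (sub : ∀ t i a b, lam (Function.update t i (a+b)) ≤
      lam (Function.update t i a) + lam (Function.update t i b))
    (s k : Fin d → ℕ) :
    lam (fun i => (k i + 1) * s i) ≤ (∏ i, (k i + 1) : ℕ) * lam s := by
  classical
  have key : ∀ S : Finset (Fin d), lam (fun i => if i ∈ S then (k i + 1) * s i else s i) ≤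
      (∏ i ∈ S, (k i + 1) : ℕ) * lam s := by
    intro S
    induction S using Finset.induction_on with
    | empty => simp
    | insert j S hj ih =>
      rw [Finset.prod_insert hj]
      have e : (fun i => if i ∈ insert j S then (k i + 1) * s i else s i) =
        Function.update (fun i => if i ∈ S then (k i + 1) * s i else s i) j
          ((k j + 1) * (fun i => if i ∈ S then (k i + 1) * s i else s i) j) := by
        funext i
        by_cases hij : i = j
        · subst hij; simp [hj]
        · simp [hij]
      rw [e]
      refine (lam_step lam sub _ _ _).trans ?_
      rw [Nat.cast_mul, mul_assoc]
      gcongr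
  simpa using key Finset.univ

theorem lam_const (lam : (Fin d → ℕ) → ℕ∞)
    (sub : ∀ t i a b, lam (Function.update t i (a+b)) ≤
      lam (Function.update t i a) + lam (Function.update t i b))
    (t : Fin d → ℕ) (ht : ∀ i, 0 < t i) :
    lam t ≤ (∏ i, t i : ℕ) * lam (fun _ => 1) := by
  have := lam_mul lam sub (fun _ => 1) (fun i => t i - 1)
  have e : ∀ i, t i - 1 + 1 = t i := fun i => Nat.sub_add_cancel (ht i)
  simpa only [e, mul_one] using this

/-- The subadditivity inequality. -/
theorem lam_sub (lam : (Fin d → ℕ) → ℕ∞) (mono : ∀ s t, s ≤ t → lam s ≤ lam t)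
    (sub : ∀ t i a b, lam (Function.update t i (a+b)) ≤
      lam (Function.update t i a) + lam (Function.update t i b))
    (N : ℕ) (s t : Fin d → ℕ) (hs : ∀ i, 0 < s i) (ht : ∀ i, N * s i ≤ t i) :
    ((N ^ d * ∏ i, s i : ℕ) : ℕ∞) * lam t ≤ (((N+1) ^ d * ∏ i, t i : ℕ) : ℕ∞) * lam s := by
  have h1 : lam t ≤ (∏ i, (t i / s i + 1) : ℕ) * lam s := by
    refine (mono _ _ ?_).trans (lam_mul lam sub s (fun i => t i / s i))
    intro i
    have := Nat.div_add_mod (t i) (s i)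
    have := Nat.mod_lt (t i) (hs i)
    simp only
    nlinarith
  refine (mul_le_mul_right h1 _).trans ?_
  rw [← mul_assoc, ← Nat.cast_mul]
  refine mul_le_mul_left (Nat.cast_le.mpr ?_) _
  have e1 : N ^ d = ∏ i : Fin d, N := by simp
  have e2 : (N+1) ^ d = ∏ i : Fin d, (N+1) := by simp
  rw [e1, e2, ← Finset.prod_mul_distrib, ← Finset.prod_mul_distrib, ← Finset.prod_mul_distrib]
  refine Finset.prod_le_prod' fun i _ => ?_
  have := Nat.div_mul_le_self (t i) (s i)
  have := ht i
  nlinarith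

end SUB

section PI
variable {R : Type u} [CommRing R] {d : ℕ} {M : Type v} [AddCommGroup M] [Module R M]

theorem powerIdeal_smul_le (y : Fin d → R) (t : Fin d → ℕ) (N : Submodule R M) :
    powerIdeal y t • (⊤ : Submodule R M) ≤ N ↔ ∀ i m, y i ^ t i • m ∈ N := by
  unfold powerIdeal
  constructor
  · intro h i m
    exact h (Submodule.smul_mem_smul (Ideal.subset_span ⟨i, rfl⟩) trivial)
  · intro h
    rw [Submodule.smul_le]
    intro r hr n _
    induction hr using Submodule.span_induction with
    | mem x hx => obtain ⟨i, rfl⟩ := hx; exact h i n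
    | zero => simp
    | add x y _ _ hx hy => rw [add_smul]; exact add_mem hx hy
    | smul a x _ hx => rw [smul_assoc]; exact N.smul_mem a hx

theorem mem_powerIdeal_smul (y : Fin d → R) (t : Fin d → ℕ) (i : Fin d) (m : M) :
    y i ^ t i • m ∈ powerIdeal y t • (⊤ : Submodule R M) :=
  (powerIdeal_smul_le y t _).mp le_rfl i m

theorem mem_powerIdeal_smul_of_le (y : Fin d → R) (t : Fin d → ℕ) (i : Fin d) (n : ℕ) (hn : t i ≤ n)
    (m : M) : y i ^ n • m ∈ powerIdeal y t • (⊤ : Submodule R M) := by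
  obtain ⟨k, rfl⟩ := Nat.exists_eq_add_of_le hn
  rw [pow_add, mul_smul]; exact mem_powerIdeal_smul y t i _

theorem powerIdeal_smul_anti (y : Fin d → R) {s t : Fin d → ℕ} (h : s ≤ t) :
    powerIdeal y t • (⊤ : Submodule R M) ≤ powerIdeal y s • (⊤ : Submodule R M) := by
  rw [powerIdeal_smul_le]
  intro i m
  exact mem_powerIdeal_smul_of_le y s i _ (h i) m

theorem powerIdeal_anti (y : Fin d → R) {s t : Fin d → ℕ} (h : s ≤ t) :
    powerIdeal y t ≤ powerIdeal y s := by
  have := powerIdeal_smul_anti (M := R) y h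
  simpa [Ideal.smul_top_eq_map] using this

theorem powerIdeal_exact (y : Fin d → R) (t : Fin d → ℕ) (i : Fin d) (a b : ℕ) :
    ∃ (f : (M ⧸ (powerIdeal y (Function.update t i a) • (⊤ : Submodule R M))) →ₗ[R]
        (M ⧸ (powerIdeal y (Function.update t i (a+b)) • (⊤ : Submodule R M))))
      (g : (M ⧸ (powerIdeal y (Function.update t i (a+b)) • (⊤ : Submodule R M))) →ₗ[R]
        (M ⧸ (powerIdeal y (Function.update t i b) • (⊤ : Submodule R M)))),
      Function.Surjective g ∧ LinearMap.ker g ≤ LinearMap.range f := by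
  have h1 : powerIdeal y (Function.update t i a) • (⊤ : Submodule R M) ≤
      (powerIdeal y (Function.update t i (a+b)) • (⊤ : Submodule R M)).comap
        (LinearMap.lsmul R M (y i ^ b)) := by
    rw [powerIdeal_smul_le]
    intro j m
    simp only [Submodule.mem_comap, LinearMap.lsmul_apply]
    by_cases hj : j = i
    · subst hj
      rw [Function.update_self, smul_smul, ← pow_add, add_comm b a]
      refine mem_powerIdeal_smul_of_le y _ j _ ?_ m
      simp
    · rw [smul_comm]
      refine mem_powerIdeal_smul_of_le y _ j _ ?_ _
      simp [hj]
  have h2 : powerIdeal y (Function.update t i (a+b)) • (⊤ : Submodule R M) ≤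
      powerIdeal y (Function.update t i b) • (⊤ : Submodule R M) := by
    refine powerIdeal_smul_anti y ?_
    intro j
    by_cases hj : j = i
    · subst hj; simp
    · simp [hj]
  refine ⟨Submodule.mapQ _ _ _ h1, Submodule.factor h2, Submodule.factor_surjective h2, ?_⟩
  intro z hz
  obtain ⟨m, rfl⟩ := Submodule.mkQ_surjective _ z
  have hm : m ∈ powerIdeal y (Function.update t i b) • (⊤ : Submodule R M) := by
    simpa [Submodule.factor] using hz
  have h3 : powerIdeal y (Function.update t i b) • (⊤ : Submodule R M) ≤
    (LinearMap.range (Submodule.mapQ _ _ _ h1)).comap (Submodule.mkQ _) := by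
    rw [powerIdeal_smul_le]
    intro j n
    simp only [Submodule.mem_comap]
    by_cases hj : j = i
    · subst hj
      refine ⟨Submodule.Quotient.mk n, ?_⟩
      simp
    · have : (Submodule.mkQ (powerIdeal y (Function.update t i (a+b)) • (⊤ : Submodule R M)))
          (y j ^ Function.update t i b j • n) = 0 := by
        rw [Submodule.mkQ_apply, Submodule.Quotient.mk_eq_zero]
        refine mem_powerIdeal_smul_of_le y _ j _ ?_ _
        simp [hj]
      rw [this]; exact zero_mem _
  exact h3 hm

theorem ql_mono (J : Ideal R) (y : Fin d → R) (s t : Fin d → ℕ) (h : s ≤ t) :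
    quasilength R J (M ⧸ (powerIdeal y s • (⊤ : Submodule R M))) ≤
    quasilength R J (M ⧸ (powerIdeal y t • (⊤ : Submodule R M))) :=
  quasilength_surj (Submodule.factor (powerIdeal_smul_anti y h)) (Submodule.factor_surjective _)

theorem ql_sub (J : Ideal R) (y : Fin d → R) (t : Fin d → ℕ) (i : Fin d) (a b : ℕ) :
    quasilength R J (M ⧸ (powerIdeal y (Function.update t i (a+b)) • (⊤ : Submodule R M))) ≤
    quasilength R J (M ⧸ (powerIdeal y (Function.update t i a) • (⊤ : Submodule R M))) +
    quasilength R J (M ⧸ (powerIdeal y (Function.update t i b) • (⊤ : Submodule R M))) := by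
  obtain ⟨f, g, hg, hfg⟩ := powerIdeal_exact (M := M) y t i a b
  exact quasilength_exact f g hg hfg

theorem length_le_of_exact {A B C : Type*} [AddCommGroup A] [AddCommGroup B] [AddCommGroup C]
    [Module R A] [Module R B] [Module R C] (f : A →ₗ[R] B) (g : B →ₗ[R] C)
    (hg : Function.Surjective g) (hfg : LinearMap.ker g ≤ LinearMap.range f) :
    Module.length R B ≤ Module.length R A + Module.length R C := by
  rw [Module.length_eq_add_of_exact (LinearMap.ker g).subtype g (Submodule.subtype_injective _) hg
    (LinearMap.exact_subtype_ker_map g)]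
  gcongr
  refine (Module.length_le_of_injective (Submodule.inclusion hfg) (Submodule.inclusion_injective _)).trans ?_
  exact Module.length_le_of_surjective f.rangeRestrict f.surjective_rangeRestrict

theorem len_mono (y : Fin d → R) (s t : Fin d → ℕ) (h : s ≤ t) :
    Module.length R (M ⧸ (powerIdeal y s • (⊤ : Submodule R M))) ≤
    Module.length R (M ⧸ (powerIdeal y t • (⊤ : Submodule R M))) :=
  Module.length_le_of_surjective (Submodule.factor (powerIdeal_smul_anti y h)) (Submodule.factor_surjective _)

theorem len_sub (y : Fin d → R) (t : Fin d → ℕ) (i : Fin d) (a b : ℕ) :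
    Module.length R (M ⧸ (powerIdeal y (Function.update t i (a+b)) • (⊤ : Submodule R M))) ≤
    Module.length R (M ⧸ (powerIdeal y (Function.update t i a) • (⊤ : Submodule R M))) +
    Module.length R (M ⧸ (powerIdeal y (Function.update t i b) • (⊤ : Submodule R M))) := by
  obtain ⟨f, g, hg, hfg⟩ := powerIdeal_exact (M := M) y t i a b
  exact length_le_of_exact f g hg hfg

/-- finiteness of quasilength of finite modules killed by a power of `J` -/
theorem ql_finite_of_pow (J : Ideal R) [IsNoetherianRing R] [Module.Finite R M] (n : ℕ)
    (h : J ^ n • (⊤ : Submodule R M) = ⊥) : quasilength R J M ≠ ⊤ := by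
  have key : ∀ n, ∃ k, QC J (J ^ n • (⊤ : Submodule R M)) k ⊤ := by
    intro n
    induction n with
    | zero => refine ⟨0, ?_⟩; simpa using QC.zero (J := J)
    | succ n ih =>
      obtain ⟨k, hk⟩ := ih
      obtain ⟨S, hS⟩ : (J ^ n • (⊤ : Submodule R M)).FG := IsNoetherian.noetherian _
      have : ∀ T : Finset M, T ⊆ S → ∃ k, QC J (J ^ (n+1) • (⊤ : Submodule R M)) k
          (J ^ (n+1) • (⊤ : Submodule R M) ⊔ Submodule.span R T) := by
        classical
        intro T
        induction T using Finset.induction_on with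
        | empty => intro _; refine ⟨0, ?_⟩; simpa using QC.zero (J := J)
        | insert m T hm ih =>
          intro hT
          obtain ⟨k, hk⟩ := ih (fun x hx => hT (Finset.mem_insert_of_mem hx))
          refine ⟨k+1, ?_⟩
          have e : J ^ (n + 1) • (⊤ : Submodule R M) ⊔ Submodule.span R ↑(insert m T) =
            (J ^ (n + 1) • (⊤ : Submodule R M) ⊔ Submodule.span R T) ⊔ Submodule.span R {m} := by
            rw [Finset.coe_insert, Submodule.span_insert, sup_assoc, sup_comm (Submodule.span R {m})]
          rw [e]
          refine QC.step m hk fun a ha => ?_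
          refine Submodule.mem_sup_left ?_
          rw [pow_succ', Submodule.mul_smul]
          refine Submodule.smul_mem_smul ha ?_
          rw [← hS]
          exact Submodule.subset_span (hT (Finset.mem_insert_self _ _))
      obtain ⟨k', hk'⟩ := this S subset_rfl
      rw [hS, sup_eq_right.mpr (Submodule.smul_mono_left (Ideal.pow_le_pow_right (Nat.le_succ n)))] at hk'
      exact ⟨k' + k, hk'.trans hk⟩
  obtain ⟨k, hk⟩ := key n
  rw [h] at hk
  exact ne_top_of_le_ne_top (ENat.natCast_ne_top k) (quasilength_le_of hk)

end PI

end PartA2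

section PartA3
theorem span_range_pow_le {R : Type u} [CommRing R] {d : ℕ} (hd : 0 < d) (x : Fin d → R) (s : ℕ) :
    Ideal.span (Set.range x) ^ (d * s) ≤ powerIdeal x (fun _ => s) := by
  classical
  have : NeZero d := ⟨hd.ne'⟩
  rw [Ideal.span, Submodule.span_pow, Submodule.span_le]
  intro a ha
  rw [Set.mem_pow] at ha
  obtain ⟨f, rfl⟩ := ha
  choose g hg using fun j => (f j).2
  rw [List.prod_ofFn]
  simp only [← hg]
  obtain ⟨i, hi⟩ := Fintype.exists_le_card_fiber_of_mul_le_card (f := g) (n := s) (by simp)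
  have h1 : x i ^ s ∣ ∏ j, x (g j) := by
    have h2 : ∏ j ∈ Finset.univ.filter (fun j => g j = i), x (g j) ∣ ∏ j, x (g j) :=
      Finset.prod_dvd_prod_of_subset _ _ _ (Finset.filter_subset _ _)
    rw [Finset.prod_congr rfl (g := fun _ => x i)
      (fun j hj => by rw [(Finset.mem_filter.mp hj).2]), Finset.prod_const] at h2
    exact (pow_dvd_pow _ hi).trans h2
  exact Ideal.mem_of_dvd _ h1 (Ideal.subset_span ⟨i, rfl⟩)

theorem exists_sop {A : Type*} [CommRing A] [IsNoetherianRing A] [IsLocalRing A] {d : ℕ}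
    (h : ringKrullDim A < d) : ∃ k < d, ∃ y : Fin k → A,
      (Ideal.span (Set.range y)).radical = IsLocalRing.maximalIdeal A := by
  obtain ⟨s, hs, hc⟩ := (IsLocalRing.maximalIdeal A).exists_finset_card_eq_height_of_isNoetherianRing
  refine ⟨s.card, ?_, fun i => (s.equivFin.symm i : A), ?_⟩
  · rw [← IsLocalRing.maximalIdeal_height_eq_ringKrullDim, ← hc] at h
    exact_mod_cast h
  · have e : Set.range (fun i => (s.equivFin.symm i : A)) = (s : Set A) := by
      ext a; simp only [Set.mem_range]
      constructor
      · rintro ⟨i, rfl⟩; exact (s.equivFin.symm i).2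
      · intro ha; exact ⟨s.equivFin ⟨a, ha⟩, by simp⟩
    rw [e]
    refine le_antisymm ?_ ?_
    · have : (IsLocalRing.maximalIdeal A).IsPrime := inferInstance
      exact this.radical_le_iff.mpr hs.1.2
    · rw [Ideal.radical_eq_sInf]
      refine le_sInf ?_
      rintro J ⟨hJ, hJp⟩
      exact hs.2 ⟨hJp, hJ⟩ (IsLocalRing.le_maximalIdeal hJp.ne_top)

section
variable {R : Type u} [CommRing R] [IsNoetherianRing R] [IsLocalRing R]

theorem exists_sop_mod {d : ℕ} (𝔞 : Ideal R) (h𝔞 : 𝔞 ≠ ⊤)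
    (h : ringKrullDim (R ⧸ 𝔞) < d) : ∃ k < d, ∃ y : Fin k → R,
      (∀ i, y i ∈ IsLocalRing.maximalIdeal R) ∧
      ∃ N, IsLocalRing.maximalIdeal R ^ N ≤ 𝔞 ⊔ Ideal.span (Set.range y) := by
  have : Nontrivial (R ⧸ 𝔞) := Ideal.Quotient.nontrivial_iff.mpr h𝔞
  have : IsLocalRing (R ⧸ 𝔞) := IsLocalRing.of_surjective' _ Ideal.Quotient.mk_surjective
  obtain ⟨k, hk, y, hy⟩ := exists_sop h
  choose z hz using fun i => Ideal.Quotient.mk_surjective (y i)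
  refine ⟨k, hk, z, ?_, ?_⟩
  · intro i
    have hi : y i ∈ IsLocalRing.maximalIdeal (R ⧸ 𝔞) := by
      rw [← hy]; exact Ideal.le_radical (Ideal.subset_span ⟨i, rfl⟩)
    rw [IsLocalRing.mem_maximalIdeal, mem_nonunits_iff] at hi ⊢
    intro hu; apply hi; rw [← hz]; exact hu.map _
  · obtain ⟨N, hN⟩ := Ideal.exists_radical_pow_le_of_fg (Ideal.span (Set.range y)) (IsNoetherian.noetherian _)
    refine ⟨N, ?_⟩
    rw [hy] at hN
    have h1 : (IsLocalRing.maximalIdeal R ^ N).map (Ideal.Quotient.mk 𝔞) ≤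
        (Ideal.span (Set.range z)).map (Ideal.Quotient.mk 𝔞) := by
      have e : (Ideal.span (Set.range z)).map (Ideal.Quotient.mk 𝔞) = Ideal.span (Set.range y) := by
        rw [Ideal.map_span, ← Set.range_comp]
        congr 2
        funext i; exact hz i
      rw [e, Ideal.map_pow]
      refine le_trans (Ideal.pow_right_mono ?_ N) hN
      rw [Ideal.map_le_iff_le_comap]
      have hmax : ((IsLocalRing.maximalIdeal (R ⧸ 𝔞)).comap (Ideal.Quotient.mk 𝔞)).IsMaximal :=
        Ideal.comap_isMaximal_of_surjective _ Ideal.Quotient.mk_surjective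
      rw [IsLocalRing.eq_maximalIdeal hmax]
    rw [Ideal.map_le_iff_le_comap, Ideal.comap_map_of_surjective _ Ideal.Quotient.mk_surjective,
      ← RingHom.ker_eq_comap_bot, Ideal.mk_ker, sup_comm] at h1
    exact h1

theorem TOR_cyclic {d : ℕ} (x : Fin d → R)
    (hx : (Ideal.span (Set.range x)).radical = IsLocalRing.maximalIdeal R)
    (𝔞 : Ideal R) (h : ringKrullDim (R ⧸ 𝔞) < d) :
    ∃ A : ℕ, ∀ s > 0, ∀ t : Fin d → ℕ, (∀ i, s ≤ t i) →
      (s : ℕ∞) * quasilength R (Ideal.span (Set.range x))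
        ((R ⧸ 𝔞) ⧸ (powerIdeal x t • (⊤ : Submodule R (R ⧸ 𝔞)))) ≤ A * (∏ i, t i : ℕ) := by
  by_cases h𝔞 : 𝔞 = ⊤
  · refine ⟨0, fun s _ t _ => ?_⟩
    have : Subsingleton (R ⧸ 𝔞) := Ideal.Quotient.subsingleton_iff.mpr h𝔞
    have : Subsingleton ((R ⧸ 𝔞) ⧸ (powerIdeal x t • (⊤ : Submodule R (R ⧸ 𝔞)))) := inferInstance
    rw [quasilength_of_subsingleton]; simp
  obtain ⟨k, hk, y, hy, N, hN⟩ := exists_sop_mod 𝔞 h𝔞 h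
  set I := Ideal.span (Set.range x) with hI
  have hIm : I ≤ IsLocalRing.maximalIdeal R := by rw [← hx]; exact Ideal.le_radical
  obtain ⟨N', hN'⟩ := Ideal.exists_radical_pow_le_of_fg I (IsNoetherian.noetherian _)
  rw [hx] at hN'
  have hfin : quasilength R I ((R ⧸ 𝔞) ⧸ (powerIdeal y (fun _ => 1) • (⊤ : Submodule R (R ⧸ 𝔞)))) ≠ ⊤ := by
    refine ql_finite_of_pow I N ?_
    rw [eq_bot_iff, Submodule.smul_le]
    intro r hr n _
    have hr' := hN (Ideal.pow_right_mono hIm N hr)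
    obtain ⟨n, rfl⟩ := Submodule.mkQ_surjective _ n
    rw [Submodule.mem_bot, ← map_smul, Submodule.mkQ_apply, Submodule.Quotient.mk_eq_zero]
    obtain ⟨a, ha, b, hb, rfl⟩ := Submodule.mem_sup.mp hr'
    rw [add_smul]
    refine add_mem ?_ ?_
    · obtain ⟨n, rfl⟩ := Ideal.Quotient.mk_surjective n
      have : a • (Ideal.Quotient.mk 𝔞 n) = 0 := by
        rw [← Ideal.Quotient.mkₐ_eq_mk R, ← map_smul, Ideal.Quotient.mkₐ_eq_mk, Ideal.Quotient.eq_zero_iff_mem]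
        exact Ideal.mul_mem_right _ _ ha
      rw [this]; exact zero_mem _
    · refine Submodule.smul_mem_smul ?_ trivial
      simpa [powerIdeal] using hb
  obtain ⟨B, hB⟩ := ENat.ne_top_iff_exists.mp hfin
  have hd : 0 < d := by omega
  set E := (N' + 1) * d with hE
  have hE0 : 0 < E := by positivity
  refine ⟨2 ^ d * (E ^ k * B), fun s hs t ht => ?_⟩
  -- value at the constant exponent
  have h1 : quasilength R I ((R ⧸ 𝔞) ⧸ (powerIdeal x (fun _ => s) • (⊤ : Submodule R (R ⧸ 𝔞)))) ≤
      ((E ^ k * s ^ k * B : ℕ) : ℕ∞) := by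
    have hle : powerIdeal y (fun _ => E * s) • (⊤ : Submodule R (R ⧸ 𝔞)) ≤
        powerIdeal x (fun _ => s) • (⊤ : Submodule R (R ⧸ 𝔞)) := by
      refine Submodule.smul_mono_left ?_
      rw [powerIdeal, Ideal.span_le]
      rintro _ ⟨i, rfl⟩
      refine span_range_pow_le hd x s ?_
      change y i ^ (E * s) ∈ _
      rw [hE, mul_assoc, pow_mul (y i)]
      refine Ideal.pow_mem_pow (I := I) ?_ _
      exact hN' (Ideal.pow_le_pow_right (Nat.le_succ _) (Ideal.pow_mem_pow (hy i) _))
    refine (quasilength_surj (Submodule.factor hle) (Submodule.factor_surjective _)).trans ?_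
    have := lam_const (fun t => quasilength R I ((R ⧸ 𝔞) ⧸ (powerIdeal y t • (⊤ : Submodule R (R ⧸ 𝔞)))))
      (ql_sub I y) (fun _ => E * s) (fun _ => Nat.mul_pos hE0 hs)
    simp only [← hB, Finset.prod_const, Finset.card_univ, Fintype.card_fin] at this
    refine this.trans (le_of_eq ?_)
    rw [mul_pow]; push_cast; ring
  have h2 := lam_sub (fun t => quasilength R I ((R ⧸ 𝔞) ⧸ (powerIdeal x t • (⊤ : Submodule R (R ⧸ 𝔞)))))
    (ql_mono I x) (ql_sub I x) 1 (fun _ => s) t (fun _ => hs) (by simpa using ht)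
  simp only [one_pow, one_mul, Finset.prod_const, Finset.card_univ, Fintype.card_fin] at h2
  set q := quasilength R I ((R ⧸ 𝔞) ⧸ (powerIdeal x t • (⊤ : Submodule R (R ⧸ 𝔞)))) with hq
  have h3 : ((s ^ d : ℕ) : ℕ∞) * q ≤ ((2 ^ d * (∏ i, t i) * (E ^ k * s ^ k * B) : ℕ) : ℕ∞) := by
    refine h2.trans ?_
    rw [Nat.cast_mul _ (E ^ k * s ^ k * B)]
    exact mul_le_mul_right h1 _
  have hqt : q ≠ ⊤ := by
    intro hqt
    rw [hqt, ENat.mul_top (by exact_mod_cast (pow_pos hs d).ne')] at h3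
    exact absurd (top_le_iff.mp h3) (ENat.natCast_ne_top _)
  obtain ⟨b, hb⟩ := ENat.ne_top_iff_exists.mp hqt
  rw [← hb] at h3 ⊢
  norm_cast at h3 ⊢
  obtain ⟨j, rfl⟩ : ∃ j, d = k + 1 + j := ⟨d - (k+1), by omega⟩
  have h4 : s ^ k * (s * b) ≤ s ^ k * (2 ^ (k+1+j) * (E ^ k * B) * ∏ i, t i) := by
    have : s ^ (k + 1) * b ≤ s ^ (k+1+j) * b :=
      Nat.mul_le_mul_right _ (Nat.pow_le_pow_right hs (by omega))
    calc s ^ k * (s * b) = s ^ (k+1) * b := by ring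
      _ ≤ _ := this
      _ ≤ _ := h3
      _ = _ := by ring
  exact Nat.le_of_mul_le_mul_left h4 (pow_pos hs k)

theorem TOR {d : ℕ} (x : Fin d → R)
    (hx : (Ideal.span (Set.range x)).radical = IsLocalRing.maximalIdeal R)
    (𝔞 : Ideal R) (h : ringKrullDim (R ⧸ 𝔞) < d) {C : Type v} [AddCommGroup C] [Module R C]
    [Module.Finite R C] (hC : ∀ a ∈ 𝔞, ∀ c : C, a • c = 0) :
    ∃ A : ℕ, ∀ s > 0, ∀ t : Fin d → ℕ, (∀ i, s ≤ t i) →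
      (s : ℕ∞) * quasilength R (Ideal.span (Set.range x))
        (C ⧸ (powerIdeal x t • (⊤ : Submodule R C))) ≤ A * (∏ i, t i : ℕ) := by
  obtain ⟨A, hA⟩ := TOR_cyclic x hx 𝔞 h
  obtain ⟨S, hS⟩ := Module.Finite.fg_top (R := R) (M := C)
  refine ⟨S.card * A, fun s hs t ht => ?_⟩
  have hle : ∀ c : C, 𝔞 ≤ LinearMap.ker (LinearMap.toSpanSingleton R C c) := by
    intro c a ha; simp [hC a ha c]
  let f : C → ((R ⧸ 𝔞) →ₗ[R] C) := fun c => Submodule.liftQ 𝔞 (LinearMap.toSpanSingleton R C c) (hle c)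
  have hf : ∀ c, powerIdeal x t • (⊤ : Submodule R (R ⧸ 𝔞)) ≤
      (powerIdeal x t • (⊤ : Submodule R C)).comap (f c) := by
    intro c
    rw [powerIdeal_smul_le]
    intro i m
    rw [Submodule.mem_comap, map_smul]
    exact mem_powerIdeal_smul x t i _
  have := quasilength_of_gens (J := Ideal.span (Set.range x)) S (fun c => Submodule.mapQ _ _ _ (hf c)) (by
    rw [eq_top_iff]
    rintro z -
    obtain ⟨c, rfl⟩ := Submodule.mkQ_surjective _ z
    have hc : c ∈ Submodule.span R (S : Set C) := by rw [hS]; trivial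
    have hle : Submodule.span R (S : Set C) ≤
      (⨆ i ∈ S, LinearMap.range (Submodule.mapQ _ _ _ (hf i))).comap (Submodule.mkQ _) := by
      rw [Submodule.span_le]
      intro c hc
      simp only [Submodule.comap_coe, Set.mem_preimage, SetLike.mem_coe]
      refine Submodule.mem_iSup_of_mem c (Submodule.mem_iSup_of_mem hc ?_)
      refine ⟨Submodule.Quotient.mk (Submodule.Quotient.mk 1), ?_⟩
      simp only [Submodule.mapQ_apply, Submodule.mkQ_apply]
      congr 1
      simp only [f, Submodule.liftQ_apply, LinearMap.toSpanSingleton_apply, one_smul]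
    exact hle hc)
  calc _ ≤ (s : ℕ∞) * (S.card * _) := mul_le_mul_right this _
    _ = S.card * ((s : ℕ∞) * quasilength R (Ideal.span (Set.range x))
        ((R ⧸ 𝔞) ⧸ (powerIdeal x t • (⊤ : Submodule R (R ⧸ 𝔞))))) := by ring
    _ ≤ S.card * (A * (∏ i, t i : ℕ)) := mul_le_mul_right (hA s hs t ht) _
    _ = _ := by push_cast; ring
end

end PartA3

section PartB1
section Ev
open Polynomial
variable {ι : Type*} {T : Type*} [CommRing T] {T' : Type*} [CommRing T']

/-- evaluation of a polynomial over `ℤ[Z]` -/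
noncomputable def evh (z : ι → T) (θ : T) : (MvPolynomial ι ℤ)[X] →+* T :=
  Polynomial.eval₂RingHom (MvPolynomial.eval₂Hom (Int.castRingHom T) z) θ

theorem evh_nat (φ : T →+* T') (z : ι → T) (θ : T) (P : (MvPolynomial ι ℤ)[X]) :
    φ (evh z θ P) = evh (fun i => φ (z i)) (φ θ) P := by
  have : φ.comp (evh z θ) = evh (fun i => φ (z i)) (φ θ) := by
    refine Polynomial.ringHom_ext' ?_ ?_
    · refine MvPolynomial.ringHom_ext ?_ ?_
      · intro n; simp
      · intro i; simp [evh]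
    · simp [evh]
  exact congrArg (fun h => h P) this

theorem evh_C (z : ι → T) (θ θ' : T) (c : MvPolynomial ι ℤ) : evh z θ (C c) = evh z θ' (C c) := by
  simp [evh]

theorem evh_congr (g : T) (z z' : ι → T) (θ θ' : T) (hz : ∀ i, g ∣ z i - z' i) (hθ : g ∣ θ - θ')
    (P : (MvPolynomial ι ℤ)[X]) : g ∣ evh z θ P - evh z' θ' P := by
  rw [← Ideal.mem_span_singleton, ← Ideal.Quotient.eq, evh_nat, evh_nat]
  have h1 : (fun i => Ideal.Quotient.mk (Ideal.span {g}) (z i)) =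
      fun i => Ideal.Quotient.mk (Ideal.span {g}) (z' i) := by
    funext i
    rw [Ideal.Quotient.eq, Ideal.mem_span_singleton]; exact hz i
  have h2 : Ideal.Quotient.mk (Ideal.span {g}) θ = Ideal.Quotient.mk (Ideal.span {g}) θ' := by
    rw [Ideal.Quotient.eq, Ideal.mem_span_singleton]; exact hθ
  rw [h1, h2]

theorem dist_approx {A : Type*} [CommRing A] {I : Ideal A} [IsAdicComplete I A] {g : A[X]}
    (hg : g.IsDistinguishedAt I) (y : PowerSeries A) : ∃ p : A[X], (g : PowerSeries A) ∣ y - p := by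
  obtain ⟨q, hq⟩ := hg.algEquivQuotient.surjective (Ideal.Quotient.mk _ y)
  obtain ⟨p, rfl⟩ := Ideal.Quotient.mk_surjective q
  refine ⟨p, ?_⟩
  rw [← Ideal.mem_span_singleton, ← Ideal.Quotient.eq, ← hq]
  simp

theorem dist_dvd {A : Type*} [CommRing A] {I : Ideal A} [IsAdicComplete I A] {g : A[X]}
    (hg : g.IsDistinguishedAt I) (p : A[X]) (h : (g : PowerSeries A) ∣ p) : g ∣ p := by
  have : hg.algEquivQuotient (Ideal.Quotient.mk _ p) = 0 := by
    rw [← Ideal.mem_span_singleton, ← Ideal.Quotient.eq_zero_iff_mem] at h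
    simpa using h
  rw [map_eq_zero_iff _ hg.algEquivQuotient.injective, Ideal.Quotient.eq_zero_iff_mem,
    Ideal.mem_span_singleton] at this
  exact this

theorem lemW {A : Type*} [CommRing A] [IsLocalRing A] [IsAdicComplete (IsLocalRing.maximalIdeal A) A]
    {σ : Type*} (z : ι → PowerSeries A) (θ : PowerSeries A) (y : σ → PowerSeries A)
    (f : (MvPolynomial ι ℤ)[X]) (c : MvPolynomial ι ℤ) (P : σ → (MvPolynomial ι ℤ)[X])
    (hf : evh z θ f = 0) (hP : ∀ s, evh z θ (C c) * y s = evh z θ (P s))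
    (hD : (evh z θ (C c * derivative f)).map (IsLocalRing.residue A) ≠ 0) :
    ∃ (a : A[X]) (z' : ι → A[X]) (θ' : A[X]) (y' : σ → A[X]) (qf b : A[X]) (q : σ → A[X]),
      a.Monic ∧ evh z' θ' f = a ^ 2 * X ^ 2 * qf ∧ evh z' θ' (C c * derivative f) = a * b ∧
      IsUnit (b.coeff 0) ∧
      (∀ s, evh z' θ' (C c) * y' s - evh z' θ' (P s) = a ^ 2 * X ^ 2 * q s) ∧
      (∀ s (p : A[X]), (p : PowerSeries A) = y s → y' s = p) := by
  obtain ⟨a, h, H⟩ := PowerSeries.exists_isWeierstrassFactorization hD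
  have hX : (X : A[X]).IsDistinguishedAt (IsLocalRing.maximalIdeal A) :=
    ⟨⟨fun {n} hn => by
      have : n = 0 := by have := natDegree_X_le (R := A); omega
      simp [this]⟩, monic_X⟩
  have ha := H.isDistinguishedAt
  have hg : (a ^ 2 * X ^ 2).IsDistinguishedAt (IsLocalRing.maximalIdeal A) := by
    rw [pow_two, pow_two]; exact (ha.mul ha).mul (hX.mul hX)
  set g := a ^ 2 * X ^ 2 with hgdef
  choose z' hz' using fun i => dist_approx hg (z i)
  obtain ⟨θ', hθ'⟩ := dist_approx hg θ
  have hy : ∀ s, ∃ p : A[X], (g : PowerSeries A) ∣ y s - p ∧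
      ∀ p' : A[X], (p' : PowerSeries A) = y s → p = p' := by
    intro s
    by_cases hs : ∃ p' : A[X], (p' : PowerSeries A) = y s
    · obtain ⟨p, hp⟩ := hs
      refine ⟨p, by simp [hp], fun p' hp' => ?_⟩
      exact Polynomial.coe_injective _ (hp.trans hp'.symm)
    · obtain ⟨p, hp⟩ := dist_approx hg (y s)
      exact ⟨p, hp, fun p' hp' => absurd ⟨p', hp'⟩ hs⟩
  choose y' hy' hy'' using hy
  -- congruences
  have cong : ∀ Q, (g : PowerSeries A) ∣ evh z θ Q - (evh z' θ' Q : A[X]) := by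
    intro Q
    have e : ((evh z' θ' Q : A[X]) : PowerSeries A) =
        evh (fun i => (z' i : PowerSeries A)) (θ' : PowerSeries A) Q :=
      evh_nat (Polynomial.coeToPowerSeries.ringHom (R := A)) z' θ' Q
    rw [e]
    exact evh_congr _ _ _ _ _ hz' hθ' Q
  have c1 : g ∣ evh z' θ' f := by
    refine dist_dvd hg _ ?_
    have := cong f
    rw [hf, zero_sub, dvd_neg] at this
    exact this
  obtain ⟨qf, hqf⟩ := c1
  have c2 : ∀ s, g ∣ evh z' θ' (C c) * y' s - evh z' θ' (P s) := by
    intro s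
    refine dist_dvd hg _ ?_
    push_cast
    obtain ⟨u1, h1⟩ := cong (C c)
    obtain ⟨u2, h2⟩ := cong (P s)
    obtain ⟨u3, h3⟩ := hy' s
    have h4 := hP s
    rw [sub_eq_iff_eq_add] at h1 h2 h3
    rw [h1, h2, h3] at h4
    refine ⟨u2 - u1 * (g * u3 + y' s) - (evh z' θ' (C c) : A[X]) * u3, ?_⟩
    linear_combination h4
  choose q hq using c2
  have c3 := cong (C c * derivative f)
  obtain ⟨u, hu⟩ := c3
  have hHeq := H.eq_mul
  have c4 : ((evh z' θ' (C c * derivative f) : A[X]) : PowerSeries A) =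
      (a : PowerSeries A) * (h - (a : PowerSeries A) * PowerSeries.X ^ 2 * u) := by
    have : (g : PowerSeries A) = (a : PowerSeries A) ^ 2 * PowerSeries.X ^ 2 := by
      rw [hgdef]; push_cast; rfl
    rw [hHeq, this] at hu
    linear_combination -hu
  obtain ⟨b, hb⟩ := dist_dvd ha _ ⟨_, c4⟩
  refine ⟨a, z', θ', y', qf, b, q, ha.monic, hqf, hb, ?_, hq, hy''⟩
  have hbu : (b : PowerSeries A) = h - (a : PowerSeries A) * PowerSeries.X ^ 2 * u := by
    have h5 : (a : PowerSeries A) * (b : PowerSeries A) = (a : PowerSeries A) * (h - (a : PowerSeries A) * PowerSeries.X ^ 2 * u) := by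
      rw [← c4, hb]; push_cast; rfl
    have h6 := ha.isWeierstrassDivisorAt'.eq_zero_of_mul_eq (q := (b : PowerSeries A) - (h - (a : PowerSeries A) * PowerSeries.X ^ 2 * u)) (r := 0)
      (by simp) (by rw [mul_sub, h5]; simp)
    exact sub_eq_zero.mp h6.1
  have h7 : b.coeff 0 = PowerSeries.constantCoeff h := by
    rw [← Polynomial.coeff_coe, hbu, PowerSeries.coeff_zero_eq_constantCoeff]
    simp
  rw [h7]
  exact H.isUnit.map _

/-- Hensel for `1 + v + e * v^2 * h(v)` -/
theorem hensel_aux {B : Type*} [CommRing B] (T : B) [IsAdicComplete (Ideal.span {T}) B]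
    (e : B) (he : T ∣ e) (h : B[X]) : ∃ v : B, 1 + v + e * v ^ 2 * h.eval v = 0 := by
  rcases subsingleton_or_nontrivial B with hB | hB
  · exact ⟨0, Subsingleton.elim _ _⟩
  have hH : HenselianRing B (Ideal.span {T}) := inferInstance
  set N := h.natDegree + 2 with hN
  -- reversed polynomial
  let G : B[X] := X ^ N + X ^ (N-1) + C e * reflect h.natDegree h
  have hrd : (reflect h.natDegree h).natDegree ≤ h.natDegree := by
    refine (Polynomial.natDegree_reflect_le (N := h.natDegree) (p := h)).trans (by simp)
  have hdeg : (X ^ (N-1) + C e * reflect h.natDegree h : B[X]).degree < N := by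
    refine lt_of_le_of_lt (degree_add_le _ _) (max_lt ?_ ?_)
    · rw [degree_X_pow]; exact_mod_cast (by omega : N - 1 < N)
    · refine lt_of_le_of_lt degree_le_natDegree ?_
      have := natDegree_C_mul_le e (reflect h.natDegree h)
      exact_mod_cast (by omega : _ < N)
  have hG : G.Monic := by
    simp only [G, add_assoc]
    exact monic_X_pow_add (n := N) hdeg
  have heI : e ∈ Ideal.span {T} := Ideal.mem_span_singleton.mpr he
  have h1 : G.eval (-1) ∈ Ideal.span {T} := by
    have : G.eval (-1) = e * (reflect h.natDegree h).eval (-1) := by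
      simp only [G, eval_add, eval_pow, eval_X, eval_mul, eval_C, hN]
      rw [show h.natDegree + 2 - 1 = h.natDegree + 1 from rfl]
      ring
    rw [this]; exact Ideal.mul_mem_right _ _ heI
  have h2 : IsUnit (Ideal.Quotient.mk (Ideal.span {T}) (G.derivative.eval (-1))) := by
    have : Ideal.Quotient.mk (Ideal.span {T}) (G.derivative.eval (-1)) = (-1) ^ (h.natDegree + 1) := by
      have e1 : G.derivative.eval (-1) = (-1) ^ (h.natDegree + 1)
          + e * (derivative (reflect h.natDegree h)).eval (-1) := by
        simp only [G, derivative_add, derivative_X_pow, derivative_C_mul, eval_add, eval_mul, eval_C,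
          eval_pow, eval_X, hN]
        rw [show h.natDegree + 2 - 1 = h.natDegree + 1 from rfl,
          show h.natDegree + 1 - 1 = h.natDegree from rfl]
        push_cast
        ring
      rw [e1, map_add, map_mul, Ideal.Quotient.eq_zero_iff_mem.mpr heI]
      simp
    rw [this]
    exact (isUnit_one.neg).pow _
  obtain ⟨u, hu, hu'⟩ := hH.is_henselian G hG (-1) h1 h2
  -- `u` is a unit
  have huu : IsUnit u := by
    have hj := hH.jac
    have h3 : IsUnit (1 + (u - (-1)) * (-1)) := by
      have := Ideal.mem_jacobson_bot.mp (hj hu') (-1)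
      rwa [add_comm] at this
    have h4 : (1 + (u - (-1)) * (-1)) = -u := by ring
    rw [h4] at h3
    exact (IsUnit.neg_iff u).mp h3
  obtain ⟨w, rfl⟩ := huu
  refine ⟨((w⁻¹ : Bˣ) : B), ?_⟩
  have hr : (reflect h.natDegree h).eval (w : B) = (w : B) ^ h.natDegree * h.eval ((w⁻¹ : Bˣ) : B) := by
    have := Polynomial.eval₂_reverse_mul_pow (RingHom.id B) ((w⁻¹ : Bˣ) : B) h
    have hi : ⅟((w⁻¹ : Bˣ) : B) = (w : B) := by simp
    rw [hi] at this
    have hw : ((w⁻¹ : Bˣ) : B) * (w : B) = 1 := w.inv_mul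
    have h9 : (w : B) ^ h.natDegree * h.eval ((w⁻¹ : Bˣ) : B) = (reflect h.natDegree h).eval (w : B) *
        (((w⁻¹ : Bˣ) : B) * (w : B)) ^ h.natDegree := by
      have e3 : h.eval ((w⁻¹ : Bˣ) : B) = eval₂ (RingHom.id B) ((w⁻¹ : Bˣ) : B) h := rfl
      rw [e3, ← this, mul_pow]
      change _ = eval₂ (RingHom.id B) (w : B) h.reverse * _
      ring
    rw [h9, hw, one_pow, mul_one]
  have hu2 : (w : B) ^ N + (w : B) ^ (N - 1) + e * ((w : B) ^ h.natDegree * h.eval ((w⁻¹ : Bˣ) : B)) = 0 := by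
    have := hu
    simp only [G, IsRoot.def, eval_add, eval_pow, eval_X, eval_mul, eval_C] at this
    rw [hr] at this; exact this
  have hu3 : (w : B) ^ N * (1 + ((w⁻¹ : Bˣ) : B) + e * ((w⁻¹ : Bˣ) : B) ^ 2 * h.eval ((w⁻¹ : Bˣ) : B)) = 0 := by
    rw [← hu2, hN, show h.natDegree + 2 - 1 = h.natDegree + 1 from rfl]
    have hw : (w : B) * ((w⁻¹ : Bˣ) : B) = 1 := w.mul_inv
    have e1 : (w:B) ^ (h.natDegree + 2) * ((w⁻¹ : Bˣ) : B) = (w : B) ^ (h.natDegree + 1) := by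
      rw [pow_succ _ (h.natDegree + 1), mul_assoc, hw, mul_one]
    have e2 : (w:B) ^ (h.natDegree + 2) * ((w⁻¹ : Bˣ) : B) ^ 2 = (w : B) ^ h.natDegree := by
      rw [pow_add, mul_assoc, ← mul_pow, hw, one_pow, mul_one]
    linear_combination e1 + e * h.eval ((w⁻¹ : Bˣ) : B) * e2
  exact (w.isUnit.pow N).mul_right_eq_zero.mp hu3

theorem lemN {B : Type*} [CommRing B] [IsDomain B] (T : B) [IsAdicComplete (Ideal.span {T}) B]
    {σ : Type*} (z : ι → B) (θ : B) (y : σ → B)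
    (f : (MvPolynomial ι ℤ)[X]) (c : MvPolynomial ι ℤ) (P : σ → (MvPolynomial ι ℤ)[X])
    (a b qf : B) (q : σ → B) (ha : a ≠ 0) (hb : IsUnit b)
    (h1 : evh z θ f = a ^ 2 * T ^ 2 * qf) (h2 : evh z θ (C c * derivative f) = a * b)
    (h3 : ∀ s, evh z θ (C c) * y s - evh z θ (P s) = a ^ 2 * T ^ 2 * q s) :
    ∃ θ', evh z θ' f = 0 ∧ evh z θ' (C c) ≠ 0 ∧
      ∀ s, ∃ r, evh z θ' (P s) = evh z θ' (C c) * (y s + T ^ 2 * r) := by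
  obtain ⟨b', hb'⟩ := hb.exists_right_inv
  set F := f.map (MvPolynomial.eval₂Hom (Int.castRingHom B) z) with hF
  have eF : ∀ t, evh z t f = F.eval t := by intro t; simp [evh, hF, eval₂_eq_eval_map]
  have eF' : ∀ t, evh z t (derivative f) = F.derivative.eval t := by
    intro t; simp [evh, hF, eval₂_eq_eval_map, derivative_map]
  set δ := F.derivative.eval θ with hδ
  set c' := evh z θ (C c) with hc'
  rw [map_mul, eF', ← hc'] at h2
  have hac : a = c' * δ * b' := by rw [h2, mul_assoc, hb', mul_one]
  -- Taylor
  have key : ∃ h : B[X], ∀ w, F.eval (θ + δ * w) = F.eval θ + δ * (δ * w) + (δ * w) ^ 2 * h.eval w := by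
    have : (X : B[X]) ^ 2 ∣ taylor θ F - C (F.eval θ) - C δ * X := by
      rw [X_pow_dvd_iff]
      intro n hn
      interval_cases n <;> simp [taylor_coeff_zero, taylor_coeff_one, hδ]
    obtain ⟨g, hg⟩ := this
    refine ⟨g.comp (C δ * X), fun w => ?_⟩
    have h4 := congrArg (eval (δ * w)) hg
    simp only [eval_sub, taylor_eval, eval_C, eval_mul, eval_X, eval_pow] at h4
    rw [eval_comp, eval_mul, eval_C, eval_X, add_comm θ]
    linear_combination h4
  obtain ⟨h, hh⟩ := key
  set e := c' ^ 2 * b' ^ 2 * T ^ 2 * qf with he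
  have hTe : T ∣ e := ⟨c' ^ 2 * b' ^ 2 * T * qf, by rw [he]; ring⟩
  obtain ⟨v, hv⟩ := hensel_aux T e hTe (h.comp (C e * X))
  rw [eval_comp, eval_mul, eval_C, eval_X] at hv
  refine ⟨θ + δ * (e * v), ?_, ?_, ?_⟩
  · rw [eF, hh, ← eF, h1, hac]
    linear_combination (δ ^ 2 * e) * hv + (0:B) * he
  · rw [evh_C z _ θ]
    intro h0
    apply ha; rw [hac, hc', h0]; ring
  · intro s
    have hd : c' * T ^ 2 ∣ evh z (θ + δ * (e * v)) (P s) - evh z θ (P s) := by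
      refine evh_congr _ _ _ _ _ (by simp) ?_ _
      exact ⟨δ * (c' * b' ^ 2 * qf) * v, by rw [he]; ring⟩
    obtain ⟨r, hr⟩ := hd
    rw [evh_C z _ θ, ← hc']
    refine ⟨r - c' * δ ^ 2 * b' ^ 2 * q s, ?_⟩
    have h5 := h3 s
    rw [hac] at h5
    linear_combination hr - h5
end Ev

end PartB1

section PartB2
section LemH
open Polynomial
variable {ι : Type*} {T : Type*} [CommRing T] {T' : Type*} [CommRing T']

theorem homog_aux {σ : Type*} (c : MvPolynomial ι ℤ) (P : σ → (MvPolynomial ι ℤ)[X])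
    (z : ι → T) (θ : T) (y : σ → T) (z' : ι → T') (θ' : T') (y' : σ → T')
    (h : ∀ s, evh z θ (C c) * y s = evh z θ (P s))
    (h' : ∀ s, evh z' θ' (C c) * y' s = evh z' θ' (P s)) (Q : MvPolynomial σ ℤ) :
    ∃ (N : ℕ) (G : (MvPolynomial ι ℤ)[X]),
      evh z θ (C c) ^ N * MvPolynomial.aeval y Q = evh z θ G ∧
      evh z' θ' (C c) ^ N * MvPolynomial.aeval y' Q = evh z' θ' G := by
  induction Q using MvPolynomial.induction_on with
  | C n => exact ⟨0, (n : (MvPolynomial ι ℤ)[X]), by simp, by simp⟩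
  | add p q hp hq =>
    obtain ⟨N, G, h1, h2⟩ := hp
    obtain ⟨N', G', h3, h4⟩ := hq
    refine ⟨N + N', (C c) ^ N' * G + (C c) ^ N * G', ?_, ?_⟩
    · rw [map_add, map_add, map_mul, map_mul, map_pow, map_pow, ← h1, ← h3]; ring
    · rw [map_add, map_add, map_mul, map_mul, map_pow, map_pow, ← h2, ← h4]; ring
  | mul_X p i hp =>
    obtain ⟨N, G, h1, h2⟩ := hp
    refine ⟨N + 1, G * P i, ?_, ?_⟩
    · rw [map_mul, map_mul, MvPolynomial.aeval_X, ← h1, ← h]; ring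
    · rw [map_mul, map_mul, MvPolynomial.aeval_X, ← h2, ← h']; ring

theorem lemH [IsDomain T'] {σ : Type*} (f : (MvPolynomial ι ℤ)[X])
    (c : MvPolynomial ι ℤ) (P : σ → (MvPolynomial ι ℤ)[X])
    (z : ι → T) (θ : T) (y : σ → T) (z' : ι → T') (θ' : T') (y' : σ → T')
    (h : ∀ s, evh z θ (C c) * y s = evh z θ (P s))
    (hQ : ∀ Q, evh z θ Q = 0 → ∃ N : ℕ, f ∣ (C c) ^ N * Q)
    (hf' : evh z' θ' f = 0) (hc' : evh z' θ' (C c) ≠ 0)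
    (h' : ∀ s, evh z' θ' (C c) * y' s = evh z' θ' (P s)) :
    ∃ ψ : Algebra.adjoin ℤ (Set.range y) →+* T',
      ∀ i, ψ ⟨y i, Algebra.subset_adjoin ⟨i, rfl⟩⟩ = y' i := by
  have key : ∀ Q : MvPolynomial σ ℤ, MvPolynomial.aeval y Q = 0 → MvPolynomial.aeval y' Q = 0 := by
    intro Q h0
    obtain ⟨N, G, h1, h2⟩ := homog_aux c P z θ y z' θ' y' h h' Q
    rw [h0, mul_zero] at h1
    obtain ⟨M, q, hq⟩ := hQ G h1.symm
    have h3 := congrArg (evh z' θ') hq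
    rw [map_mul, map_mul, hf', zero_mul, map_pow, ← h2] at h3
    simpa [hc'] using h3
  have key2 : ∀ Q Q' : MvPolynomial σ ℤ, MvPolynomial.aeval y Q = MvPolynomial.aeval y Q' →
      MvPolynomial.aeval y' Q = MvPolynomial.aeval y' Q' := by
    intro Q Q' h
    rw [← sub_eq_zero, ← map_sub] at h ⊢
    exact key _ h
  have hs : ∀ a : Algebra.adjoin ℤ (Set.range y), ∃ Q : MvPolynomial σ ℤ, MvPolynomial.aeval y Q = (a : T) := by
    rintro ⟨a, ha⟩
    rw [Algebra.adjoin_range_eq_range_aeval] at ha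
    exact ha
  choose g hg using hs
  refine ⟨⟨⟨⟨fun a => MvPolynomial.aeval y' (g a), ?_⟩, ?_⟩, ?_, ?_⟩, ?_⟩
  · rw [← map_one (MvPolynomial.aeval (R := ℤ) y')]; exact key2 _ _ (by rw [hg]; simp)
  · intro a b
    rw [← map_mul]; exact key2 _ _ (by rw [map_mul, hg, hg, hg]; simp)
  · change MvPolynomial.aeval y' (g 0) = 0
    rw [← map_zero (MvPolynomial.aeval (R := ℤ) y')]; exact key2 _ _ (by rw [hg]; simp)
  · intro a b
    change MvPolynomial.aeval y' (g (a + b)) = MvPolynomial.aeval y' (g a) + MvPolynomial.aeval y' (g b)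
    rw [← map_add]; exact key2 _ _ (by rw [map_add, hg, hg, hg]; simp)
  · intro i
    change MvPolynomial.aeval y' (g _) = _
    rw [← MvPolynomial.aeval_X (R := ℤ) y' i]; exact key2 _ _ (by rw [hg]; simp)

/-- pseudo-division -/
theorem pseudo_div {A : Type*} [CommRing A] [IsDomain A] (f : A[X]) (hf : f ≠ 0) (Q : A[X]) :
    ∃ (N : ℕ) (q r : A[X]), C (f.leadingCoeff) ^ N * Q = f * q + r ∧ r.degree < f.degree := by
  induction hn : Q.degree using WellFoundedLT.induction generalizing Q with
  | _ n ih =>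
    by_cases hlt : Q.degree < f.degree
    · exact ⟨0, 0, Q, by simp, hlt⟩
    push Not at hlt
    have hQ0 : Q ≠ 0 := by
      rintro rfl; simp at hlt; exact hf hlt
    set Q' := C f.leadingCoeff * Q - f * (C Q.leadingCoeff * X ^ (Q.natDegree - f.natDegree)) with hQ'
    have hlc : f.leadingCoeff ≠ 0 := leadingCoeff_ne_zero.mpr hf
    have hlq : Q.leadingCoeff ≠ 0 := leadingCoeff_ne_zero.mpr hQ0
    have hnd : f.natDegree ≤ Q.natDegree := natDegree_le_natDegree hlt
    have hd1 : (C f.leadingCoeff * Q).degree = Q.degree := by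
      rw [degree_mul, degree_C hlc, zero_add]
    have hd2 : (f * (C Q.leadingCoeff * X ^ (Q.natDegree - f.natDegree))).degree = Q.degree := by
      rw [degree_mul, degree_mul, degree_C hlq, zero_add, degree_X_pow, degree_eq_natDegree hf,
        degree_eq_natDegree hQ0]
      exact_mod_cast (by omega)
    have hd : Q'.degree < Q.degree := by
      rw [← hd1]
      refine degree_sub_lt_left (hd1.trans hd2.symm) (mul_ne_zero (C_ne_zero.mpr hlc) hQ0) ?_
      rw [leadingCoeff_mul, leadingCoeff_C, leadingCoeff_mul, leadingCoeff_mul, leadingCoeff_C,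
        leadingCoeff_X_pow, mul_one]
    obtain ⟨N, q, r, h1, h2⟩ := ih _ (hn ▸ hd) Q' rfl
    refine ⟨N + 1, q + C f.leadingCoeff ^ N * (C Q.leadingCoeff * X ^ (Q.natDegree - f.natDegree)), r, ?_, h2⟩
    rw [hQ'] at h1
    linear_combination h1
end LemH

end PartB2

section PartB3
section LemP
open Polynomial IntermediateField
attribute [local instance] FractionRing.liftAlgebra

theorem lemP0 {A Ω : Type*} [CommRing A] [IsDomain A] [CharZero A] [CommRing Ω] [IsDomain Ω]
    [Algebra A Ω] [FaithfulSMul A Ω] [Algebra.IsAlgebraic A Ω] {σ : Type*} [Finite σ] (s : σ → Ω)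
    (hs : Algebra.adjoin A (Set.range s) = ⊤) :
    ∃ (θ : Ω) (f : A[X]) (c : A) (P : σ → A[X]), aeval θ f = 0 ∧ aeval θ (C c * derivative f) ≠ 0 ∧
      (∀ i, aeval θ (C c) * s i = aeval θ (P i)) ∧
      ∀ Q : A[X], aeval θ Q = 0 → ∃ N : ℕ, f ∣ (C c) ^ N * Q := by
  classical
  have := Fintype.ofFinite σ
  let k := FractionRing A
  let E := FractionRing Ω
  have hinj : Function.Injective (algebraMap Ω E) := IsFractionRing.injective _ _
  have hinjA : Function.Injective (algebraMap A k) := IsFractionRing.injective _ _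
  -- finite dimensional
  have htop : IntermediateField.adjoin k (Set.range fun i => algebraMap Ω E (s i)) = ⊤ := by
    have h1 : ∀ w : Ω, algebraMap Ω E w ∈ IntermediateField.adjoin k (Set.range fun i => algebraMap Ω E (s i)) := by
      intro w
      have hw : w ∈ Algebra.adjoin A (Set.range s) := hs ▸ Algebra.mem_top
      induction hw using Algebra.adjoin_induction with
      | mem x hx => obtain ⟨i, rfl⟩ := hx; exact subset_adjoin _ _ ⟨i, rfl⟩
      | algebraMap r =>
        rw [← IsScalarTower.algebraMap_apply, IsScalarTower.algebraMap_apply A k E]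
        exact IntermediateField.algebraMap_mem _ _
      | add x y _ _ h1 h2 => rw [map_add]; exact add_mem h1 h2
      | mul x y _ _ h1 h2 => rw [map_mul]; exact mul_mem h1 h2
    rw [eq_top_iff]
    intro e _
    obtain ⟨a, b, hb, rfl⟩ := IsFractionRing.div_surjective (A := Ω) e
    exact div_mem (h1 a) (h1 b)
  have hfd : FiniteDimensional k E := by
    have : FiniteDimensional k (IntermediateField.adjoin k (Set.range fun i => algebraMap Ω E (s i))) :=
      finiteDimensional_adjoin fun x _ => (Algebra.IsAlgebraic.isAlgebraic x).isIntegral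
    rw [htop] at this
    exact Module.Finite.equiv (IntermediateField.topEquiv (F := k) (E := E)).toLinearEquiv
  obtain ⟨θ0, hθ0⟩ := Field.exists_primitive_element k E
  obtain ⟨a, b, hb, hab⟩ := IsFractionRing.div_surjective (A := Ω) θ0
  obtain ⟨e, he0, b', hb'⟩ := (Algebra.IsAlgebraic.isAlgebraic (R := A) b).exists_nonzero_dvd hb
  have hb0 : algebraMap Ω E b ≠ 0 := by
    rw [Ne, map_eq_zero_iff _ hinj]; exact nonZeroDivisors.ne_zero hb
  let θ : Ω := a * b'
  have hθ : algebraMap Ω E θ = algebraMap k E (algebraMap A k e) * θ0 := by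
    rw [← IsScalarTower.algebraMap_apply, IsScalarTower.algebraMap_apply A Ω E, hb', ← hab, map_mul, map_mul,
      mul_comm (algebraMap Ω E b), mul_assoc, mul_div_cancel₀ _ hb0, mul_comm]
  have hek : algebraMap A k e ≠ 0 := by rwa [Ne, map_eq_zero_iff _ hinjA]
  have hθtop : k⟮algebraMap Ω E θ⟯ = ⊤ := by
    rw [eq_top_iff, ← hθ0, adjoin_simple_le_iff]
    have : θ0 = (algebraMap k E (algebraMap A k e))⁻¹ * algebraMap Ω E θ := by
      rw [hθ, inv_mul_cancel_left₀]
      rwa [Ne, map_eq_zero]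
    rw [this]
    exact mul_mem (inv_mem (IntermediateField.algebraMap_mem _ _)) (mem_adjoin_simple_self _ _)
  set θE := algebraMap Ω E θ with hθE
  have hev : ∀ Q : A[X], algebraMap Ω E (aeval θ Q) = aeval θE (Q.map (algebraMap A k)) := by
    intro Q
    rw [hθE, aeval_map_algebraMap, aeval_algebraMap_apply]
  have hintegral : IsIntegral k θE := (Algebra.IsAlgebraic.isAlgebraic θE).isIntegral
  -- f
  obtain ⟨⟨g0, hg0⟩, hfm⟩ := IsLocalization.integerNormalization_map_to_map (nonZeroDivisors A) (minpoly k θE)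
  set f := IsLocalization.integerNormalization (nonZeroDivisors A) (minpoly k θE) with hf
  have hg0' : g0 ≠ 0 := nonZeroDivisors.ne_zero hg0
  have hfm' : f.map (algebraMap A k) = C (algebraMap A k g0) * minpoly k θE := by
    rw [hfm, ← smul_eq_C_mul, algebraMap_smul]
  have hf0 : f ≠ 0 := by
    intro h
    rw [h, Polynomial.map_zero, eq_comm, mul_eq_zero, C_eq_zero, map_eq_zero_iff _ hinjA] at hfm'
    exact hfm'.elim hg0' (minpoly.ne_zero hintegral)
  have hdeg : f.degree = (minpoly k θE).degree := by
    rw [← degree_map_eq_of_injective hinjA, hfm', degree_mul, degree_C, zero_add]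
    rwa [Ne, map_eq_zero_iff _ hinjA]
  have hfθ : aeval θ f = 0 := by
    apply hinj
    rw [hev, hfm', map_mul, minpoly.aeval, mul_zero, map_zero]
  have hsmall : ∀ r : A[X], r.degree < f.degree → aeval θ r = 0 → r = 0 := by
    intro r hr h0
    by_contra hne
    have h1 : aeval θE (r.map (algebraMap A k)) = 0 := by rw [← hev, h0, map_zero]
    have h2 := minpoly.degree_le_of_ne_zero k θE (p := r.map (algebraMap A k))
      ((Polynomial.map_ne_zero_iff hinjA).mpr hne) h1
    rw [degree_map_eq_of_injective hinjA, ← hdeg] at h2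
    exact absurd hr (not_lt.mpr h2)
  -- each s
  have hP : ∀ i, ∃ (e : A) (P : A[X]), e ≠ 0 ∧ algebraMap A Ω e * s i = aeval θ P := by
    intro i
    have h1 : algebraMap Ω E (s i) ∈ k⟮θE⟯.toSubalgebra := by rw [hθtop]; trivial
    rw [adjoin_simple_toSubalgebra_of_isAlgebraic hintegral.isAlgebraic, Algebra.adjoin_singleton_eq_range_aeval] at h1
    obtain ⟨g, hg⟩ := h1
    obtain ⟨⟨b, hb⟩, hbm⟩ := IsLocalization.integerNormalization_map_to_map (nonZeroDivisors A) g
    refine ⟨b, IsLocalization.integerNormalization (nonZeroDivisors A) g, nonZeroDivisors.ne_zero hb, ?_⟩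
    apply hinj
    rw [hev, hbm, map_mul, ← hg, ← IsScalarTower.algebraMap_apply, ← Algebra.smul_def]
    change _ = aeval θE (b • g)
    rw [← algebraMap_smul k b g, map_smul, algebraMap_smul]
    rfl
  choose e' P' he' hP' using hP
  let c : A := f.leadingCoeff * ∏ i, e' i
  have hc0 : c ≠ 0 := mul_ne_zero (leadingCoeff_ne_zero.mpr hf0) (Finset.prod_ne_zero_iff.mpr fun i _ => he' i)
  have hdvd : ∀ i, ∃ g, c = g * e' i := by
    intro i
    obtain ⟨g, hg⟩ := Finset.dvd_prod_of_mem e' (Finset.mem_univ i)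
    exact ⟨f.leadingCoeff * g, by simp only [c]; rw [hg]; ring⟩
  choose g hg using hdvd
  refine ⟨θ, f, c, fun i => C (g i) * P' i, hfθ, ?_, ?_, ?_⟩
  · rw [map_mul, aeval_C]
    refine mul_ne_zero ((map_ne_zero_iff _ (FaithfulSMul.algebraMap_injective A Ω)).mpr hc0) ?_
    intro h0
    have hd : (derivative f).degree < f.degree := degree_derivative_lt hf0
    have h1 := hsmall _ hd h0
    have h2 := natDegree_eq_zero_of_derivative_eq_zero h1
    have h3 := natDegree_eq_of_degree_eq hdeg
    have h4 := minpoly.natDegree_pos hintegral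
    omega
  · intro i
    change _ = aeval θ (C (g i) * P' i)
    rw [map_mul (aeval θ) (C (g i)), aeval_C, aeval_C, ← hP', ← mul_assoc, ← map_mul, ← hg]
  · intro Q hQ
    obtain ⟨N, q, r, h1, h2⟩ := pseudo_div f hf0 Q
    have h3 : aeval θ r = 0 := by
      have := congrArg (aeval θ) h1
      rw [map_mul, hQ, mul_zero, map_add, map_mul, hfθ, zero_mul, zero_add] at this
      exact this.symm
    have h4 := hsmall r h2 h3
    refine ⟨N, C (∏ i, e' i) ^ N * q, ?_⟩
    rw [h4, add_zero] at h1
    have : (C c : A[X]) = C f.leadingCoeff * C (∏ i, e' i) := by rw [← C_mul]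
    rw [this, mul_pow]
    linear_combination C (∏ i, e' i) ^ N * h1

theorem lemP1 {Ω : Type*} [CommRing Ω] [IsDomain Ω] [CharZero Ω] {σ : Type*} [Finite σ] (s : σ → Ω)
    (hs : Algebra.adjoin ℤ (Set.range s) = ⊤) :
    ∃ (ι : Set Ω) (_ : Finite ι) (z : ι → Ω) (θ : Ω) (f : (MvPolynomial ι ℤ)[X]) (c : MvPolynomial ι ℤ)
      (P : σ → (MvPolynomial ι ℤ)[X]), evh z θ f = 0 ∧ evh z θ (C c * derivative f) ≠ 0 ∧
      (∀ i, evh z θ (C c) * s i = evh z θ (P i)) ∧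
      ∀ Q, evh z θ Q = 0 → ∃ N : ℕ, f ∣ (C c) ^ N * Q := by
  have : Algebra.IsAlgebraic (Algebra.adjoin ℤ (Set.range s)) Ω := by
    rw [hs]
    constructor
    intro x
    exact isAlgebraic_algebraMap (⟨x, Algebra.mem_top⟩ : (⊤ : Subalgebra ℤ Ω))
  obtain ⟨t, hts, ht⟩ := exists_isTranscendenceBasis_subset (R := ℤ) (Set.range s)
  have hfin : Finite t := (Set.finite_range s).subset hts
  let z : t → Ω := (↑)
  let _ : Algebra (MvPolynomial t ℤ) Ω := (MvPolynomial.aeval z).toAlgebra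
  have hmap : algebraMap (MvPolynomial t ℤ) Ω = (MvPolynomial.aeval (R := ℤ) z).toRingHom := rfl
  have hinj : Function.Injective (algebraMap (MvPolynomial t ℤ) Ω) := ht.1
  have hff : FaithfulSMul (MvPolynomial t ℤ) Ω := (faithfulSMul_iff_algebraMap_injective _ _).mpr hinj
  have halg : Algebra.IsAlgebraic (MvPolynomial t ℤ) Ω := by
    have := ht.isAlgebraic
    refine Algebra.IsAlgebraic.of_ringHom_of_comp_eq ht.1.aevalEquiv (RingHom.id Ω)
      ht.1.aevalEquiv.surjective Function.injective_id ?_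
    refine RingHom.ext fun x => ?_
    exact ht.1.algebraMap_aevalEquiv x
  have hs' : Algebra.adjoin (MvPolynomial t ℤ) (Set.range s) = ⊤ := by
    rw [eq_top_iff]
    intro x _
    have hx : x ∈ Algebra.adjoin ℤ (Set.range s) := hs ▸ Algebra.mem_top
    induction hx using Algebra.adjoin_induction with
    | mem x hx => exact Algebra.subset_adjoin hx
    | algebraMap r => simp
    | add x y _ _ h1 h2 => exact add_mem (h1 trivial) (h2 trivial)
    | mul x y _ _ h1 h2 => exact mul_mem (h1 trivial) (h2 trivial)
  obtain ⟨θ, f, c, P, h⟩ := lemP0 s hs'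
  have he : ∀ Q : (MvPolynomial t ℤ)[X], evh z θ Q = aeval θ Q := by
    intro Q
    rw [aeval_def, hmap]
    rfl
  refine ⟨t, hfin, z, θ, f, c, P, ?_⟩
  simp only [he]
  exact h

theorem lemP {Ω : Type u} [CommRing Ω] [IsDomain Ω] [CharZero Ω] {σ : Type*} [Finite σ] (s : σ → Ω) :
    ∃ (ι : Type u) (_ : Finite ι) (z : ι → Ω) (θ : Ω) (f : (MvPolynomial ι ℤ)[X]) (c : MvPolynomial ι ℤ)
      (P : σ → (MvPolynomial ι ℤ)[X]), evh z θ f = 0 ∧ evh z θ (C c * derivative f) ≠ 0 ∧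
      (∀ i, evh z θ (C c) * s i = evh z θ (P i)) ∧
      ∀ Q, evh z θ Q = 0 → ∃ N : ℕ, f ∣ (C c) ^ N * Q := by
  let B := Algebra.adjoin ℤ (Set.range s)
  let s' : σ → B := fun i => ⟨s i, Algebra.subset_adjoin ⟨i, rfl⟩⟩
  have hs' : Algebra.adjoin ℤ (Set.range s') = ⊤ := by
    have h2 : Set.range s' = ((↑) : B → Ω) ⁻¹' (Set.range s) := by
      ext ⟨x, hx⟩
      simp [s', Subtype.ext_iff]
    rw [h2]
    exact Algebra.adjoin_adjoin_coe_preimage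
  obtain ⟨ι, hι, z, θ, f, c, P, h1, h2, h3, h4⟩ := lemP1 s' hs'
  have he : ∀ Q, evh (fun i => (z i : Ω)) (θ : Ω) Q = (evh z θ Q : B) := fun Q =>
    (evh_nat B.val.toRingHom z θ Q).symm
  refine ⟨ι, hι, fun i => z i, θ, f, c, P, ?_⟩
  simp only [he]
  refine ⟨by rw [h1]; rfl, ?_, ?_, ?_⟩
  · intro h; exact h2 (Subtype.ext h)
  · intro i; rw [← h3]; rfl
  · intro Q hQ; exact h4 Q (Subtype.ext hQ)
end LemP

end PartB3

section PartB4
section Tau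
open MvPowerSeries

/-- set all variables but the zeroth to zero -/
noncomputable def piHom (K : Type*) [Field K] (d : ℕ) :
    MvPowerSeries (Fin (d+1)) K →+* PowerSeries K :=
  (PowerSeries.map (constantCoeff (σ := Fin d) (R := K))).comp (finSuccEquiv K d : _ →+* _)

theorem lemTau {K : Type*} [Field K] [CharZero K] {d : ℕ} (D : MvPowerSeries (Fin (d+1)) K) (hD : D ≠ 0) :
    ∃ (κ : Fin d → K) (τ : MvPowerSeries (Fin (d+1)) K →+* PowerSeries (MvPowerSeries (Fin d) K)),
      τ (X 0) = PowerSeries.X ∧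
      (∀ i : Fin d, τ (X i.succ) = PowerSeries.C (X i) + PowerSeries.C (C (κ i)) * PowerSeries.X) ∧
      PowerSeries.map (constantCoeff (σ := Fin d) (R := K)) (τ D) ≠ 0 := by
  classical
  obtain ⟨e0, he0⟩ : ∃ e, coeff e D ≠ 0 := by
    by_contra h; push Not at h; exact hD (MvPowerSeries.ext fun e => by simpa using h e)
  set m := ∑ i, e0 i with hm
  set As : Finset (Fin (d+1) →₀ ℕ) := (Finset.univ : Finset (Fin (d+1))).finsuppAntidiag m with hAs
  have hmem : ∀ e, e ∈ As ↔ ∑ i, e i = m := by intro e; simp [hAs, Finset.mem_finsuppAntidiag]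
  let p : MvPolynomial (Fin (d+1)) K := ∑ e ∈ As, MvPolynomial.monomial e (coeff e D)
  have hp : p ≠ 0 := by
    intro h
    have := congrArg (MvPolynomial.coeff e0) h
    simp only [p, MvPolynomial.coeff_sum, MvPolynomial.coeff_monomial] at this
    rw [Finset.sum_ite_eq' ] at this
    simp [hmem, ← hm] at this
    exact he0 this
  have hpe : ∀ k : Fin (d+1) → K, MvPolynomial.eval k p = ∑ e ∈ As, coeff e D * ∏ i, k i ^ e i := by
    intro k
    simp only [p, map_sum, MvPolynomial.eval_monomial]
    refine Finset.sum_congr rfl fun e _ => ?_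
    rw [Finsupp.prod_fintype _ _ (by simp)]
  obtain ⟨k, hk⟩ : ∃ k, MvPolynomial.eval k (MvPolynomial.X 0 * p) ≠ 0 := by
    by_contra h; push Not at h
    have := MvPolynomial.funext (p := MvPolynomial.X 0 * p) (q := 0) (fun x => by simpa using h x)
    rw [mul_eq_zero] at this
    exact this.elim (MvPolynomial.X_ne_zero _) hp
  rw [map_mul, MvPolynomial.eval_X] at hk
  have hk0 : k 0 ≠ 0 := left_ne_zero_of_mul hk
  have hkp := right_ne_zero_of_mul hk
  let κ : Fin (d+1) → K := fun i => (k 0)⁻¹ * k i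
  have hκ0 : κ 0 = 1 := by simp [κ, hk0]
  have hκp : MvPolynomial.eval κ p ≠ 0 := by
    have : MvPolynomial.eval κ p = (k 0)⁻¹ ^ m * MvPolynomial.eval k p := by
      rw [hpe, hpe, Finset.mul_sum]
      refine Finset.sum_congr rfl fun e he => ?_
      rw [hmem] at he
      simp only [κ, mul_pow, Finset.prod_mul_distrib]
      rw [Finset.prod_pow_eq_pow_sum, he]; ring
    rw [this]
    exact mul_ne_zero (pow_ne_zero _ (inv_ne_zero hk0)) hkp
  let a : Fin (d+1) → MvPowerSeries (Fin (d+1)) K :=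
    Fin.cons (X 0) (fun i => X i.succ + C (κ i.succ) * X 0)
  have ha : HasSubst a := hasSubst_of_constantCoeff_zero (by
    intro i
    refine Fin.cases ?_ (fun i => ?_) i <;> simp [a])
  have hpi : ∀ i, piHom K d (a i) = PowerSeries.C (κ i) * PowerSeries.X := by
    intro i
    refine Fin.cases ?_ (fun i => ?_) i
    · simp [a, piHom, hκ0]
    · simp [a, piHom]
  refine ⟨fun i => κ i.succ, (finSuccEquiv K d : _ →+* _).comp (substAlgHom ha).toRingHom, ?_, ?_, ?_⟩
  · change finSuccEquiv K d (substAlgHom ha (X 0)) = _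
    rw [substAlgHom_X]; simp [a]
  · intro i
    change finSuccEquiv K d (substAlgHom ha (X i.succ)) = _
    rw [substAlgHom_X]; simp [a]
  · have h1 : PowerSeries.map (constantCoeff (σ := Fin d) (R := K))
        (((finSuccEquiv K d : _ →+* _).comp (substAlgHom ha).toRingHom) D) = piHom K d (subst a D) := by
      simp [piHom, coe_substAlgHom]
    rw [h1]
    have hpc : ∀ (n : ℕ) (G : MvPowerSeries (Fin (d+1)) K),
        PowerSeries.coeff n (piHom K d G) = coeff (Finsupp.cons n 0) G := by
      intro n G
      simp only [piHom, RingHom.comp_apply, PowerSeries.coeff_map]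
      rw [← coeff_zero_eq_constantCoeff_apply]
      exact coeff_coeff_finSuccEquiv ..
    intro h0
    have h2 := congrArg (PowerSeries.coeff m) h0
    rw [hpc, coeff_subst ha, map_zero] at h2
    have h3 : ∀ e : Fin (d+1) →₀ ℕ, coeff e D • coeff (Finsupp.cons m 0) (e.prod fun s n => a s ^ n)
        = if e ∈ As then coeff e D * ∏ i, κ i ^ e i else 0 := by
      intro e
      rw [← hpc, map_finsuppProd, Finsupp.prod_fintype _ _ (by simp)]
      simp only [map_pow, hpi, mul_pow, Finset.prod_mul_distrib, Finset.prod_pow_eq_pow_sum]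
      have h4 : (∏ x, PowerSeries.C (κ x) ^ e x) = PowerSeries.C (∏ x, κ x ^ e x) := by
        simp [map_prod]
      rw [h4, PowerSeries.coeff_C_mul, PowerSeries.coeff_X_pow, smul_eq_mul]
      by_cases he : ∑ i, e i = m
      · rw [if_pos ((hmem e).mpr he), if_pos he.symm, mul_one]
      · rw [if_neg (fun h => he ((hmem e).mp h)), if_neg (fun h => he h.symm), mul_zero, mul_zero]
    rw [finsum_congr h3, finsum_eq_sum_of_support_subset (s := As)] at h2
    · apply hκp
      rw [hpe, ← h2]
      exact Finset.sum_congr rfl fun e he => by rw [if_pos he]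
    · intro e he
      by_contra h
      simp at h
      simp [h] at he
end Tau

end PartB4

section PartB5
section AA
open MvPowerSeries

theorem mem_span_X_of_constantCoeff {K : Type*} [Field K] (d : ℕ) :
    ∀ φ : MvPowerSeries (Fin d) K, constantCoeff φ = 0 →
      φ ∈ Ideal.span (Set.range (X : Fin d → MvPowerSeries (Fin d) K)) := by
  induction d with
  | zero =>
    intro φ h
    have : φ = 0 := by
      ext e
      rw [Subsingleton.elim e 0, coeff_zero_eq_constantCoeff_apply, h, map_zero]
    rw [this]; exact zero_mem _
  | succ d ih =>
    intro φ h
    set g := finSuccEquiv K d φ with hg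
    have h0 : constantCoeff (PowerSeries.constantCoeff g) = 0 := by
      rw [← h, ← PowerSeries.coeff_zero_eq_constantCoeff_apply,
        ← coeff_zero_eq_constantCoeff_apply, hg]
      rw [coeff_coeff_finSuccEquiv, ← coeff_zero_eq_constantCoeff_apply]
      congr 1
      simp
    have h1 := ih _ h0
    have h2 : PowerSeries.C (PowerSeries.constantCoeff g) ∈
        (Ideal.span (Set.range (X : Fin d → MvPowerSeries (Fin d) K))).map PowerSeries.C :=
      Ideal.mem_map_of_mem _ h1
    rw [Ideal.map_span, ← Set.range_comp] at h2
    have h3 : g ∈ Ideal.span (Set.range fun i => finSuccEquiv K d (X i)) := by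
      obtain ⟨q, hq⟩ := (PowerSeries.X_dvd_iff (φ := g - PowerSeries.C (PowerSeries.constantCoeff g))).mpr (by simp)
      rw [sub_eq_iff_eq_add] at hq
      rw [hq]
      refine add_mem (Ideal.mul_mem_right _ _ (Ideal.subset_span ⟨0, by simp⟩)) ?_
      refine Ideal.span_mono ?_ h2
      rintro _ ⟨i, rfl⟩
      exact ⟨i.succ, by simp⟩
    have h4 := Ideal.mem_map_of_mem (finSuccEquiv K d).symm h3
    rw [Ideal.map_span, ← Set.range_comp] at h4
    simpa [hg, Function.comp_def] using h4

theorem maximalIdeal_mvPS {K : Type*} [Field K] (d : ℕ) :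
    IsLocalRing.maximalIdeal (MvPowerSeries (Fin d) K) = Ideal.span (Set.range X) := by
  apply le_antisymm
  · intro φ h
    apply mem_span_X_of_constantCoeff
    rw [IsLocalRing.mem_maximalIdeal, mem_nonunits_iff, MvPowerSeries.isUnit_iff_constantCoeff] at h
    simpa using h
  · rw [Ideal.span_le]
    rintro _ ⟨i, rfl⟩
    rw [SetLike.mem_coe, IsLocalRing.mem_maximalIdeal, mem_nonunits_iff, MvPowerSeries.isUnit_iff_constantCoeff]
    simp

theorem isJacobsonRing_int : IsJacobsonRing ℤ := by
  rw [isJacobsonRing_iff_prime_eq]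
  intro P hP
  by_cases h : P = ⊥
  · subst h
    rw [eq_bot_iff]
    intro n hn
    rw [Ideal.mem_bot]
    by_contra h0
    have h1 := Ideal.mem_jacobson_bot.mp hn (2 * n)
    rw [Int.isUnit_iff] at h1
    have : 0 < n ^ 2 := by positivity
    rcases h1 with h1 | h1 <;> nlinarith
  · have := IsPrime.to_maximal_ideal h
    exact Ideal.jacobson_eq_self_of_isMaximal

theorem AA_zero {σ : Type u} [Finite σ] {Ω : Type u} [CommRing Ω] [Nontrivial Ω]
    (s : σ → Ω) : ∃ (p : ℕ) (_ : p.Prime) (F : Type u) (_ : Field F) (_ : CharP F p),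
      Nonempty (Algebra.adjoin ℤ (Set.range s) →+* F) := by
  let B := Algebra.adjoin ℤ (Set.range s)
  obtain ⟨M, hM⟩ := Ideal.exists_maximal B
  let F := B ⧸ M
  let _ : Field F := Ideal.Quotient.field M
  have hft : Algebra.FiniteType ℤ B :=
    (Subalgebra.fg_iff_finiteType _).mp (by
      have := Subalgebra.fg_adjoin_finset (R := ℤ) (Set.finite_range s).toFinset
      rwa [Set.Finite.coe_toFinset] at this)
  obtain ⟨p, hp⟩ := CharP.exists F
  have hp' : p.Prime ∨ p = 0 := CharP.char_is_prime_or_zero F p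
  rcases hp' with hp' | hp'
  · exact ⟨p, hp', F, inferInstance, hp, ⟨Ideal.Quotient.mk M⟩⟩
  · exfalso
    subst hp'
    have := CharP.charP_to_charZero F
    have hft' : Algebra.FiniteType ℤ F := Algebra.FiniteType.of_surjective (Ideal.Quotient.mkₐ ℤ M) Ideal.Quotient.mk_surjective
    have := isJacobsonRing_int
    have hfin : Module.Finite ℤ F := finite_of_finite_type_of_isJacobsonRing ℤ F
    have hintegral : Algebra.IsIntegral ℤ F := inferInstance
    have : IsField ℤ := isField_of_isIntegral_of_isField (Int.cast_injective (α := F)) (Field.toIsField F)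
    exact Int.not_isField this

theorem span_aux {A B : Type*} [CommRing A] [CommRing B]
    {d : ℕ} (T : B) (hT : ∀ r, IsUnit (1 + T * r)) (j : A →+* B) (X' : Fin d → A) (ψX' : Fin d → A)
    (h : Ideal.span (Set.range ψX') = Ideal.span (Set.range X'))
    (ψ : Fin (d+1) → B) (r : Fin (d+1) → B) (κ : Fin d → B) (h0 : ψ 0 = T + T ^ 2 * r 0)
    (hs : ∀ i : Fin d, ψ i.succ = j (ψX' i) + κ i * T + T ^ 2 * r i.succ)
    (e : Fin (d+1) → B) (he0 : e 0 = T) (hes : ∀ i : Fin d, e i.succ = j (X' i)) :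
    Ideal.span (Set.range ψ) = Ideal.span (Set.range e) := by
  have h' := congrArg (Ideal.map j) h
  rw [Ideal.map_span, Ideal.map_span, ← Set.range_comp, ← Set.range_comp] at h'
  apply le_antisymm
  · have hTm : T ∈ Ideal.span (Set.range e) := Ideal.subset_span ⟨0, he0⟩
    have hle : Ideal.span (Set.range (j ∘ ψX')) ≤ Ideal.span (Set.range e) := by
      rw [h']; apply Ideal.span_mono
      rintro _ ⟨i, rfl⟩; exact ⟨i.succ, hes i⟩
    rw [Ideal.span_le]
    rintro _ ⟨i, rfl⟩
    refine Fin.cases ?_ (fun i => ?_) i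
    · rw [h0]
      exact add_mem hTm (Ideal.mul_mem_right _ _ (Ideal.pow_mem_of_mem _ hTm 2 (by norm_num)))
    · rw [hs]
      exact add_mem (add_mem (hle (Ideal.subset_span ⟨i, rfl⟩)) (Ideal.mul_mem_left _ _ hTm))
        (Ideal.mul_mem_right _ _ (Ideal.pow_mem_of_mem _ hTm 2 (by norm_num)))
  · have hTm : T ∈ Ideal.span (Set.range ψ) := by
      have : ψ 0 ∈ Ideal.span (Set.range ψ) := Ideal.subset_span ⟨0, rfl⟩
      rw [h0, show T + T ^ 2 * r 0 = T * (1 + T * r 0) by ring] at this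
      exact (Ideal.mul_unit_mem_iff_mem _ (hT (r 0))).mp this
    have hle : Ideal.span (Set.range (j ∘ X')) ≤ Ideal.span (Set.range ψ) := by
      rw [← h', Ideal.span_le]
      rintro _ ⟨i, rfl⟩
      have h1 : ψ i.succ ∈ Ideal.span (Set.range ψ) := Ideal.subset_span ⟨_, rfl⟩
      have h2 : (j ∘ ψX') i = ψ i.succ - (κ i * T + T ^ 2 * r i.succ) := by
        rw [hs]; simp
      rw [h2]
      exact sub_mem h1 (add_mem (Ideal.mul_mem_left _ _ hTm)
        (Ideal.mul_mem_right _ _ (Ideal.pow_mem_of_mem _ hTm 2 (by norm_num))))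
    rw [Ideal.span_le]
    rintro _ ⟨i, rfl⟩
    refine Fin.cases ?_ (fun i => ?_) i
    · rw [he0]; exact hTm
    · rw [hes]; exact hle (Ideal.subset_span ⟨i, rfl⟩)
end AA

end PartB5

section PartB6
section AA
open MvPowerSeries

/-- The subring generated by a family, as a `ℤ`-subalgebra. -/
abbrev adjZ {σ : Type*} {Ω : Type*} [CommRing Ω] (s : σ → Ω) : Subalgebra ℤ Ω :=
  Algebra.adjoin ℤ (Set.range s)

theorem adjZ_mem {σ : Type*} {Ω : Type*} [CommRing Ω] (s : σ → Ω) (i : σ) : s i ∈ adjZ s :=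
  Algebra.subset_adjoin ⟨i, rfl⟩

/-- The inclusion of `adjZ s`. -/
def adjZval {σ : Type*} {Ω : Type*} [CommRing Ω] (s : σ → Ω) : adjZ s →+* Ω :=
  (adjZ s).val.toRingHom

theorem adjZval_apply {σ : Type*} {Ω : Type*} [CommRing Ω] (s : σ → Ω) (a : adjZ s) :
    adjZval s a = a.1 := rfl

theorem adjZval_injective {σ : Type*} {Ω : Type*} [CommRing Ω] (s : σ → Ω) :
    Function.Injective (adjZval s) := Subtype.val_injective

theorem isDomain_mvPS (K : Type*) [Field K] (d : ℕ) : IsDomain (MvPowerSeries (Fin d) K) :=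
  NoZeroDivisors.to_isDomain _

theorem AA_step {K : Type u} [Field K] [CharZero K] {d : ℕ}
    (IH : ∀ {σ : Type u} [Finite σ] (s : σ → MvPowerSeries (Fin d) K) (w : Fin d → σ), (hw : ∀ i, s (w i) = X i) →
      ∃ (p : ℕ) (_ : p.Prime) (F : Type u) (_ : Field F) (_ : CharP F p)
        (ψ : adjZ s →+* MvPowerSeries (Fin d) F),
        Ideal.span (Set.range fun i => ψ ⟨s (w i), adjZ_mem s (w i)⟩) = Ideal.span (Set.range X))
    {σ : Type u} [Finite σ] (s : σ → MvPowerSeries (Fin (d+1)) K) (w : Fin (d+1) → σ) (hw : ∀ i, s (w i) = X i) :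
    ∃ (p : ℕ) (_ : p.Prime) (F : Type u) (_ : Field F) (_ : CharP F p)
        (ψ : adjZ s →+* MvPowerSeries (Fin (d+1)) F),
        Ideal.span (Set.range fun i => ψ ⟨s (w i), adjZ_mem s (w i)⟩) = Ideal.span (Set.range X) := by
  classical
  have hdom := isDomain_mvPS K (d+1)
  have hdomA := isDomain_mvPS K d
  have hcz : CharZero (MvPowerSeries (Fin (d+1)) K) := charZero_of_injective_algebraMap (R := K) (FaithfulSMul.algebraMap_injective _ _)
  obtain ⟨ι, hι, z, θ, f, c, P, hf, hD, hP, hQ⟩ := lemP s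
  obtain ⟨κ, τ, hτ0, hτs, hτD⟩ := lemTau _ hD
  let A := MvPowerSeries (Fin d) K
  have hcomp : IsAdicComplete (IsLocalRing.maximalIdeal A) A := by
    rw [maximalIdeal_mvPS]; infer_instance
  have hD' : (evh (fun i => τ (z i)) (τ θ) (Polynomial.C c * Polynomial.derivative f)).map (IsLocalRing.residue A) ≠ 0 := by
    rw [← evh_nat]
    intro h0
    apply hτD
    ext n
    have h1 := congrArg (PowerSeries.coeff n) h0
    rw [PowerSeries.coeff_map, map_zero, IsLocalRing.residue_eq_zero_iff, IsLocalRing.mem_maximalIdeal,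
      mem_nonunits_iff, MvPowerSeries.isUnit_iff_constantCoeff] at h1
    rw [PowerSeries.coeff_map, map_zero]
    simpa using h1
  obtain ⟨a, z', θ', y', qf, b, q, ha, h1, h2, hb, h3, hy⟩ := lemW (fun i => τ (z i)) (τ θ) (fun i => τ (s i)) f c P
    (by rw [← evh_nat, hf, map_zero]) (fun i => by rw [← evh_nat, ← map_mul, hP, evh_nat]) hD'
  obtain ⟨b0, hb0⟩ := hb.exists_right_inv
  -- the finite set
  let S : Set A := (a.coeffs : Set A) ∪ (⋃ i, ((z' i).coeffs : Set A)) ∪ (θ'.coeffs : Set A) ∪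
    (⋃ i, ((y' i).coeffs : Set A)) ∪ (qf.coeffs : Set A) ∪ (b.coeffs : Set A) ∪
    (⋃ i, ((q i).coeffs : Set A)) ∪ {b0} ∪ Set.range (X : Fin d → A)
  have hSfin : S.Finite := by
    simp only [S, Set.finite_union]
    refine ⟨⟨⟨⟨⟨⟨⟨⟨?_, ?_⟩, ?_⟩, ?_⟩, ?_⟩, ?_⟩, ?_⟩, ?_⟩, ?_⟩ <;>
      first
        | exact Finset.finite_toSet _
        | exact Set.finite_iUnion fun i => Finset.finite_toSet _
        | exact Set.finite_singleton _
        | exact Set.finite_range _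
  have : Finite S := hSfin
  let sS : S → A := (↑)
  have hsS : ∀ a ∈ S, a ∈ adjZ sS := fun a ha =>
    adjZ_mem sS ⟨a, ha⟩
  obtain ⟨p, hp, F, hF, hFp, ψ', hψ'⟩ := IH sS (fun i => ⟨X i, Or.inr ⟨i, rfl⟩⟩) (fun i => rfl)
  let B := adjZ sS
  let j : B →+* A := adjZval sS
  have hj : Function.Injective j := adjZval_injective sS
  have lift : ∀ P : Polynomial A, (P.coeffs : Set A) ⊆ S → ∃ P' : Polynomial B, P'.map j = P := by
    intro P hP
    rw [← Polynomial.mem_lifts, Polynomial.lifts_iff_coeffs_subset_range]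
    intro x hx
    exact ⟨⟨x, hsS x (hP hx)⟩, rfl⟩
  obtain ⟨a1, ha1⟩ := lift a (by intro x hx; simp only [S, Set.mem_union]; tauto)
  choose z1 hz1 using fun i => lift (z' i) (by
    intro x hx; have := Set.mem_iUnion_of_mem (s := fun i => ((z' i).coeffs : Set A)) i hx
    simp only [S, Set.mem_union]; tauto)
  obtain ⟨θ1, hθ1⟩ := lift θ' (by intro x hx; simp only [S, Set.mem_union]; tauto)
  choose y1 hy1 using fun i => lift (y' i) (by
    intro x hx; have := Set.mem_iUnion_of_mem (s := fun i => ((y' i).coeffs : Set A)) i hx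
    simp only [S, Set.mem_union]; tauto)
  obtain ⟨qf1, hqf1⟩ := lift qf (by intro x hx; simp only [S, Set.mem_union]; tauto)
  obtain ⟨b1, hb1⟩ := lift b (by intro x hx; simp only [S, Set.mem_union]; tauto)
  choose q1 hq1 using fun i => lift (q i) (by
    intro x hx; have := Set.mem_iUnion_of_mem (s := fun i => ((q i).coeffs : Set A)) i hx
    simp only [S, Set.mem_union]; tauto)
  let b01 : B := ⟨b0, hsS b0 (by simp only [S, Set.mem_union, Set.mem_singleton_iff]; tauto)⟩
  have hmj : Function.Injective (Polynomial.mapRingHom j) := Polynomial.map_injective j hj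
  have hev : ∀ Q, Polynomial.mapRingHom j (evh z1 θ1 Q) = evh z' θ' Q := by
    intro Q
    rw [evh_nat]
    congr 2
    · funext i; exact hz1 i
  have g1 : evh z1 θ1 f = a1 ^ 2 * Polynomial.X ^ 2 * qf1 := by
    apply hmj
    rw [hev, h1]
    simp [ha1, hqf1]
  have g2 : evh z1 θ1 (Polynomial.C c * Polynomial.derivative f) = a1 * b1 := by
    apply hmj
    rw [hev, h2]
    simp [ha1, hb1]
  have g3 : ∀ i, evh z1 θ1 (Polynomial.C c) * y1 i - evh z1 θ1 (P i) = a1 ^ 2 * Polynomial.X ^ 2 * q1 i := by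
    intro i
    apply hmj
    rw [map_sub, map_mul, hev, hev]
    simp [ha1, hq1, hy1, h3]
  have ha1m : a1.Monic := Polynomial.monic_of_injective hj (by rw [ha1]; exact ha)
  have hb01 : b1.coeff 0 * b01 = 1 := by
    apply hj
    rw [map_mul, ← Polynomial.coeff_map, hb1, map_one]
    exact hb0
  let A' := MvPowerSeries (Fin d) F
  have hdomA' : IsDomain A' := isDomain_mvPS F d
  let Λ : Polynomial B →+* PowerSeries A' :=
    (Polynomial.coeToPowerSeries.ringHom (R := A')).comp (Polynomial.mapRingHom ψ')
  have hΛ : ∀ P, Λ P = ((P.map ψ' : Polynomial A') : PowerSeries A') := fun P => rfl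
  have hΛX : Λ Polynomial.X = PowerSeries.X := by rw [hΛ]; simp
  obtain ⟨θ2, k1, k2, k3⟩ := lemN (PowerSeries.X : PowerSeries A') (fun i => Λ (z1 i)) (Λ θ1) (fun i => Λ (y1 i)) f c P
    (Λ a1) (Λ b1) (Λ qf1) (fun i => Λ (q1 i))
    (by
      rw [hΛ, Ne, Polynomial.coe_eq_zero_iff]
      exact (ha1m.map ψ').ne_zero)
    (by
      rw [PowerSeries.isUnit_iff_constantCoeff, hΛ, Polynomial.constantCoeff_coe, Polynomial.coeff_map]
      exact (IsUnit.of_mul_eq_one _ hb01).map ψ')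
    (by rw [← evh_nat, g1]; simp [hΛX])
    (by rw [← evh_nat, g2]; simp)
    (fun i => by rw [← evh_nat, ← evh_nat, ← map_mul, ← map_sub, g3]; simp [hΛX])
  choose r hr using k3
  obtain ⟨ψ, hψ⟩ := lemH f c P z θ s (fun i => Λ (z1 i)) θ2 (fun i => Λ (y1 i) + PowerSeries.X ^ 2 * r i)
    hP hQ k1 k2 (fun i => (hr i).symm)
  have hy0 : y1 (w 0) = Polynomial.X := by
    apply hmj
    change (y1 (w 0)).map j = Polynomial.X.map j
    rw [hy1, Polynomial.map_X]
    apply hy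
    rw [hw, hτ0, Polynomial.coe_X]
  have hys : ∀ i : Fin d, (y1 (w i.succ)).map j = Polynomial.C (X i) + Polynomial.C (C (κ i)) * Polynomial.X := by
    intro i
    rw [hy1]
    apply hy
    rw [hw, hτs]; simp
  have hys' : ∀ i : Fin d, y1 (w i.succ) = Polynomial.C (⟨X i, hsS _ (Or.inr ⟨i, rfl⟩)⟩ : B) +
      Polynomial.C ((y1 (w i.succ)).coeff 1) * Polynomial.X := by
    intro i
    apply hmj
    change (y1 (w i.succ)).map j = _
    rw [map_add, map_mul, Polynomial.coe_mapRingHom, Polynomial.map_C, Polynomial.map_C, ← Polynomial.coeff_map, hys]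
    simp [j]
    rfl
  refine ⟨p, hp, F, hF, hFp, ((finSuccEquiv F d).symm : _ →+* _).comp ψ, ?_⟩
  have key := span_aux (PowerSeries.X : PowerSeries A') (fun r => by
      rw [PowerSeries.isUnit_iff_constantCoeff]; simp) (PowerSeries.C) (X : Fin d → A')
      (fun i => ψ' ⟨X i, hsS _ (Or.inr ⟨i, rfl⟩)⟩) hψ'
      (fun i => ψ ⟨s (w i), adjZ_mem s (w i)⟩) (fun i => r (w i))
      (fun i => PowerSeries.C (ψ' ((y1 (w i.succ)).coeff 1)))
      (by rw [hψ, hy0, hΛX])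
      (fun i => by
        rw [hψ]
        congr 1
        rw [hΛ]
        conv_lhs => rw [hys']
        simp)
      (fun i => finSuccEquiv F d (X i)) (by simp) (fun i => by simp)
  have key2 := congrArg (Ideal.map ((finSuccEquiv F d).symm : PowerSeries (MvPowerSeries (Fin d) F) →+* MvPowerSeries (Fin (d+1)) F)) key
  rw [Ideal.map_span, Ideal.map_span, ← Set.range_comp, ← Set.range_comp] at key2
  refine Eq.trans ?_ (key2.trans ?_)
  · rfl
  · congr 2
    funext i
    simp

theorem AA {K : Type u} [Field K] [CharZero K] (d : ℕ) : ∀ 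
    {σ : Type u} [Finite σ] (s : σ → MvPowerSeries (Fin d) K) (w : Fin d → σ), (hw : ∀ i, s (w i) = X i) →
    ∃ (p : ℕ) (_ : p.Prime) (F : Type u) (_ : Field F) (_ : CharP F p)
        (ψ : adjZ s →+* MvPowerSeries (Fin d) F),
        Ideal.span (Set.range fun i => ψ ⟨s (w i), adjZ_mem s (w i)⟩) = Ideal.span (Set.range X) := by
  induction d with
  | zero =>
    intro σ _ s w hw
    obtain ⟨p, hp, F, hF, hFp, ⟨ψ⟩⟩ := AA_zero s
    refine ⟨p, hp, F, hF, hFp, (MvPowerSeries.C).comp ψ, ?_⟩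
    simp [Set.range_eq_empty]
  | succ d ih => 
    intro σ _ s w hw
    exact AA_step ih s w hw
end AA

end PartB6

section PartB7
theorem dim_le_of_integral {A B : Type*} [CommRing A] [CommRing B] [Algebra A B]
    [Algebra.IsIntegral A B] [FaithfulSMul A B] : ringKrullDim A ≤ ringKrullDim B := by
  unfold ringKrullDim Order.krullDim
  refine iSup_le fun l => ?_
  obtain ⟨⟨Q, hQ⟩⟩ := Ideal.nonempty_primesOver (S := B) l.head.asIdeal
  have := hQ.1
  have := hQ.2
  obtain ⟨L, hL, -, -⟩ := Ideal.exists_ltSeries_of_hasGoingUp (S := B) l Q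
  rw [← hL]
  exact le_iSup (fun L : LTSeries (PrimeSpectrum B) => (L.length : WithBot ℕ∞)) L

theorem extend_integral {B C L : Type*} [CommRing B] [CommRing C] [Algebra B C]
    [Algebra.IsIntegral B C] (hinj : Function.Injective (algebraMap B C)) [Field L] [IsAlgClosed L]
    (f : B →+* L) : ∃ g : C →+* L, g.comp (algebraMap B C) = f := by
  have hfs : FaithfulSMul B C := (faithfulSMul_iff_algebraMap_injective B C).2 hinj
  let Q := RingHom.ker f
  have hQ : Q.IsPrime := RingHom.ker_isPrime f
  obtain ⟨⟨Q', hQ'⟩⟩ := Ideal.nonempty_primesOver (S := C) Q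
  have h1 := hQ'.1
  have h2 := hQ'.2
  let f' : B ⧸ Q →+* L := RingHom.kerLift f
  let : Algebra (B ⧸ Q) L := f'.toAlgebra
  have hf' : Function.Injective f' := RingHom.kerLift_injective f
  have : FaithfulSMul (B ⧸ Q) L := (faithfulSMul_iff_algebraMap_injective _ _).2 hf'
  have h3 : Algebra.IsIntegral (B ⧸ Q) (C ⧸ Q') := inferInstance
  have h4 : FaithfulSMul (B ⧸ Q) (C ⧸ Q') := inferInstance
  have h5 : Module.IsTorsionFree (B ⧸ Q) (C ⧸ Q') := Module.isTorsionFree_iff_faithfulSMul.2 h4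
  have h6 : Module.IsTorsionFree (B ⧸ Q) L := Module.isTorsionFree_iff_faithfulSMul.2 this
  have h7 : Algebra.IsAlgebraic (B ⧸ Q) (C ⧸ Q') := h3.isAlgebraic
  let g : C ⧸ Q' →ₐ[B ⧸ Q] L := IsAlgClosed.lift
  refine ⟨(g : C ⧸ Q' →+* L).comp (Ideal.Quotient.mk Q'), ?_⟩
  ext b
  have := g.commutes (Ideal.Quotient.mk Q b)
  exact this

theorem dim_mvPS (F : Type*) [Field F] (d : ℕ) : (d : WithBot ℕ∞) ≤ ringKrullDim (MvPowerSeries (Fin d) F) := by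
  induction d with
  | zero => 
    have := isDomain_mvPS F 0
    exact_mod_cast ringKrullDim_nonneg_of_nontrivial
  | succ d ih =>
    rw [ringKrullDim_eq_of_ringEquiv (MvPowerSeries.finSuccEquiv F d).toRingEquiv]
    refine le_trans ?_ ringKrullDim_succ_le_ringKrullDim_powerseries
    push_cast
    gcongr

theorem radical_eq_max {A : Type*} [CommRing A] [IsLocalRing A] (I : Ideal A) (hI : I ≤ IsLocalRing.maximalIdeal A)
    (h : ∀ P : Ideal A, P.IsPrime → I ≤ P → P.IsMaximal) : I.radical = IsLocalRing.maximalIdeal A := by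
  apply le_antisymm
  · exact (IsLocalRing.maximalIdeal.isMaximal A).isPrime.radical_le_iff.2 hI
  · rw [Ideal.radical_eq_sInf]
    refine le_sInf fun P hP => ?_
    exact (IsLocalRing.eq_maximalIdeal (h P hP.2 hP.1)).ge

theorem local_of_integral {A R' : Type u} [CommRing A] [IsDomain A] [IsNoetherianRing A] [IsLocalRing A]
    [CommRing R'] [IsDomain R'] [Algebra A R'] [FaithfulSMul A R'] [Module.Finite A R'] {d : ℕ}
    (hd : (d : WithBot ℕ∞) ≤ ringKrullDim A) (x : Fin d → A)
    (hx : Ideal.span (Set.range x) = IsLocalRing.maximalIdeal A) :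
    ∃ (D : Type u) (_ : CommRing D) (_ : IsDomain D) (_ : IsNoetherianRing D) (_ : IsLocalRing D)
      (f : R' →+* D), Function.Injective f ∧ (d : WithBot ℕ∞) ≤ ringKrullDim D ∧
      (Ideal.span (Set.range fun i => f (algebraMap A R' (x i)))).radical = IsLocalRing.maximalIdeal D := by
  have hintegral : Algebra.IsIntegral A R' := inferInstance
  have hno : IsNoetherianRing R' := IsNoetherianRing.of_finite A R'
  have h1 : (d : WithBot ℕ∞) ≤ ringKrullDim R' := hd.trans dim_le_of_integral
  have hex : ∃ n : Ideal R', n.IsMaximal ∧ (d : ℕ∞) ≤ n.height := by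
    by_contra hcon
    push Not at hcon
    rw [← Ideal.sup_isMaximal_height_eq_ringKrullDim] at h1
    rcases Nat.eq_zero_or_pos d with rfl | hdp
    · obtain ⟨n, hn⟩ := Ideal.exists_maximal R'
      have := hcon n hn
      simp at this
    have h2 : (⨆ (I : Ideal R') (_ : I.IsMaximal), I.height) ≤ ((d - 1 : ℕ) : ℕ∞) := by
      refine iSup₂_le fun n hn => ?_
      have := hcon n hn
      exact Order.le_of_lt_add_one (lt_of_lt_of_le this (by exact_mod_cast (by omega : d ≤ d - 1 + 1)))
    have h3 : (d : ℕ∞) ≤ ((d - 1 : ℕ) : ℕ∞) := le_trans (by exact_mod_cast h1) h2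
    have h4 : d ≤ d - 1 := by exact_mod_cast h3
    omega
  obtain ⟨n, hn, hh⟩ := hex
  have hnp := hn.isPrime
  have hinj : Function.Injective (algebraMap R' (Localization.AtPrime n)) :=
    IsLocalization.injective _ n.primeCompl_le_nonZeroDivisors
  refine ⟨Localization.AtPrime n, inferInstance, IsLocalization.isDomain_localization n.primeCompl_le_nonZeroDivisors,
    IsLocalization.isNoetherianRing n.primeCompl _ hno, inferInstance,
    algebraMap R' (Localization.AtPrime n), hinj, ?_, ?_⟩
  · rw [IsLocalization.AtPrime.ringKrullDim_eq_height n]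
    exact_mod_cast hh
  · have hnm : n.comap (algebraMap A R') = IsLocalRing.maximalIdeal A :=
      IsLocalRing.eq_maximalIdeal (Ideal.isMaximal_comap_of_isIntegral_of_isMaximal n)
    apply radical_eq_max
    · rw [Ideal.span_le]
      rintro _ ⟨i, rfl⟩
      change _ ∈ IsLocalRing.maximalIdeal _
      rw [IsLocalization.AtPrime.to_map_mem_maximal_iff _ n]
      change x i ∈ n.comap (algebraMap A R')
      rw [hnm, ← hx]
      exact Ideal.subset_span ⟨i, rfl⟩
    · intro P hP hle
      let P1 := P.comap (algebraMap R' (Localization.AtPrime n))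
      have hP1 : P1.IsPrime := Ideal.IsPrime.comap _
      have hP0 : (P1.comap (algebraMap A R')).IsMaximal := by
        have : IsLocalRing.maximalIdeal A ≤ P1.comap (algebraMap A R') := by
          rw [← hx, Ideal.span_le]
          rintro _ ⟨i, rfl⟩
          exact hle (Ideal.subset_span ⟨i, rfl⟩)
        have hne : P1.comap (algebraMap A R') ≠ ⊤ := (Ideal.IsPrime.comap _).ne_top
        rw [← (IsLocalRing.maximalIdeal.isMaximal A).eq_of_le hne this]
        infer_instance
      have hP1m : P1.IsMaximal := Ideal.isMaximal_of_isIntegral_of_isMaximal_comap P1 hP0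
      have hPn : P1 ≤ n := by
        have := IsLocalRing.le_maximalIdeal hP.ne_top
        intro a ha
        rw [← IsLocalization.AtPrime.to_map_mem_maximal_iff (Localization.AtPrime n) n]
        exact this ha
      have hPn' : P1 = n := hP1m.eq_of_le hnp.ne_top hPn
      have : P = IsLocalRing.maximalIdeal (Localization.AtPrime n) := by
        rw [← IsLocalization.map_under n.primeCompl (Localization.AtPrime n) P]
        rw [show P.under R' = n from hPn']
        exact Localization.AtPrime.map_eq_maximalIdeal
      rw [this]; infer_instance

theorem adjZ_induction {σ Ω : Type*} [CommRing Ω] (s : σ → Ω) (T : Subring Ω) (h : ∀ i, s i ∈ T) (a : Ω)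
    (ha : a ∈ adjZ s) : a ∈ T := by
  induction ha using Algebra.adjoin_induction with
  | mem x hx => obtain ⟨i, rfl⟩ := hx; exact h i
  | algebraMap r => exact intCast_mem T r
  | add x y _ _ hx hy => exact add_mem hx hy
  | mul x y _ _ hx hy => exact mul_mem hx hy

open MvPowerSeries in
theorem metaB {K : Type u} [Field K] [CharZero K] {d : ℕ} {R₁ : Type u} [CommRing R₁] [IsDomain R₁]
    (e : MvPowerSeries (Fin d) K →+* R₁) (he : Function.Injective e) (hintegral : e.IsIntegral)
    {σ : Type u} [Finite σ] (s : σ → R₁) (w : Fin d → σ) (hw : ∀ i, s (w i) = e (X i)) :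
    ∃ (p : ℕ) (_ : p.Prime) (D : Type u) (_ : CommRing D) (_ : IsDomain D) (_ : IsNoetherianRing D)
      (_ : IsLocalRing D) (_ : CharP D p) (ψ : adjZ s →+* D),
      (d : WithBot ℕ∞) ≤ ringKrullDim D ∧
      (Ideal.span (Set.range fun i => ψ ⟨s (w i), adjZ_mem s (w i)⟩)).radical = IsLocalRing.maximalIdeal D := by
  classical
  choose P hPm hP using fun i => hintegral (s i)
  let A := MvPowerSeries (Fin d) K
  let S : Set A := (⋃ i, ((P i).coeffs : Set A)) ∪ Set.range (X : Fin d → A)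
  have hSfin : S.Finite :=
    (Set.finite_iUnion fun i => Finset.finite_toSet _).union (Set.finite_range _)
  have : Finite S := hSfin
  let sS : S → A := (↑)
  have hsS : ∀ a ∈ S, a ∈ adjZ sS := fun a ha => adjZ_mem sS ⟨a, ha⟩
  obtain ⟨p, hp, F, hF, hFp, ψ', hψ'⟩ := AA d sS (fun i => ⟨X i, Or.inr ⟨i, rfl⟩⟩) (fun i => rfl)
  let B := adjZ sS
  let j : B →+* A := adjZval sS
  have hj : Function.Injective j := adjZval_injective sS
  let : Algebra B R₁ := (e.comp j).toAlgebra
  have hBinj : Function.Injective (algebraMap B R₁) := he.comp hj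
  let C := Algebra.adjoin B (Set.range s)
  have hBint : ∀ i, IsIntegral B (s i) := by
    intro i
    have : P i ∈ Polynomial.lifts j := by
      rw [Polynomial.lifts_iff_coeffs_subset_range]
      intro x hx
      exact ⟨⟨x, hsS x (Or.inl (Set.mem_iUnion_of_mem i hx))⟩, rfl⟩
    obtain ⟨q, hq, -, hqm⟩ := Polynomial.lifts_and_natDegree_eq_and_monic this (hPm i)
    refine ⟨q, hqm, ?_⟩
    have h2 := hP i
    rw [← hq, Polynomial.eval₂_map] at h2
    exact h2
  have hCint : Algebra.IsIntegral B C := Algebra.IsIntegral.adjoin (by rintro _ ⟨i, rfl⟩; exact hBint i)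
  have hCinj : Function.Injective (algebraMap B C) := by
    intro a b h
    apply hBinj
    exact congrArg Subtype.val h
  let A' := MvPowerSeries (Fin d) F
  have hdomA' : IsDomain A' := isDomain_mvPS F d
  have hnoA' : IsNoetherianRing A' := inferInstance
  let L := AlgebraicClosure (FractionRing A')
  let i1 : A' →+* L := (algebraMap (FractionRing A') L).comp (algebraMap A' (FractionRing A'))
  have hi1 : Function.Injective i1 :=
    (algebraMap (FractionRing A') L).injective.comp (IsFractionRing.injective A' (FractionRing A'))
  obtain ⟨g, hg⟩ := extend_integral hCinj (i1.comp ψ')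
  let : Algebra A' L := i1.toAlgebra
  have hle : ∀ a ∈ adjZ s, a ∈ C := fun a ha =>
    adjZ_induction s C.toSubring (fun i => Algebra.subset_adjoin ⟨i, rfl⟩) a ha
  let inc : adjZ s →+* C := (adjZval s).codRestrict C (fun a => hle a.1 a.2)
  let sC : σ → C := fun i => ⟨s i, Algebra.subset_adjoin ⟨i, rfl⟩⟩
  let R' := Algebra.adjoin A' (Set.range fun i => g (sC i))
  have hgint : ∀ i, IsIntegral A' (g (sC i)) := by
    intro i
    obtain ⟨q, hqm, hq⟩ := hCint.isIntegral (sC i)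
    refine ⟨q.map ψ', hqm.map _, ?_⟩
    have h2 := congrArg g hq
    rw [Polynomial.hom_eval₂, map_zero, hg] at h2
    rw [Polynomial.eval₂_map]
    exact h2
  have hfin : Module.Finite A' R' :=
    Algebra.finite_adjoin_of_finite_of_isIntegral (Set.finite_range _) (by rintro _ ⟨i, rfl⟩; exact hgint i)
  have hR'inj : Function.Injective (algebraMap A' R') := by
    intro a b h
    apply hi1
    exact congrArg Subtype.val h
  have hfs : FaithfulSMul A' R' := (faithfulSMul_iff_algebraMap_injective A' R').2 hR'inj
  have hmap : ∀ a : adjZ s, g (inc a) ∈ R' := by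
    intro a
    let T : Subring R₁ := (R'.toSubring.comap g).map (C.val : C →+* R₁)
    have : a.1 ∈ T := adjZ_induction s T (fun i => ⟨sC i, Algebra.subset_adjoin ⟨i, rfl⟩, rfl⟩) a.1 a.2
    obtain ⟨c, hc, hca⟩ := this
    have : inc a = c := Subtype.ext hca.symm
    rw [this]
    exact hc
  let h0 : adjZ s →+* R' := (g.comp inc).codRestrict R' hmap
  obtain ⟨D, i2, i3, i4, i5, f, hf, hdim, hrad⟩ := local_of_integral (A := A') (R' := R') (dim_mvPS F d)
    (fun i => ψ' ⟨X i, hsS _ (Or.inr ⟨i, rfl⟩)⟩) (by rw [maximalIdeal_mvPS]; exact hψ')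
  have hcp : CharP D p := by
    have := charP_of_injective_ringHom (R := F) (A := D) (f := (f.comp (algebraMap A' R')).comp (MvPowerSeries.C)) (RingHom.injective _) p
    exact this
  refine ⟨p, hp, D, i2, i3, i4, i5, hcp, f.comp h0, hdim, ?_⟩
  rw [← hrad]
  congr 4
  funext i
  change f (h0 _) = f _
  congr 1
  apply Subtype.ext
  change g (inc ⟨s (w i), _⟩) = i1 (ψ' _)
  have : inc ⟨s (w i), adjZ_mem s (w i)⟩ = algebraMap B C ⟨X i, hsS _ (Or.inr ⟨i, rfl⟩)⟩ := by
    apply Subtype.ext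
    exact hw i
  rw [this, ← RingHom.comp_apply, hg]
  rfl

end PartB7

section PartB8
theorem mem_smul_top_pi {A : Type*} [CommRing A] (J : Ideal A) {m : ℕ} (v : Fin m → A) :
    v ∈ J • (⊤ : Submodule A (Fin m → A)) ↔ ∀ i, v i ∈ J := by
  constructor
  · intro h i
    have := Submodule.mem_map_of_mem (f := LinearMap.proj (R := A) (φ := fun _ : Fin m => A) i) h
    rw [Submodule.map_smul''] at this
    have h2 : J • Submodule.map (LinearMap.proj (R := A) (φ := fun _ : Fin m => A) i) ⊤ ≤ J := by
      refine Submodule.smul_le.2 fun r hr n _ => ?_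
      exact Ideal.mul_mem_right _ _ hr
    exact h2 this
  · intro h
    rw [pi_eq_sum_univ v]
    exact Submodule.sum_mem _ fun i _ => Submodule.smul_mem_smul (h i) trivial

theorem isPrecomplete_pi {A : Type*} [CommRing A] (J : Ideal A) [IsPrecomplete J A] (m : ℕ) :
    IsPrecomplete J (Fin m → A) := by
  constructor
  intro f hf
  have h1 : ∀ i, ∃ L, ∀ n, f n i ≡ L [SMOD (J ^ n • ⊤ : Submodule A A)] := by
    intro i
    apply IsPrecomplete.prec ‹_› (f := fun n => f n i)
    intro a b hab
    have := hf hab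
    rw [SModEq.sub_mem, mem_smul_top_pi] at this
    rw [SModEq.sub_mem]
    simpa using this i
  choose L hL using h1
  refine ⟨L, fun n => ?_⟩
  rw [SModEq.sub_mem, mem_smul_top_pi]
  intro i
  have := hL i n
  rw [SModEq.sub_mem] at this
  simpa using this

/-- Complete Nakayama. -/
theorem finite_of_complete {A S : Type*} [CommRing A] [CommRing S] [Algebra A S] (J : Ideal A)
    [IsPrecomplete J A] (I : Ideal S) [IsHausdorff I S] (hJI : J.map (algebraMap A S) ≤ I)
    {m : ℕ} (t : Fin m → S) (ht : ∀ r : S, ∃ a : Fin m → A, r - ∑ i, a i • t i ∈ J.map (algebraMap A S)) :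
    Module.Finite A S := by
  have : IsPrecomplete J (Fin m → A) := isPrecomplete_pi J m
  have : IsHausdorff J S := by
    constructor
    intro x hx
    apply IsHausdorff.haus ‹IsHausdorff I S›
    intro n
    have := hx n
    rw [SModEq.zero, Ideal.smul_top_eq_map] at this
    rw [SModEq.zero]
    have h2 : x ∈ (J ^ n).map (algebraMap A S) := this
    rw [Ideal.map_pow] at h2
    simpa using Ideal.pow_right_mono hJI n h2
  let f : (Fin m → A) →ₗ[A] S := Fintype.linearCombination A t
  have hf : Function.Surjective f := by
    apply surjective_of_mkQ_comp_surjective (I := J)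
    intro y
    obtain ⟨r, rfl⟩ := Submodule.Quotient.mk_surjective _ y
    obtain ⟨a, ha⟩ := ht r
    refine ⟨a, ?_⟩
    symm
    rw [LinearMap.comp_apply, Submodule.mkQ_apply, Submodule.Quotient.eq, Ideal.smul_top_eq_map]
    exact ha
  exact Module.Finite.of_surjective f hf

theorem finite_mod_pow {A S : Type*} [CommRing A] [CommRing S] [Algebra A S] (I : Ideal S) (hI : I.FG)
    (h : ∀ r : S, ∃ a : A, r - algebraMap A S a ∈ I) (n : ℕ) :
    ∃ (m : ℕ) (t : Fin m → S), ∀ r : S, ∃ a : Fin m → A, r - ∑ i, a i • t i ∈ I ^ n := by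
  induction n with
  | zero => exact ⟨0, Fin.elim0, fun r => ⟨Fin.elim0, by simp⟩⟩
  | succ n ih =>
    obtain ⟨m, t, ht⟩ := ih
    obtain ⟨k, g, hg⟩ := Submodule.fg_iff_exists_fin_generating_family.1 (hI.pow (n := n))
    refine ⟨m + k, Fin.append t g, fun r => ?_⟩
    obtain ⟨a, ha⟩ := ht r
    rw [← hg, Submodule.mem_span_range_iff_exists_fun] at ha
    obtain ⟨c, hc⟩ := ha
    choose b hb using fun i => h (c i)
    refine ⟨Fin.append a b, ?_⟩
    have : r - ∑ i, Fin.append a b i • Fin.append t g i = ∑ i, (c i - algebraMap A S (b i)) * g i := by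
      rw [Fin.sum_univ_add]
      simp only [Fin.append_left, Fin.append_right, sub_mul, Finset.sum_sub_distrib]
      have : ∑ i, c i * g i = ∑ i, c i • g i := rfl
      rw [this, hc]
      simp only [Algebra.smul_def]
      ring
    rw [this, pow_succ']
    exact Ideal.sum_mem _ fun i _ => Ideal.mul_mem_mul (hb i) (by rw [← hg]; exact Submodule.subset_span ⟨i, rfl⟩)

/-- evaluation of power series in a complete ring -/
theorem exists_eval {K S : Type*} [Field K] [CommRing S] (I : Ideal S) [IsAdicComplete I S] (g : K →+* S)
    {d : ℕ} (x : Fin d → S) (hx : ∀ i, x i ∈ I) :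
    ∃ e : MvPowerSeries (Fin d) K →+* S, (∀ k, e (MvPowerSeries.C k) = g k) ∧ ∀ i, e (MvPowerSeries.X i) = x i := by
  let ev : MvPolynomial (Fin d) K →+* S := MvPolynomial.eval₂Hom g x
  let V := MvPolynomial.idealOfVars (Fin d) K
  have hV : V ≤ I.comap ev := by
    change Ideal.span _ ≤ _
    rw [Ideal.span_le]
    rintro _ ⟨i, rfl⟩
    simpa [ev] using hx i
  have hVn : ∀ n, V ^ n ≤ (I ^ n).comap ev := fun n =>
    (Ideal.pow_right_mono hV n).trans (Ideal.le_comap_pow _ _)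
  let f : (n : ℕ) → MvPowerSeries (Fin d) K →+* S ⧸ I ^ n := fun n =>
    ((Ideal.quotientMap (I ^ n) ev (hVn n)).comp (AdicCompletion.evalₐ V n).toRingHom).comp
      (MvPowerSeries.toAdicCompletion (Fin d) K).toRingHom
  have hf : ∀ {m n : ℕ} (hle : m ≤ n), (Ideal.Quotient.factorPow I hle).comp (f n) = f m := by
    intro m n hle
    ext p
    obtain ⟨q, hq⟩ := AdicCompletion.mk_surjective V (MvPolynomial (Fin d) K) (MvPowerSeries.toAdicCompletion (Fin d) K p)
    simp only [f, RingHom.comp_apply, AlgHom.toRingHom_eq_coe, RingHom.coe_coe]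
    rw [← hq, AdicCompletion.evalₐ_mk, AdicCompletion.evalₐ_mk]
    change Ideal.Quotient.mk (I ^ m) (ev (q.val n)) = Ideal.Quotient.mk (I ^ m) (ev (q.val m))
    rw [Ideal.Quotient.eq, ← map_sub]
    apply hVn m
    have := q.2 hle
    rw [SModEq.sub_mem, smul_eq_mul, Ideal.mul_top] at this
    rw [← neg_sub]
    exact neg_mem this
  let e := IsAdicComplete.liftRingHom I f hf
  have he : ∀ p : MvPolynomial (Fin d) K, e (p : MvPowerSeries (Fin d) K) = ev p := by
    intro p
    rw [← sub_eq_zero]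
    apply IsHausdorff.haus (inferInstance : IsHausdorff I S)
    intro n
    rw [SModEq.zero, smul_eq_mul, Ideal.mul_top, ← Ideal.Quotient.eq_zero_iff_mem, map_sub, sub_eq_zero]
    rw [IsAdicComplete.mk_liftRingHom]
    simp only [f, RingHom.comp_apply, AlgHom.toRingHom_eq_coe, RingHom.coe_coe]
    rw [MvPowerSeries.toAdicCompletion_coe, AdicCompletion.evalₐ_of]
    rfl
  refine ⟨e, fun k => ?_, fun i => ?_⟩
  · have := he (MvPolynomial.C k)
    rw [MvPolynomial.coe_C] at this
    rw [this]; simp [ev]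
  · have := he (MvPolynomial.X i)
    rw [MvPolynomial.coe_X] at this
    rw [this]; simp [ev]

end PartB8

section PartB9
open IsLocalRing

section
variable {D : Type u} [CommRing D] [IsNoetherianRing D] [IsLocalRing D]

theorem completion_mem_iff (n : ℕ) (s : AdicCompletion (maximalIdeal D) D) :
    s ∈ maximalIdeal (AdicCompletion (maximalIdeal D) D) ^ n ↔ AdicCompletion.eval (maximalIdeal D) D n s = 0 := by
  rw [← LinearMap.mem_ker, ← AdicCompletion.pow_smul_top_eq_ker_eval (maximalIdeal D).fg_of_isNoetherianRing,
    Ideal.smul_top_eq_map, AdicCompletion.maximalIdeal_eq_map, ← Ideal.map_pow]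
  rfl

theorem completion_surj (n : ℕ) (s : AdicCompletion (maximalIdeal D) D) :
    ∃ a : D, s - algebraMap D _ a ∈ maximalIdeal (AdicCompletion (maximalIdeal D) D) ^ n := by
  obtain ⟨a, ha⟩ := Submodule.Quotient.mk_surjective _ (AdicCompletion.eval (maximalIdeal D) D n s)
  refine ⟨a, ?_⟩
  rw [completion_mem_iff, map_sub, ← ha, sub_eq_zero]
  rfl

theorem completion_inj (n : ℕ) (a : D)
    (h : algebraMap D _ a ∈ maximalIdeal (AdicCompletion (maximalIdeal D) D) ^ n) : a ∈ maximalIdeal D ^ n := by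
  rw [completion_mem_iff] at h
  have : (Submodule.Quotient.mk a : D ⧸ (maximalIdeal D ^ n • ⊤ : Submodule D D)) = 0 := h
  rw [Submodule.Quotient.mk_eq_zero] at this
  simpa using this

theorem dim_mvPS_le (F : Type*) [Field F] (d : ℕ) : ringKrullDim (MvPowerSeries (Fin d) F) ≤ d := by
  have hl := ringKrullDim_le_spanFinrank_maximalIdeal (MvPowerSeries (Fin d) F)
  refine hl.trans ?_
  rw [maximalIdeal_mvPS]
  have : (Submodule.spanFinrank (Ideal.span (Set.range (MvPowerSeries.X : Fin d → MvPowerSeries (Fin d) F)))) ≤ d := by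
    refine (Submodule.spanFinrank_span_le_ncard_of_finite (Set.finite_range _)).trans ?_
    rw [← Set.image_univ]
    refine (Set.ncard_image_le).trans ?_
    simp [Set.ncard_univ]
  exact_mod_cast this

end

end PartB9

section PartB10
open IsLocalRing

theorem formallySmooth_rat (L : Type u) [Field L] [Algebra ℚ L] : Algebra.FormallySmooth ℚ L := by
  obtain ⟨ι, v, hv⟩ := exists_isTranscendenceBasis' ℚ L
  have := hv.isAlgebraic_field
  exact Algebra.FormallySmooth.of_algebraicIndependent_of_isSeparable hv.1

theorem exists_section (S : Type u) [CommRing S] [Algebra ℚ S] (m : Ideal S) [hm : m.IsMaximal] [IsAdicComplete m S] :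
    ∃ (K : Type u) (_ : Field K) (_ : CharZero K) (π : S →+* K) (g : K →+* S),
      Function.Surjective π ∧ RingHom.ker π = m ∧ ∀ k, π (g k) = k := by
  have hsm : Algebra.FormallySmooth ℚ (S ⧸ m) := @formallySmooth_rat (S ⧸ m) (Ideal.Quotient.field m) _
  obtain ⟨g, hg⟩ := Algebra.FormallySmooth.exists_mkₐ_comp_eq_of_isAdicComplete (R := ℚ) (AlgHom.id ℚ (S ⧸ m))
  have hc : CharZero (S ⧸ m) := algebraRat.charZero (S ⧸ m)
  refine ⟨S ⧸ m, Ideal.Quotient.field m, hc, Ideal.Quotient.mk m, g.toRingHom, Ideal.Quotient.mk_surjective,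
    Ideal.mk_ker, fun k => ?_⟩
  exact congrArg (fun f => f k) hg

theorem dim_le_of_pow_le {D : Type u} [CommRing D] [IsNoetherianRing D] [IsLocalRing D] {k : ℕ} (z : Fin k → D)
    (hz : ∀ i, z i ∈ maximalIdeal D) {N : ℕ} (h : maximalIdeal D ^ N ≤ Ideal.span (Set.range z)) :
    ringKrullDim D ≤ k := by
  rw [← IsLocalRing.maximalIdeal_height_eq_ringKrullDim]
  have h0 : Ideal.span (Set.range z) ≤ maximalIdeal D := by
    rw [Ideal.span_le]; rintro _ ⟨i, rfl⟩; exact hz i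
  have hmin : maximalIdeal D ∈ (Ideal.span (Set.range z)).minimalPrimes := by
    refine ⟨⟨inferInstance, h0⟩, fun Q hQ _ => ?_⟩
    have := hQ.1
    exact Ideal.IsPrime.le_of_pow_le (h.trans hQ.2)
  have := Ideal.height_le_spanRank_toENat_of_mem_minimalPrimes _ _ hmin
  have h3 : (Ideal.span (Set.range z)).spanFinrank ≤ k := by
    refine (Submodule.spanFinrank_span_le_ncard_of_finite (Set.finite_range _)).trans ?_
    rw [← Set.image_univ]
    refine (Set.ncard_image_le).trans ?_
    simp [Set.ncard_univ]
  have h4 : (Submodule.spanRank (Ideal.span (Set.range z))).toENat ≤ (k : ℕ∞) := by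
    have h5 := Submodule.fg_iff_spanRank_eq_spanFinrank.2 (IsNoetherian.noetherian (Ideal.span (Set.range z)))
    rw [h5]
    simpa using h3
  exact_mod_cast this.trans h4

theorem metaA_aux {D S : Type u} [CommRing D] [IsNoetherianRing D] [IsLocalRing D] [CommRing S] [IsLocalRing S]
    [Algebra D S] [IsAdicComplete (maximalIdeal S) S] [Algebra ℚ S]
    (hmap : maximalIdeal S = (maximalIdeal D).map (algebraMap D S))
    (surj : ∀ (n : ℕ) (s : S), ∃ a : D, s - algebraMap D S a ∈ maximalIdeal S ^ n)
    (inj : ∀ (n : ℕ) (a : D), algebraMap D S a ∈ maximalIdeal S ^ n → a ∈ maximalIdeal D ^ n)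
    {d : ℕ} (hd : (d : WithBot ℕ∞) ≤ ringKrullDim D) (x : Fin d → D)
    (hx : (Ideal.span (Set.range x)).radical = maximalIdeal D) :
    ∃ (K : Type u) (_ : Field K) (_ : CharZero K) (R₁ : Type u) (_ : CommRing R₁) (_ : IsDomain R₁)
      (e : MvPowerSeries (Fin d) K →+* R₁) (φ : D →+* R₁), Function.Injective e ∧ e.IsIntegral ∧
      ∀ i, φ (x i) = e (MvPowerSeries.X i) := by
  obtain ⟨K, _, hK, π, g, hπ, hker, hg⟩ := exists_section S (maximalIdeal S)
  have hFG : (maximalIdeal S).FG := hmap ▸ (maximalIdeal D).fg_of_isNoetherianRing.map _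
  have hxm : ∀ i, x i ∈ maximalIdeal D := fun i => hx ▸ Ideal.le_radical (Ideal.subset_span ⟨i, rfl⟩)
  have hxS : ∀ i, algebraMap D S (x i) ∈ maximalIdeal S := fun i => hmap ▸ Ideal.mem_map_of_mem _ (hxm i)
  obtain ⟨e, heC, heX⟩ := exists_eval (maximalIdeal S) g (fun i => algebraMap D S (x i)) hxS
  let alg : Algebra (MvPowerSeries (Fin d) K) S := e.toAlgebra
  have halg : algebraMap (MvPowerSeries (Fin d) K) S = e := rfl
  obtain ⟨n, hn⟩ := Ideal.exists_radical_pow_le_of_fg (Ideal.span (Set.range x)) (hx ▸ (maximalIdeal D).fg_of_isNoetherianRing)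
  rw [hx] at hn
  have hmx : (maximalIdeal (MvPowerSeries (Fin d) K)).map e = (Ideal.span (Set.range x)).map (algebraMap D S) := by
    rw [maximalIdeal_mvPS, Ideal.map_span, Ideal.map_span, ← Set.range_comp, ← Set.range_comp]
    congr 2
    funext i
    exact heX i
  have hSn : maximalIdeal S ^ n ≤ (maximalIdeal (MvPowerSeries (Fin d) K)).map e := by
    rw [hmx, hmap, ← Ideal.map_pow]; exact Ideal.map_mono hn
  have hle : (maximalIdeal (MvPowerSeries (Fin d) K)).map e ≤ maximalIdeal S := by
    rw [hmx, Ideal.map_span, Ideal.span_le]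
    rintro _ ⟨_, ⟨i, rfl⟩, rfl⟩
    exact hxS i
  have hfin : Module.Finite (MvPowerSeries (Fin d) K) S := by
    obtain ⟨m, t, ht⟩ := finite_mod_pow (A := MvPowerSeries (Fin d) K) (maximalIdeal S) hFG (fun r => by
      refine ⟨MvPowerSeries.C (π r), ?_⟩
      rw [halg, heC, ← hker, RingHom.mem_ker, map_sub, hg, sub_self]) n
    have : IsAdicComplete (maximalIdeal (MvPowerSeries (Fin d) K)) (MvPowerSeries (Fin d) K) := by
      rw [maximalIdeal_mvPS]; infer_instance
    refine finite_of_complete (maximalIdeal (MvPowerSeries (Fin d) K)) (maximalIdeal S) hle t fun r => ?_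
    obtain ⟨a, ha⟩ := ht r
    exact ⟨a, hSn ha⟩
  have hdomA := isDomain_mvPS K d
  have hinj : Function.Injective e := by
    rw [RingHom.injective_iff_ker_eq_bot]
    by_contra hne
    obtain ⟨f, hf, hf0⟩ := Submodule.exists_mem_ne_zero_of_ne_bot hne
    have hdim : ringKrullDim (MvPowerSeries (Fin d) K ⧸ RingHom.ker e) < d := by
      have h1 := ringKrullDim_quotient_succ_le_of_nonZeroDivisor (mem_nonZeroDivisors_of_ne_zero hf0)
      have h2 : ringKrullDim (MvPowerSeries (Fin d) K ⧸ RingHom.ker e) ≤ ringKrullDim (MvPowerSeries (Fin d) K ⧸ Ideal.span {f}) :=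
        ringKrullDim_le_of_surjective (Ideal.Quotient.factor ((Ideal.span_singleton_le_iff_mem _).2 hf))
          (Ideal.Quotient.factor_surjective _)
      have h3 := (add_le_add_left h2 1).trans (h1.trans (dim_mvPS_le K d))
      generalize ringKrullDim (MvPowerSeries (Fin d) K ⧸ RingHom.ker e) = q at h3 ⊢
      induction q with
      | bot => exact WithBot.bot_lt_coe _
      | coe q =>
        induction q with
        | top => exact absurd h3 (by rw [not_le]; exact_mod_cast ENat.natCast_lt_top d)
        | coe q => exact_mod_cast h3
    obtain ⟨k, hk, y, hym, N, hN⟩ := exists_sop_mod (RingHom.ker e) (RingHom.ker_ne_top e) hdim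
    -- transfer
    have h1 : maximalIdeal S ^ (n * N) ≤ Ideal.span (Set.range fun i => e (y i)) := by
      rw [pow_mul]
      refine (Ideal.pow_right_mono hSn N).trans ?_
      rw [← Ideal.map_pow]
      refine (Ideal.map_mono hN).trans ?_
      rw [Ideal.map_sup, Ideal.map_span, ← Set.range_comp]
      refine sup_le ?_ le_rfl
      rw [Ideal.map_le_iff_le_comap]
      intro a ha
      rw [Ideal.mem_comap, RingHom.mem_ker.1 ha]
      exact zero_mem _
    choose z hz using fun i => surj (n * N + 1) (e (y i))
    have hzm : ∀ i, z i ∈ maximalIdeal D := by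
      intro i
      have h2 : e (y i) ∈ maximalIdeal S := hle (Ideal.mem_map_of_mem _ (hym i))
      have h3 : e (y i) - algebraMap D S (z i) ∈ maximalIdeal S := Ideal.pow_le_self (by omega) (hz i)
      have h4 : algebraMap D S (z i) ∈ maximalIdeal S := by
        have := sub_mem h2 h3
        simpa using this
      have := inj 1 (z i) (by simpa using h4)
      simpa using this
    have h2 : maximalIdeal D ^ (n * N) ≤ Ideal.span (Set.range z) ⊔ maximalIdeal D ^ (n * N + 1) := by
      intro a ha
      have ha' : algebraMap D S a ∈ maximalIdeal S ^ (n * N) := by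
        rw [hmap, ← Ideal.map_pow]; exact Ideal.mem_map_of_mem _ ha
      have h3 := h1 ha'
      rw [Ideal.mem_span_range_iff_exists_fun] at h3
      obtain ⟨c, hc⟩ := h3
      choose b hb using fun i => surj (n * N + 1) (c i)
      have h4 : algebraMap D S (a - ∑ i, b i * z i) ∈ maximalIdeal S ^ (n * N + 1) := by
        rw [map_sub, ← hc, map_sum, ← Finset.sum_sub_distrib]
        refine sum_mem fun i _ => ?_
        have : c i * e (y i) - algebraMap D S (b i * z i) =
          (c i - algebraMap D S (b i)) * e (y i) + algebraMap D S (b i) * (e (y i) - algebraMap D S (z i)) := by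
          rw [map_mul]; ring
        rw [this]
        exact add_mem (Ideal.mul_mem_right _ _ (hb i)) (Ideal.mul_mem_left _ _ (hz i))
      have h5 := inj _ _ h4
      have h6 : a = (∑ i, b i * z i) + (a - ∑ i, b i * z i) := by ring
      rw [h6]
      refine Submodule.add_mem_sup ?_ h5
      exact sum_mem fun i _ => Ideal.mul_mem_left _ _ (Ideal.subset_span ⟨i, rfl⟩)
    have h3 : maximalIdeal D ^ (n * N) ≤ Ideal.span (Set.range z) := by
      refine Submodule.le_of_le_smul_of_le_jacobson_bot (I := maximalIdeal D) (Ideal.fg_of_isNoetherianRing _)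
        (IsLocalRing.maximalIdeal_le_jacobson _) ?_
      rw [smul_eq_mul, ← pow_succ']
      exact h2
    have h4 := dim_le_of_pow_le z hzm h3
    have h5 := hd.trans h4
    have : d ≤ k := by exact_mod_cast h5
    omega
  have hfs : FaithfulSMul (MvPowerSeries (Fin d) K) S := (faithfulSMul_iff_algebraMap_injective _ _).2 hinj
  obtain ⟨⟨Q, hQ⟩⟩ := Ideal.nonempty_primesOver (S := S) (⊥ : Ideal (MvPowerSeries (Fin d) K))
  have hQ1 := hQ.1
  refine ⟨K, inferInstance, hK, S ⧸ Q, inferInstance, Ideal.Quotient.isDomain Q, (Ideal.Quotient.mk Q).comp e,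
    (Ideal.Quotient.mk Q).comp (algebraMap D S), ?_, ?_, fun i => ?_⟩
  · rw [RingHom.injective_iff_ker_eq_bot, ← RingHom.comap_ker, Ideal.mk_ker]
    exact hQ.2.over.symm
  · have h1 : e.IsIntegral := by
      have : Algebra.IsIntegral (MvPowerSeries (Fin d) K) S := inferInstance
      exact Algebra.isIntegral_def.1 this
    exact h1.trans _ _ (RingHom.isIntegral_of_surjective _ Ideal.Quotient.mk_surjective)
  · simp [heX]

theorem metaA {D : Type u} [CommRing D] [IsNoetherianRing D] [IsLocalRing D] [Algebra ℚ D]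
    {d : ℕ} (hd : (d : WithBot ℕ∞) ≤ ringKrullDim D) (x : Fin d → D)
    (hx : (Ideal.span (Set.range x)).radical = maximalIdeal D) :
    ∃ (K : Type u) (_ : Field K) (_ : CharZero K) (R₁ : Type u) (_ : CommRing R₁) (_ : IsDomain R₁)
      (e : MvPowerSeries (Fin d) K →+* R₁) (φ : D →+* R₁), Function.Injective e ∧ e.IsIntegral ∧
      ∀ i, φ (x i) = e (MvPowerSeries.X i) := by
  let a : Algebra ℚ (AdicCompletion (maximalIdeal D) D) := ((algebraMap D _).comp (algebraMap ℚ D)).toAlgebra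
  exact metaA_aux (S := AdicCompletion (maximalIdeal D) D) AdicCompletion.maximalIdeal_eq_map
    completion_surj completion_inj hd x hx

/-- Reduction of finitely many elements of a local domain containing the rationals to characteristic `p`. -/
theorem META {D : Type u} [CommRing D] [IsNoetherianRing D] [IsLocalRing D] [Algebra ℚ D]
    {d : ℕ} (hd : (d : WithBot ℕ∞) ≤ ringKrullDim D) {σ : Type u} [Finite σ] (s : σ → D) (w : Fin d → σ)
    (hx : (Ideal.span (Set.range fun i => s (w i))).radical = maximalIdeal D) :
    ∃ (p : ℕ) (_ : p.Prime) (E : Type u) (_ : CommRing E) (_ : IsDomain E) (_ : IsNoetherianRing E)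
      (_ : IsLocalRing E) (_ : CharP E p) (ψ : adjZ s →+* E), (d : WithBot ℕ∞) ≤ ringKrullDim E ∧
      (Ideal.span (Set.range fun i => ψ ⟨s (w i), adjZ_mem s (w i)⟩)).radical = maximalIdeal E := by
  obtain ⟨K, _, _, R₁, _, _, e, φ, he, hintegral, hφ⟩ := metaA hd _ hx
  obtain ⟨p, hp, E, i1, i2, i3, i4, i5, ψ, h1, h2⟩ := metaB e he hintegral (fun i => φ (s i)) w hφ
  have hmem : ∀ a : adjZ s, φ (adjZval s a) ∈ (adjZ (fun i => φ (s i))).toSubring := by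
    intro a
    have := adjZ_induction s ((adjZ (fun i => φ (s i))).toSubring.comap φ) (fun i => adjZ_mem _ i) a.1 a.2
    exact this
  let θ : adjZ s →+* adjZ (fun i => φ (s i)) := (φ.comp (adjZval s)).codRestrict (adjZ (fun i => φ (s i))).toSubring hmem
  exact ⟨p, hp, E, i1, i2, i3, i4, i5, ψ.comp θ, h1, h2⟩

end PartB10

section PartC1
open IsLocalRing

theorem exists_prime_dim {R : Type*} [CommRing R] (P : Ideal R) {d : ℕ}
    (h : ((d + 1 : ℕ) : WithBot ℕ∞) ≤ ringKrullDim (R ⧸ P)) :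
    ∃ P1 : Ideal R, P1.IsPrime ∧ P ≤ P1 ∧ (∃ c ∈ P1, c ∉ P) ∧ (d : WithBot ℕ∞) ≤ ringKrullDim (R ⧸ P1) := by
  rw [ringKrullDim_quotient, Order.le_krullDim_iff] at h
  obtain ⟨l, hl⟩ := h
  have hmono : StrictMono l := l.strictMono
  have h1 : 1 < l.length + 1 := by omega
  refine ⟨(l ⟨1, h1⟩).1.asIdeal, (l ⟨1, h1⟩).1.isPrime, (l ⟨1, h1⟩).2, ?_, ?_⟩
  · have h01 : l 0 < l ⟨1, h1⟩ := hmono (Fin.mk_lt_mk.2 Nat.zero_lt_one)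
    have h2 : (l 0).1.asIdeal < (l ⟨1, h1⟩).1.asIdeal := h01
    obtain ⟨c, hc, hc'⟩ := SetLike.exists_of_lt h2
    exact ⟨c, hc, fun h => hc' ((l 0).2 h)⟩
  · rw [ringKrullDim_quotient, Order.le_krullDim_iff]
    refine ⟨⟨d, fun i => ⟨(l ⟨i.1 + 1, by omega⟩).1, ?_⟩, fun i => ?_⟩, rfl⟩
    · have : l ⟨1, h1⟩ ≤ l ⟨i.1 + 1, by omega⟩ := hmono.monotone (Fin.mk_le_mk.2 (by omega))
      exact this
    · have : l ⟨i.castSucc.1 + 1, by simp; omega⟩ < l ⟨i.succ.1 + 1, by simp; omega⟩ := hmono (Fin.mk_lt_mk.2 (by simp))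
      exact this

theorem pow_diff_le (d n m k : ℕ) (h : n ≤ m + k) (hm : m ≤ n) : n ^ (d + 1) ≤ m ^ (d + 1) + (d + 1) * k * n ^ d := by
  induction d with
  | zero => simpa using h
  | succ d ih =>
    have h1 : n * m ^ (d + 1) ≤ m * m ^ (d + 1) + k * n ^ (d + 1) := by
      have : m ^ (d + 1) ≤ n ^ (d + 1) := Nat.pow_le_pow_left hm _
      nlinarith [Nat.mul_le_mul_right (m ^ (d + 1)) h, Nat.mul_le_mul_left k this]
    calc n ^ (d + 1 + 1) = n * n ^ (d + 1) := by ring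
      _ ≤ n * (m ^ (d + 1) + (d + 1) * k * n ^ d) := Nat.mul_le_mul_left _ ih
      _ = n * m ^ (d + 1) + (d + 1) * k * n ^ (d + 1) := by ring
      _ ≤ m * m ^ (d + 1) + k * n ^ (d + 1) + (d + 1) * k * n ^ (d + 1) := by gcongr
      _ = _ := by ring

theorem length_colon {R : Type*} [CommRing R] (J : Ideal R) (c : R) (J1 J2 : Ideal R)
    (h1 : ∀ a, c * a ∈ J → a ∈ J1) (h2 : J ≤ J2) (hc : c ∈ J2) :
    Module.length R (R ⧸ J1) + Module.length R (R ⧸ J2) ≤ Module.length R (R ⧸ J) := by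
  let C : Ideal R := Submodule.comap (LinearMap.mulLeft R c) J
  have hC : C ≤ J1 := fun a ha => h1 a ha
  let f : (R ⧸ C) →ₗ[R] (R ⧸ J) := Submodule.mapQ C J (LinearMap.mulLeft R c) le_rfl
  let g : (R ⧸ J) →ₗ[R] (R ⧸ (J ⊔ Ideal.span {c})) := Submodule.factor le_sup_left
  have hf : Function.Injective f := by
    rw [injective_iff_map_eq_zero]
    intro a ha
    obtain ⟨a, rfl⟩ := Submodule.Quotient.mk_surjective _ a
    have ha' : c * a ∈ J := (Submodule.Quotient.mk_eq_zero _).1 ha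
    exact (Submodule.Quotient.mk_eq_zero _).2 ha'
  have hfg : Function.Exact f g := by
    intro y
    obtain ⟨y, rfl⟩ := Submodule.Quotient.mk_surjective _ y
    constructor
    · intro h
      have h' : y ∈ J ⊔ Ideal.span {c} := (Submodule.Quotient.mk_eq_zero _).1 h
      obtain ⟨j, hj, w, hw, rfl⟩ := Submodule.mem_sup.1 h'
      obtain ⟨a, rfl⟩ := Ideal.mem_span_singleton'.1 hw
      refine ⟨Submodule.Quotient.mk a, ?_⟩
      change Submodule.Quotient.mk (c * a) = _
      rw [Submodule.Quotient.eq]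
      have : c * a - (j + a * c) = -j := by ring
      rw [this]; exact neg_mem hj
    · rintro ⟨a, ha⟩
      obtain ⟨a, rfl⟩ := Submodule.Quotient.mk_surjective _ a
      rw [← ha]
      change Submodule.Quotient.mk (c * a) = (0 : R ⧸ (J ⊔ Ideal.span {c}))
      rw [Submodule.Quotient.mk_eq_zero]
      exact Submodule.mem_sup_right (Ideal.mem_span_singleton'.2 ⟨a, mul_comm _ _⟩)
  rw [Module.length_eq_add_of_exact f g hf (Submodule.factor_surjective _) hfg]
  gcongr
  · exact Module.length_le_of_surjective (Submodule.factor hC) (Submodule.factor_surjective _)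
  · have : J ⊔ Ideal.span {c} ≤ J2 := sup_le h2 ((Ideal.span_singleton_le_iff_mem _).2 hc)
    exact Module.length_le_of_surjective (Submodule.factor this) (Submodule.factor_surjective _)

theorem artin_rees_colon {R : Type*} [CommRing R] [IsNoetherianRing R] (m P : Ideal R) [P.IsPrime] (c : R) (hc : c ∉ P) :
    ∃ k, ∀ n a, c * a ∈ P ⊔ m ^ n → a ∈ P ⊔ m ^ (n - k) := by
  obtain ⟨k, hk⟩ := Ideal.exists_pow_inf_eq_pow_smul m (Submodule.span R {(Ideal.Quotient.mk P c : R ⧸ P)})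
  have key : ∀ (n : ℕ) (b : R), (Ideal.Quotient.mk P b) ∈ (m ^ n • ⊤ : Submodule R (R ⧸ P)) ↔ b ∈ P ⊔ m ^ n := by
    intro n b
    rw [Ideal.smul_top_eq_map]
    change Ideal.Quotient.mk P b ∈ (m ^ n).map (Ideal.Quotient.mk P) ↔ _
    rw [← Ideal.mem_comap, Ideal.comap_map_of_surjective' _ Ideal.Quotient.mk_surjective, Ideal.mk_ker, sup_comm]
  refine ⟨k, fun n a ha => ?_⟩
  by_cases hn : n < k
  · rw [Nat.sub_eq_zero_of_le hn.le]; simp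
  push Not at hn
  have h1 : Ideal.Quotient.mk P (c * a) ∈ (m ^ n • ⊤ ⊓ Submodule.span R {(Ideal.Quotient.mk P c : R ⧸ P)} : Submodule R (R ⧸ P)) := by
    refine ⟨(key _ _).2 ha, Submodule.mem_span_singleton.2 ⟨a, ?_⟩⟩
    rw [mul_comm]; rfl
  rw [hk n hn] at h1
  have h2 := Submodule.smul_mono le_rfl inf_le_right h1
  rw [Submodule.mem_smul_span_singleton] at h2
  obtain ⟨b, hb, hbc⟩ := h2
  have h3 : Ideal.Quotient.mk P (b * c) = Ideal.Quotient.mk P (c * a) := hbc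
  rw [Ideal.Quotient.eq] at h3
  have h4 : b - a ∈ P := by
    have : b * c - c * a = (b - a) * c := by ring
    rw [this] at h3
    exact ((‹P.IsPrime›).mem_or_mem h3).resolve_right hc
  have : a = -(b - a) + b := by ring
  rw [this]
  exact Submodule.add_mem_sup (neg_mem h4) hb

theorem HS {R : Type*} [CommRing R] [IsNoetherianRing R] [IsLocalRing R] (d : ℕ) : ∀ (P : Ideal R), P.IsPrime →
    (d : WithBot ℕ∞) ≤ ringKrullDim (R ⧸ P) →
    ∃ A : ℕ, ∀ n, 0 < n → ((n ^ d : ℕ) : ℕ∞) ≤ A * Module.length R (R ⧸ (P ⊔ maximalIdeal R ^ n)) := by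
  induction d with
  | zero =>
    intro P hP _
    refine ⟨1, fun n hn => ?_⟩
    have : P ⊔ maximalIdeal R ^ n ≠ ⊤ := by
      intro h
      have h2 : P ⊔ maximalIdeal R ^ n ≤ maximalIdeal R :=
        sup_le (le_maximalIdeal hP.ne_top) (Ideal.pow_le_self hn.ne')
      rw [h, top_le_iff] at h2
      exact Ideal.IsPrime.ne_top inferInstance h2
    have : Nontrivial (R ⧸ (P ⊔ maximalIdeal R ^ n)) := Ideal.Quotient.nontrivial_iff.mpr this
    have h1 : 0 < Module.length R (R ⧸ (P ⊔ maximalIdeal R ^ n)) := Module.length_pos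
    simpa using Order.one_le_iff_pos.2 h1
  | succ d ih =>
    intro P hP hd
    obtain ⟨P1, hP1, hle, ⟨c, hc1, hc⟩, hd1⟩ := exists_prime_dim P hd
    obtain ⟨A, hA⟩ := ih P1 hP1 hd1
    obtain ⟨k0, hk0⟩ := artin_rees_colon (maximalIdeal R) P c hc
    set k := k0 + 1 with hkdef
    have hk : ∀ n a, c * a ∈ P ⊔ maximalIdeal R ^ n → a ∈ P ⊔ maximalIdeal R ^ (n - k) := fun n a h =>
      (sup_le_sup_left (Ideal.pow_le_pow_right (show n - k ≤ n - k0 by omega)) P : P ⊔ maximalIdeal R ^ (n - k0) ≤ _) (hk0 n a h)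
    refine ⟨(d + 1) * k * A, fun n => ?_⟩
    induction n using Nat.strong_induction_on with
    | _ n ihn =>
      intro hn
      have hrec := length_colon (P ⊔ maximalIdeal R ^ n) c (P ⊔ maximalIdeal R ^ (n - k)) (P1 ⊔ maximalIdeal R ^ n)
        (hk n) (sup_le_sup_right hle _) (Ideal.mem_sup_left hc1)
      have h1 : (((n - k) ^ (d + 1) : ℕ) : ℕ∞) ≤
          ((d + 1) * k * A : ℕ) * Module.length R (R ⧸ (P ⊔ maximalIdeal R ^ (n - k))) := by
        rcases Nat.eq_zero_or_pos (n - k) with h0 | h0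
        · rw [h0]; simp
        · exact ihn _ (by omega) h0
      have h2 := hA n hn
      calc ((n ^ (d + 1) : ℕ) : ℕ∞) ≤ (((n - k) ^ (d + 1) + (d + 1) * k * n ^ d : ℕ) : ℕ∞) := by
            exact_mod_cast pow_diff_le d n (n - k) k (by omega) (by omega)
        _ = (((n - k) ^ (d + 1) : ℕ) : ℕ∞) + ((d + 1) * k : ℕ) * ((n ^ d : ℕ) : ℕ∞) := by push_cast; ring
        _ ≤ ((d + 1) * k * A : ℕ) * Module.length R (R ⧸ (P ⊔ maximalIdeal R ^ (n - k))) +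
            ((d + 1) * k : ℕ) * (A * Module.length R (R ⧸ (P1 ⊔ maximalIdeal R ^ n))) := by gcongr
        _ = ((d + 1) * k * A : ℕ) * (Module.length R (R ⧸ (P ⊔ maximalIdeal R ^ (n - k))) +
             Module.length R (R ⧸ (P1 ⊔ maximalIdeal R ^ n))) := by push_cast; ring
        _ ≤ _ := by gcongr

end PartC1

section PartC2
open IsLocalRing

/-- lengths of quotients by powers of parameters -/
noncomputable def lenP {D : Type u} [CommRing D] {d : ℕ} (x : Fin d → D) (t : Fin d → ℕ) : ℕ∞ :=
  Module.length D (D ⧸ powerIdeal x t)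

theorem powerIdeal_smul_top {D : Type u} [CommRing D] {d : ℕ} (x : Fin d → D) (t : Fin d → ℕ) :
    powerIdeal x t • (⊤ : Submodule D D) = powerIdeal x t := by
  simp

theorem lenP_eq {D : Type u} [CommRing D] {d : ℕ} (x : Fin d → D) (t : Fin d → ℕ) :
    lenP x t = Module.length D (D ⧸ (powerIdeal x t • (⊤ : Submodule D D))) := by
  rw [powerIdeal_smul_top]; rfl

theorem lenP_mono {D : Type u} [CommRing D] {d : ℕ} (x : Fin d → D) (s t : Fin d → ℕ) (h : s ≤ t) :
    lenP x s ≤ lenP x t := by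
  rw [lenP_eq, lenP_eq]; exact len_mono x s t h

theorem lenP_sub {D : Type u} [CommRing D] {d : ℕ} (x : Fin d → D) (t : Fin d → ℕ) (i : Fin d) (a b : ℕ) :
    lenP x (Function.update t i (a + b)) ≤ lenP x (Function.update t i a) + lenP x (Function.update t i b) := by
  rw [lenP_eq, lenP_eq, lenP_eq]; exact len_sub x t i a b

section
variable {D : Type u} [CommRing D] [IsNoetherianRing D] [IsLocalRing D] {d : ℕ} (x : Fin d → D)

theorem lenP_one_ne_top (hx : (Ideal.span (Set.range x)).radical = maximalIdeal D) :
    lenP x (fun _ => 1) ≠ ⊤ := by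
  have h1 : powerIdeal x (fun _ => 1) = Ideal.span (Set.range x) := by simp [powerIdeal]
  unfold lenP
  rw [h1]
  have hart : IsArtinianRing (D ⧸ Ideal.span (Set.range x)) := by
    rw [isArtinianRing_iff_isNoetherianRing_krullDimLE_zero]
    refine ⟨inferInstance, ?_⟩
    rw [Ring.krullDimLE_zero_iff]
    intro Q hQ
    have h2 : (Q.comap (Ideal.Quotient.mk (Ideal.span (Set.range x)))).IsPrime := inferInstance
    have h3 : Ideal.span (Set.range x) ≤ Q.comap (Ideal.Quotient.mk (Ideal.span (Set.range x))) := by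
      intro a ha
      rw [Ideal.mem_comap, Ideal.Quotient.eq_zero_iff_mem.2 ha]; exact zero_mem _
    have h4 : Q.comap (Ideal.Quotient.mk (Ideal.span (Set.range x))) = maximalIdeal D := by
      apply le_antisymm (le_maximalIdeal h2.ne_top)
      rw [← hx]
      exact h2.radical_le_iff.2 h3
    have h5 : (Q.comap (Ideal.Quotient.mk (Ideal.span (Set.range x)))).IsMaximal := h4 ▸ maximalIdeal.isMaximal D
    obtain ⟨J, hJ, hQJ⟩ := Ideal.exists_le_maximal Q hQ.ne_top
    have h6 := h5.eq_of_le (Ideal.comap_ne_top _ hJ.ne_top) (Ideal.comap_mono hQJ)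
    rwa [Ideal.comap_injective_of_surjective _ Ideal.Quotient.mk_surjective h6]
  have : IsArtinian D (D ⧸ Ideal.span (Set.range x)) :=
    isArtinian_of_surjective_algebraMap (R := D ⧸ Ideal.span (Set.range x)) Ideal.Quotient.mk_surjective
  exact Module.length_ne_top

theorem lenP_ne_top (hx : (Ideal.span (Set.range x)).radical = maximalIdeal D) (t : Fin d → ℕ) (ht : ∀ i, 0 < t i) :
    lenP x t ≠ ⊤ := by
  have h := lam_const (lenP x) (lenP_sub x) t ht
  refine ne_top_of_le_ne_top ?_ h
  exact WithTop.mul_ne_top (ENat.natCast_ne_top _) (lenP_one_ne_top x hx)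

theorem POS [IsDomain D] (hd : (d : WithBot ℕ∞) ≤ ringKrullDim D)
    (hx : (Ideal.span (Set.range x)).radical = maximalIdeal D) :
    ∃ A : ℕ, ∀ s : Fin d → ℕ, (∀ i, 0 < s i) → ((∏ i, s i : ℕ) : ℕ∞) ≤ A * lenP x s := by
  have hxm : ∀ i, x i ∈ maximalIdeal D := fun i => hx ▸ Ideal.le_radical (Ideal.subset_span ⟨i, rfl⟩)
  have hd' : (d : WithBot ℕ∞) ≤ ringKrullDim (D ⧸ (⊥ : Ideal D)) := by
    rwa [ringKrullDim_eq_of_ringEquiv (RingEquiv.quotientBot D)]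
  obtain ⟨A, hA⟩ := HS d (⊥ : Ideal D) Ideal.isPrime_bot hd'
  refine ⟨A * 2 ^ d, fun s hs => ?_⟩
  let n := ∏ i, s i
  have hn : 0 < n := Finset.prod_pos fun i _ => hs i
  have hsn : ∀ i, s i ≤ n := fun i => Nat.le_of_dvd hn (Finset.dvd_prod_of_mem s (Finset.mem_univ i))
  have h1 := lam_sub (lenP x) (lenP_mono x) (lenP_sub x) 1 s (fun _ => n) hs (fun i => by simpa using hsn i)
  have h2 : ((n ^ d : ℕ) : ℕ∞) ≤ A * lenP x (fun _ => n) := by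
    refine (hA n hn).trans ?_
    gcongr
    have : powerIdeal x (fun _ => n) ≤ ⊥ ⊔ maximalIdeal D ^ n := by
      refine le_trans ?_ le_sup_right
      unfold powerIdeal
      rw [Ideal.span_le]
      rintro _ ⟨i, rfl⟩
      exact Ideal.pow_mem_pow (hxm i) n
    exact Module.length_le_of_surjective (Submodule.factor this) (Submodule.factor_surjective _)
  have hfin := lenP_ne_top x hx s hs
  have hfin2 := lenP_ne_top x hx (fun _ => n) (fun _ => hn)
  change ((n : ℕ) : ℕ∞) ≤ _
  generalize lenP x s = a at *
  generalize lenP x (fun _ => n) = b at *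
  lift a to ℕ using hfin
  lift b to ℕ using hfin2
  have hp : ∏ i : Fin d, (fun _ => n) i = n ^ d := by simp
  have h1' : (1 ^ d * n) * b ≤ ((1 + 1) ^ d * n ^ d) * a := by
    have := h1
    rw [hp] at this
    exact_mod_cast this
  have h2' : n ^ d ≤ A * b := by exact_mod_cast h2
  have h3 : n ≤ A * 2 ^ d * a := by
    have hpos : 0 < n ^ d := pow_pos hn d
    refine Nat.le_of_mul_le_mul_left ?_ hpos
    calc n ^ d * n ≤ A * b * n := Nat.mul_le_mul_right _ h2'
      _ = A * ((1 ^ d * n) * b) := by ring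
      _ ≤ A * (((1 + 1) ^ d * n ^ d) * a) := Nat.mul_le_mul_left _ h1'
      _ = n ^ d * (A * 2 ^ d * a) := by ring
  exact_mod_cast h3
end

end PartC2

section PartC3
open IsLocalRing

/-- explicit equations expressing a quasilength filtration of length `h` of `D^r / I_t D^r` -/
def Dat {D : Type u} [CommRing D] {d : ℕ} (x : Fin d → D) (t : Fin d → ℕ) (r h : ℕ) : Prop :=
  ∃ (u : Fin h → Fin r → D) (a : Fin h → Fin d → Fin h → D) (v : Fin h → Fin d → Fin d → Fin r → D)
    (a' : Fin r → Fin h → D) (v' : Fin r → Fin d → Fin r → D),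
    (∀ i j l, i ≤ l → a i j l = 0) ∧
    (∀ i j b, x j * u i b = ∑ l, a i j l * u l b + ∑ k, x k ^ t k * v i j k b) ∧
    (∀ b c, (if c = b then (1 : D) else 0) = ∑ l, a' b l * u l c + ∑ k, x k ^ t k * v' b k c)

theorem Dat.map {D E : Type u} [CommRing D] [CommRing E] (f : D →+* E) {d : ℕ} {x : Fin d → D} {t : Fin d → ℕ}
    {r h : ℕ} (H : Dat x t r h) : Dat (fun i => f (x i)) t r h := by
  obtain ⟨u, a, v, a', v', h1, h2, h3⟩ := H
  refine ⟨fun i b => f (u i b), fun i j l => f (a i j l), fun i j k b => f (v i j k b), fun b l => f (a' b l),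
    fun b k c => f (v' b k c), fun i j l hl => by simp [h1 i j l hl], fun i j b => ?_, fun b c => ?_⟩
  · have := congrArg f (h2 i j b)
    simpa using this
  · have := congrArg f (h3 b c)
    simp only [apply_ite f, map_one, map_zero, map_add, map_sum, map_mul, map_pow] at this
    exact this

theorem length_step {D : Type*} [CommRing D] {M : Type*} [AddCommGroup M] [Module D M] (I : Ideal D)
    (B : Submodule D M) (m : M) (hm : ∀ a ∈ I, a • m ∈ B) :
    Module.length D (M ⧸ B) ≤ Module.length D (D ⧸ I) + Module.length D (M ⧸ (B ⊔ Submodule.span D {m})) := by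
  let f : (D ⧸ I) →ₗ[D] (M ⧸ B) := Submodule.liftQ I (LinearMap.toSpanSingleton D (M ⧸ B) (Submodule.Quotient.mk m)) (by
    intro a ha
    rw [LinearMap.mem_ker, LinearMap.toSpanSingleton_apply, ← Submodule.Quotient.mk_smul, Submodule.Quotient.mk_eq_zero]
    exact hm a ha)
  refine length_le_of_exact f (Submodule.factor (le_sup_left : B ≤ B ⊔ Submodule.span D {m})) (Submodule.factor_surjective _) ?_
  intro y hy
  obtain ⟨y, rfl⟩ := Submodule.Quotient.mk_surjective _ y
  have h' : y ∈ B ⊔ Submodule.span D {m} := (Submodule.Quotient.mk_eq_zero _).1 hy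
  obtain ⟨j, hj, w, hw, rfl⟩ := Submodule.mem_sup.1 h'
  obtain ⟨a, rfl⟩ := Submodule.mem_span_singleton.1 hw
  refine ⟨Submodule.Quotient.mk a, ?_⟩
  change (Submodule.Quotient.mk (a • m) : M ⧸ B) = _
  refine (Submodule.Quotient.eq B).2 ?_
  have : a • m - (j + a • m) = -j := by abel
  rw [this]; exact neg_mem hj

theorem Dat.length_le {D : Type u} [CommRing D] {d : ℕ} {x : Fin d → D} {t : Fin d → ℕ}
    {r h : ℕ} (H : Dat x t r h) : (r : ℕ∞) * lenP x t ≤ h * lenP x (fun _ => 1) := by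
  obtain ⟨u, a, v, a', v', h1, h2, h3⟩ := H
  let J : Submodule D (Fin r → D) := powerIdeal x t • ⊤
  let c : ℕ → Submodule D (Fin r → D) := fun i => J ⊔ Submodule.span D {w | ∃ l : Fin h, l.1 < i ∧ u l = w}
  have hJ : ∀ (w : Fin d → Fin r → D), (∑ k, x k ^ t k • w k) ∈ J := fun w => sum_mem fun k _ =>
    Submodule.smul_mem_smul (Ideal.subset_span ⟨k, rfl⟩) trivial
  have hc0 : c 0 = J := by simp [c]
  have hch : c h = ⊤ := by
    rw [eq_top_iff]
    intro w _
    have : w = ∑ b, w b • (Pi.single b 1 : Fin r → D) := by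
      rw [← pi_eq_sum_univ' w]
      
    rw [this]
    refine sum_mem fun b _ => Submodule.smul_mem _ _ ?_
    have hb : (Pi.single b 1 : Fin r → D) = (∑ k, x k ^ t k • v' b k) + ∑ l, a' b l • u l := by
      funext c
      have := h3 b c
      simp only [Pi.single_apply, Pi.add_apply, Finset.sum_apply, Pi.smul_apply, smul_eq_mul]
      rw [this, add_comm]
    rw [hb]
    refine Submodule.add_mem_sup (hJ _) (sum_mem fun l _ => Submodule.smul_mem _ _ (Submodule.subset_span ⟨l, l.2, rfl⟩))
  have hstep : ∀ i : Fin h, c (i + 1) ≤ c i ⊔ Submodule.span D {u i} := by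
    intro i
    refine sup_le (le_sup_left.trans le_sup_left) ?_
    rw [Submodule.span_le]
    rintro _ ⟨l, hl, rfl⟩
    rcases Nat.lt_succ_iff_lt_or_eq.1 hl with hl | hl
    · exact Submodule.mem_sup_left (Submodule.mem_sup_right (Submodule.subset_span ⟨l, hl, rfl⟩))
    · rw [Fin.ext hl]
      exact Submodule.mem_sup_right (Submodule.mem_span_singleton_self _)
  have hkill : ∀ i : Fin h, ∀ b ∈ powerIdeal x (fun _ => 1), b • u i ∈ c i := by
    intro i b hb
    have : powerIdeal x (fun _ => 1) ≤ (c i).comap (LinearMap.toSpanSingleton D _ (u i)) := by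
      unfold powerIdeal
      refine Submodule.span_le.2 ?_
      rintro _ ⟨j, rfl⟩
      change (x j ^ 1) • u i ∈ c i
      have hj : (x j ^ 1) • u i = (∑ k, x k ^ t k • v i j k) + ∑ l, a i j l • u l := by
        funext c
        have := h2 i j c
        simp only [Pi.add_apply, Finset.sum_apply, Pi.smul_apply, smul_eq_mul, pow_one]
        rw [this, add_comm]
      rw [hj]
      refine Submodule.add_mem_sup (hJ _) (sum_mem fun l _ => ?_)
      by_cases hl : i ≤ l
      · rw [h1 i j l hl, zero_smul]; exact zero_mem _
      · exact Submodule.smul_mem _ _ (Submodule.subset_span ⟨l, not_le.1 hl, rfl⟩)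
    exact this hb
  have hlen : ∀ k, k ≤ h → Module.length D ((Fin r → D) ⧸ c (h - k)) ≤ k * lenP x (fun _ => 1) := by
    intro k
    induction k with
    | zero =>
      intro _
      have : Subsingleton ((Fin r → D) ⧸ c (h - 0)) := by
        rw [Nat.sub_zero, hch]; infer_instance
      rw [Module.length_eq_zero]; simp
    | succ k ih =>
      intro hk
      have hi : h - (k + 1) < h := by omega
      have e1 : h - k = h - (k + 1) + 1 := by omega
      have h5 := length_step (powerIdeal x (fun _ => 1)) (c (h - (k + 1))) (u ⟨_, hi⟩) (hkill ⟨_, hi⟩)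
      have h6 : Module.length D ((Fin r → D) ⧸ (c (h - (k + 1)) ⊔ Submodule.span D {u ⟨_, hi⟩})) ≤
          Module.length D ((Fin r → D) ⧸ c (h - k)) := by
        have h7 : c (h - k) ≤ c (h - (k + 1)) ⊔ Submodule.span D {u ⟨_, hi⟩} := by
          rw [e1]; exact hstep ⟨_, hi⟩
        exact Module.length_le_of_surjective (Submodule.factor h7) (Submodule.factor_surjective _)
      calc _ ≤ _ := h5
        _ ≤ lenP x (fun _ => 1) + k * lenP x (fun _ => 1) := add_le_add le_rfl (h6.trans (ih (by omega)))
        _ = _ := by push_cast; ring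
  have h8 := hlen h le_rfl
  rw [Nat.sub_self, hc0] at h8
  refine le_trans ?_ h8
  let g : (Fin r → D) →ₗ[D] (Fin r → D ⧸ powerIdeal x t) := LinearMap.pi fun i => (Submodule.mkQ _) ∘ₗ LinearMap.proj i
  have hg : Function.Surjective g := by
    intro w
    choose z hz using fun i => Submodule.Quotient.mk_surjective _ (w i)
    exact ⟨z, funext hz⟩
  have hJg : J ≤ LinearMap.ker g := by
    refine (powerIdeal_smul_le x t _).2 fun i m => ?_
    rw [LinearMap.mem_ker]
    funext j
    change Submodule.Quotient.mk (x i ^ t i * m j) = (0 : D ⧸ powerIdeal x t)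
    rw [Submodule.Quotient.mk_eq_zero]
    exact Ideal.mul_mem_right _ _ (Ideal.subset_span ⟨i, rfl⟩)
  have h9 := Module.length_le_of_surjective (R := D) (J.liftQ g hJg) (by
    intro w; obtain ⟨z, hz⟩ := hg w; exact ⟨Submodule.Quotient.mk z, hz⟩)
  rw [Module.length_pi] at h9
  simpa [lenP] using h9

theorem no_contract (S : Set ℝ) (hne : S.Nonempty) (ε : ℝ) (hε : 0 < ε) (hS : ∀ a ∈ S, ε ≤ a) (θ : ℝ) (hθ0 : 0 < θ)
    (hθ : θ < 1) (h : ∀ a ∈ S, ∃ b ∈ S, b ≤ θ * a) : False := by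
  have hbdd : BddBelow S := ⟨ε, fun a ha => hS a ha⟩
  have h1 : ε ≤ sInf S := le_csInf hne hS
  have h2 : sInf S / θ ≤ sInf S := by
    refine le_csInf hne fun a ha => ?_
    obtain ⟨b, hb, hba⟩ := h a ha
    rw [div_le_iff₀ hθ0]
    linarith [csInf_le hbdd hb]
  rw [div_le_iff₀ hθ0] at h2
  nlinarith

theorem exists_N (d h : ℕ) : ∃ N : ℕ, 0 < N ∧ (2 * h) * (N + 1) ^ d ≤ (2 * h + 1) * N ^ d := by
  have h1 : Filter.Tendsto (fun n : ℕ => (1 + 1 / ((n : ℝ) + 1)) ^ d) Filter.atTop (nhds ((1 + 0) ^ d)) :=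
    ((tendsto_const_nhds).add tendsto_one_div_add_atTop_nhds_zero_nat).pow d
  have h2 := h1.const_mul (2 * (h : ℝ))
  have h3 : 2 * (h : ℝ) * (1 + 0) ^ d < 2 * h + 1 := by simp
  obtain ⟨n, hn⟩ := (h2.eventually (gt_mem_nhds h3)).exists
  refine ⟨n + 1, by omega, ?_⟩
  have hpos : (0 : ℝ) < ((n : ℝ) + 1) ^ d := by positivity
  have h4 : (1 + 1 / ((n : ℝ) + 1)) ^ d = ((n : ℝ) + 1 + 1) ^ d / ((n : ℝ) + 1) ^ d := by
    rw [← div_pow]; congr 1; field_simp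
  rw [h4, ← mul_div_assoc, div_lt_iff₀ hpos] at hn
  have := hn.le
  exact_mod_cast this

theorem CORE_p {D : Type u} [CommRing D] [IsDomain D] [IsNoetherianRing D] [IsLocalRing D] {p : ℕ} (hp : p.Prime)
    [CharP D p] {d : ℕ} (hd : (d : WithBot ℕ∞) ≤ ringKrullDim D) {x : Fin d → D}
    (hx : (Ideal.span (Set.range x)).radical = maximalIdeal D) {t : Fin d → ℕ} (ht : ∀ i, 0 < t i)
    {r h : ℕ} (H : Dat x t r h) : r * ∏ i, t i ≤ h := by
  have : Fact p.Prime := ⟨hp⟩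
  by_contra hlt
  push Not at hlt
  obtain ⟨A, hA⟩ := POS x hd hx
  have hfin := lenP_ne_top x hx
  -- real valued normalised length
  let μ : (Fin d → ℕ) → ℝ := fun s => ((lenP x s).toNat : ℝ) / (∏ i, s i : ℕ)
  have hcast : ∀ s : Fin d → ℕ, (∀ i, 0 < s i) → ((lenP x s).toNat : ℕ∞) = lenP x s := fun s hs =>
    ENat.natCast_toNat (hfin s hs)
  have hpos : ∀ s : Fin d → ℕ, (∀ i, 0 < s i) → (0 : ℝ) < (∏ i, s i : ℕ) := fun s hs => by
    exact_mod_cast Finset.prod_pos fun i _ => hs i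
  have hA0 : 0 < A := by
    rcases Nat.eq_zero_or_pos A with h0 | h0
    · have := hA (fun _ => 1) (fun _ => Nat.one_pos)
      rw [h0] at this
      simp at this
    · exact h0
  obtain ⟨N, hN0, hN⟩ := exists_N d h
  have hrec : ∀ s : Fin d → ℕ, (∀ i, 0 < s i) → ∃ q : ℕ, 0 < q ∧
      (r * N ^ d * (∏ i, s i)) * (lenP x (fun i => t i * q)).toNat ≤ (h * (N + 1) ^ d * q ^ d) * (lenP x s).toNat := by
    intro s hs
    obtain ⟨e, he⟩ : ∃ e : ℕ, ∀ i, N * s i ≤ p ^ e := by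
      refine ⟨∑ i, N * s i, fun i => ?_⟩
      refine le_trans ?_ (Nat.lt_pow_self hp.one_lt).le
      exact Finset.single_le_sum (f := fun i => N * s i) (fun _ _ => Nat.zero_le _) (Finset.mem_univ i)
    have hq : 0 < p ^ e := pow_pos hp.pos e
    refine ⟨p ^ e, hq, ?_⟩
    have h1 := (H.map (iterateFrobenius D p e)).length_le
    have h2 : lenP (fun i => iterateFrobenius D p e (x i)) t = lenP x (fun i => t i * p ^ e) := by
      have : powerIdeal (fun i => iterateFrobenius D p e (x i)) t = powerIdeal x (fun i => t i * p ^ e) := by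
        unfold powerIdeal
        congr 2
        funext i
        beta_reduce
        rw [iterateFrobenius_def, ← pow_mul, mul_comm]
      unfold lenP
      rw [this]
    have h3 : lenP (fun i => iterateFrobenius D p e (x i)) (fun _ => 1) = lenP x (fun _ => p ^ e) := by
      have : powerIdeal (fun i => iterateFrobenius D p e (x i)) (fun _ => 1) = powerIdeal x (fun _ => p ^ e) := by
        unfold powerIdeal
        congr 2
        funext i
        beta_reduce
        rw [iterateFrobenius_def, pow_one]
      unfold lenP
      rw [this]
    rw [h2, h3] at h1
    have h4 := lam_sub (lenP x) (lenP_mono x) (lenP_sub x) N s (fun _ => p ^ e) hs he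
    rw [← hcast (fun _ => p ^ e) (fun _ => hq), ← hcast s hs] at h4
    rw [← hcast (fun _ => p ^ e) (fun _ => hq), ← hcast (fun i => t i * p ^ e) (fun i => Nat.mul_pos (ht i) hq)] at h1
    have h1' : r * (lenP x (fun i => t i * p ^ e)).toNat ≤ h * (lenP x (fun _ => p ^ e)).toNat := by exact_mod_cast h1
    have hprod : ∏ i : Fin d, (fun _ => p ^ e) i = (p ^ e) ^ d := by simp
    rw [hprod] at h4
    have h4' : (N ^ d * ∏ i, s i) * (lenP x (fun _ => p ^ e)).toNat ≤ ((N + 1) ^ d * (p ^ e) ^ d) * (lenP x s).toNat := by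
      exact_mod_cast h4
    calc _ = (N ^ d * ∏ i, s i) * (r * (lenP x (fun i => t i * p ^ e)).toNat) := by ring
      _ ≤ (N ^ d * ∏ i, s i) * (h * (lenP x (fun _ => p ^ e)).toNat) := Nat.mul_le_mul_left _ h1'
      _ = h * ((N ^ d * ∏ i, s i) * (lenP x (fun _ => p ^ e)).toNat) := by ring
      _ ≤ h * (((N + 1) ^ d * (p ^ e) ^ d) * (lenP x s).toNat) := Nat.mul_le_mul_left _ h4'
      _ = _ := by ring
  refine no_contract {a | ∃ s : Fin d → ℕ, (∀ i, 0 < s i) ∧ μ s = a} ⟨_, fun _ => 1, fun _ => Nat.one_pos, rfl⟩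
    (1 / A) (by positivity) ?_ ((2 * h + 1) / (2 * h + 2)) (by positivity) (by rw [div_lt_one (by positivity)]; linarith) ?_
  · rintro _ ⟨s, hs, rfl⟩
    have h1 := hA s hs
    rw [← hcast s hs] at h1
    have h1' : ∏ i, s i ≤ A * (lenP x s).toNat := by exact_mod_cast h1
    simp only [μ]
    rw [div_le_div_iff₀ (by exact_mod_cast hA0) (hpos s hs)]
    have : ((∏ i, s i : ℕ) : ℝ) ≤ A * ((lenP x s).toNat : ℝ) := by exact_mod_cast h1'
    linarith
  · rintro _ ⟨s, hs, rfl⟩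
    obtain ⟨q, hq, hqs⟩ := hrec s hs
    refine ⟨_, ⟨fun i => t i * q, fun i => Nat.mul_pos (ht i) hq, rfl⟩, ?_⟩
    have hprod : ∏ i, (t i * q) = (∏ i, t i) * q ^ d := by
      rw [Finset.prod_mul_distrib]; simp
    simp only [μ]
    rw [hprod, ← mul_div_assoc, div_mul_eq_mul_div, div_div, div_le_div_iff₀ (by
      have := hpos t ht
      have : (0 : ℝ) < q := by exact_mod_cast hq
      push_cast at *; positivity) (by
      have := hpos s hs
      positivity)]
    set T := ∏ i, t i with hT
    set S := ∏ i, s i with hSdef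
    set a := (lenP x (fun i => t i * q)).toNat
    set b := (lenP x s).toNat
    have key : a * ((2 * h + 2) * S) ≤ (2 * h + 1) * b * (T * q ^ d) := by
      have hNd : 0 < N ^ d := pow_pos hN0 d
      refine Nat.le_of_mul_le_mul_left ?_ hNd
      rcases Nat.eq_zero_or_pos r with hr | hr
      · rw [hr] at hlt; simp at hlt
      have hTpos : 0 < T := Finset.prod_pos fun i _ => ht i
      -- bound on twice h plus two
      calc N ^ d * (a * ((2 * h + 2) * S)) ≤ N ^ d * (a * ((2 * (r * T)) * S)) := by
            gcongr; omega
        _ = 2 * T * ((r * N ^ d * S) * a) := by ring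
        _ ≤ 2 * T * ((h * (N + 1) ^ d * q ^ d) * b) := Nat.mul_le_mul_left _ hqs
        _ = ((2 * h) * (N + 1) ^ d) * (T * q ^ d * b) := by ring
        _ ≤ ((2 * h + 1) * N ^ d) * (T * q ^ d * b) := Nat.mul_le_mul_right _ hN
        _ = _ := by ring
    exact_mod_cast key

theorem CORE_0 {D : Type u} [CommRing D] [IsDomain D] [IsNoetherianRing D] [IsLocalRing D] [Algebra ℚ D]
    {d : ℕ} (hd : (d : WithBot ℕ∞) ≤ ringKrullDim D) {x : Fin d → D}
    (hx : (Ideal.span (Set.range x)).radical = maximalIdeal D) {t : Fin d → ℕ} (ht : ∀ i, 0 < t i)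
    {r h : ℕ} (H : Dat x t r h) : r * ∏ i, t i ≤ h := by
  obtain ⟨u, a, v, a', v', h1, h2, h3⟩ := H
  let σ₀ := Fin d ⊕ (Fin h × Fin r) ⊕ (Fin h × Fin d × Fin h) ⊕ (Fin h × Fin d × Fin d × Fin r) ⊕ (Fin r × Fin h) ⊕
    (Fin r × Fin d × Fin r)
  let s₀ : σ₀ → D := Sum.elim x (Sum.elim (fun z => u z.1 z.2) (Sum.elim (fun z => a z.1 z.2.1 z.2.2)
    (Sum.elim (fun z => v z.1 z.2.1 z.2.2.1 z.2.2.2) (Sum.elim (fun z => a' z.1 z.2) (fun z => v' z.1 z.2.1 z.2.2)))))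
  let s : ULift.{u} σ₀ → D := fun z => s₀ z.down
  let w : Fin d → ULift.{u} σ₀ := fun i => ⟨Sum.inl i⟩
  obtain ⟨p, hp, E, i1, i2, i3, i4, i5, ψ, hdE, hxE⟩ := META hd s w hx
  have hinj := adjZval_injective s
  have H' : Dat (fun i => (⟨s (w i), adjZ_mem s (w i)⟩ : adjZ s)) t r h := by
    refine ⟨fun i b => ⟨u i b, adjZ_mem s ⟨Sum.inr (Sum.inl (i, b))⟩⟩,
      fun i j l => ⟨a i j l, adjZ_mem s ⟨Sum.inr (Sum.inr (Sum.inl (i, j, l)))⟩⟩,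
      fun i j k b => ⟨v i j k b, adjZ_mem s ⟨Sum.inr (Sum.inr (Sum.inr (Sum.inl (i, j, k, b))))⟩⟩,
      fun b l => ⟨a' b l, adjZ_mem s ⟨Sum.inr (Sum.inr (Sum.inr (Sum.inr (Sum.inl (b, l)))))⟩⟩,
      fun b k c => ⟨v' b k c, adjZ_mem s ⟨Sum.inr (Sum.inr (Sum.inr (Sum.inr (Sum.inr (b, k, c)))))⟩⟩, ?_, ?_, ?_⟩
    · intro i j l hl
      exact Subtype.ext (h1 i j l hl)
    · intro i j b
      apply hinj
      simp only [map_mul, map_add, map_sum, map_pow, adjZval_apply]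
      exact h2 i j b
    · intro b c
      apply hinj
      simp only [map_mul, map_add, map_sum, map_pow, adjZval_apply, apply_ite (adjZval s), map_one, map_zero]
      exact h3 b c
  exact CORE_p hp hdE hxE ht (H'.map ψ)

end PartC3

section PartC4
open IsLocalRing
open scoped TensorProduct nonZeroDivisors

section
variable (D : Type u) [CommRing D] [IsDomain D] (N : Type v) [AddCommGroup N] [Module D N] [Module.Finite D N]

theorem loc_inst : IsLocalizedModule D⁰ (TensorProduct.mk D (FractionRing D) N 1) :=
  (isLocalizedModule_iff_isBaseChange D⁰ (FractionRing D) _).2 (TensorProduct.isBaseChange D N (FractionRing D))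

theorem rank_basis : ∃ (B : Module.Basis (Fin (Module.finrank (FractionRing D) (FractionRing D ⊗[D] N)))
    (FractionRing D) (FractionRing D ⊗[D] N)) (n : Fin (Module.finrank (FractionRing D) (FractionRing D ⊗[D] N)) → N),
    ∀ i, B i = (1 : FractionRing D) ⊗ₜ[D] n i := by
  have := loc_inst D N
  let b := Module.finBasis (FractionRing D) (FractionRing D ⊗[D] N)
  choose z hz using fun i => IsLocalizedModule.surj D⁰ (TensorProduct.mk D (FractionRing D) N 1) (b i)
  have hu : ∀ i, IsUnit (algebraMap D (FractionRing D) ((z i).2 : D)) := fun i => IsLocalization.map_units _ (z i).2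
  refine ⟨b.isUnitSMul hu, fun i => (z i).1, fun i => ?_⟩
  rw [Module.Basis.isUnitSMul_apply, algebraMap_smul]
  exact hz i

theorem torsion_uniform (Q : Type*) [AddCommGroup Q] [Module D Q] [Module.Finite D Q]
    (h : ∀ q : Q, ∃ c : D, c ≠ 0 ∧ c • q = 0) : ∃ c : D, c ≠ 0 ∧ ∀ q : Q, c • q = 0 := by
  obtain ⟨m, g, hg⟩ := Module.Finite.exists_fin (R := D) (M := Q)
  choose c hc0 hc using fun i => h (g i)
  refine ⟨∏ i, c i, Finset.prod_ne_zero_iff.2 fun i _ => hc0 i, fun q => ?_⟩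
  have hq : q ∈ Submodule.span D (Set.range g) := hg ▸ trivial
  induction hq using Submodule.span_induction with
  | mem y hy =>
    obtain ⟨i, rfl⟩ := hy
    rw [← Finset.mul_prod_erase _ _ (Finset.mem_univ i), mul_comm, mul_smul, hc, smul_zero]
  | zero => simp
  | add y z _ _ hy hz => rw [smul_add, hy, hz, add_zero]
  | smul a y _ hy => rw [smul_comm, hy, smul_zero]

theorem rank_gens {r : ℕ} (hr : Module.finrank (FractionRing D) (FractionRing D ⊗[D] N) ≤ r) :
    ∃ (n : Fin r → N) (c : D), c ≠ 0 ∧ ∀ z : N, c • z ∈ Submodule.span D (Set.range n) := by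
  have := loc_inst D N
  obtain ⟨B, n, hB⟩ := rank_basis D N
  have h1 : ∀ q : N ⧸ Submodule.span D (Set.range n), ∃ c : D, c ≠ 0 ∧ c • q = 0 := by
    intro q
    obtain ⟨z, rfl⟩ := Submodule.Quotient.mk_surjective _ q
    obtain ⟨e, he⟩ := IsLocalization.exist_integer_multiples D⁰ Finset.univ (fun i => B.repr (1 ⊗ₜ z) i)
    choose a ha using fun i => he i (Finset.mem_univ i)
    have h2 : TensorProduct.mk D (FractionRing D) N 1 ((e : D) • z) =
        TensorProduct.mk D (FractionRing D) N 1 (∑ i, a i • n i) := by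
      rw [map_smul, map_sum]
      have h3 : TensorProduct.mk D (FractionRing D) N 1 z = ∑ i, B.repr (1 ⊗ₜ z) i • B i := (B.sum_repr _).symm
      rw [h3, Finset.smul_sum]
      refine Finset.sum_congr rfl fun i _ => ?_
      rw [map_smul, ← smul_assoc]
      change _ = a i • ((1 : FractionRing D) ⊗ₜ[D] n i)
      rw [← hB, ← algebraMap_smul (FractionRing D) (a i), ha]
    obtain ⟨c, hc⟩ := (IsLocalizedModule.eq_iff_exists D⁰ (TensorProduct.mk D (FractionRing D) N 1)).1 h2
    refine ⟨c * e, mul_ne_zero (nonZeroDivisors.coe_ne_zero c) (nonZeroDivisors.coe_ne_zero e), ?_⟩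
    rw [← Submodule.Quotient.mk_smul, Submodule.Quotient.mk_eq_zero, mul_smul]
    have h4 : (c : D) • ((e : D) • z) = (c : D) • (∑ i, a i • n i) := hc
    rw [h4]
    exact Submodule.smul_mem _ _ (sum_mem fun i _ => Submodule.smul_mem _ _ (Submodule.subset_span ⟨i, rfl⟩))
  obtain ⟨c, hc0, hc⟩ := torsion_uniform D _ h1
  refine ⟨fun i => if h : i.1 < Module.finrank (FractionRing D) (FractionRing D ⊗[D] N) then n ⟨i.1, h⟩ else 0, c, hc0,
    fun z => ?_⟩
  have h5 := hc (Submodule.Quotient.mk z)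
  rw [← Submodule.Quotient.mk_smul, Submodule.Quotient.mk_eq_zero] at h5
  refine Submodule.span_mono ?_ h5
  rintro _ ⟨i, rfl⟩
  exact ⟨⟨i.1, i.2.trans_le hr⟩, by simp⟩

theorem rank_map_aux {r : ℕ} (B : Module.Basis (Fin r) (FractionRing D) (FractionRing D ⊗[D] N)) (n : Fin r → N)
    (hB : ∀ i, B i = (1 : FractionRing D) ⊗ₜ[D] n i) : ∃ (f : N →ₗ[D] (Fin r → D)) (c : D),
    c ≠ 0 ∧ ∀ w, c • w ∈ LinearMap.range f := by
  obtain ⟨m, g, hg⟩ := Module.Finite.exists_fin (R := D) (M := N)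
  let φ : N →ₗ[D] (Fin r → FractionRing D) :=
    (B.equivFun.toLinearMap.restrictScalars D) ∘ₗ (TensorProduct.mk D (FractionRing D) N 1)
  obtain ⟨e, he⟩ := IsLocalization.exist_integer_multiples D⁰ Finset.univ (fun i : Fin m × Fin r => φ (g i.1) i.2)
  let ι : (Fin r → D) →ₗ[D] (Fin r → FractionRing D) := LinearMap.pi fun i => Algebra.linearMap D (FractionRing D) ∘ₗ LinearMap.proj i
  have hι : Function.Injective ι := fun a b hab => funext fun i =>
    IsFractionRing.injective D (FractionRing D) (congrFun hab i)
  have hmem : ∀ z, ((e : D) • φ) z ∈ LinearMap.range ι := by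
    intro z
    have hz : z ∈ Submodule.span D (Set.range g) := hg ▸ trivial
    have : Submodule.span D (Set.range g) ≤ (LinearMap.range ι).comap ((e : D) • φ) := by
      rw [Submodule.span_le]
      rintro _ ⟨i, rfl⟩
      choose a ha using fun j => he (i, j) (Finset.mem_univ _)
      exact ⟨a, funext fun j => ha j⟩
    exact this hz
  let f : N →ₗ[D] (Fin r → D) := (LinearEquiv.ofInjective ι hι).symm.toLinearMap ∘ₗ
    LinearMap.codRestrict (LinearMap.range ι) ((e : D) • φ) hmem
  have hf : ∀ z, ι (f z) = (e : D) • φ z := by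
    intro z
    have := LinearEquiv.apply_symm_apply (LinearEquiv.ofInjective ι hι) (LinearMap.codRestrict (LinearMap.range ι) ((e : D) • φ) hmem z)
    exact congrArg Subtype.val this
  refine ⟨f, e, nonZeroDivisors.coe_ne_zero e, fun w => ⟨∑ i, w i • n i, hι ?_⟩⟩
  rw [hf, map_smul, map_sum]
  congr 1
  have h1 : ∀ i, φ (n i) = Pi.single i 1 := by
    intro i
    change B.equivFun (1 ⊗ₜ n i) = _
    rw [← hB]
    funext j
    rw [B.equivFun_self]
    simp [Pi.single_apply, eq_comm]
  funext j
  simp [h1, ι, Finset.sum_apply, Pi.single_apply, Algebra.smul_def]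

theorem rank_map : ∃ (f : N →ₗ[D] (Fin (Module.finrank (FractionRing D) (FractionRing D ⊗[D] N)) → D)) (c : D),
    c ≠ 0 ∧ ∀ w, c • w ∈ LinearMap.range f := by
  obtain ⟨B, n, hB⟩ := rank_basis D N
  exact rank_map_aux D N B n hB
end

theorem NAK {R : Type*} [CommRing R] (P : Ideal R) [hP : P.IsPrime] (C : Type*) [AddCommGroup C] [Module R C] [Module.Finite R C]
    (c : R) (hc : c ∉ P) (h : ∀ z : C, c • z ∈ P • (⊤ : Submodule R C)) : ∃ c' ∉ P, ∀ z : C, c' • z = 0 := by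
  obtain ⟨p, hp, -, hcoef, hz⟩ := LinearMap.exists_monic_and_natDegree_eq_and_coeff_mem_pow_and_aeval_eq_zero R
    (LinearMap.lsmul R C c) P (by rintro _ ⟨z, rfl⟩; exact h z)
  refine ⟨p.eval c, fun hmem => ?_, fun z => ?_⟩
  · rw [Polynomial.eval_eq_sum_range, Finset.sum_range_succ, hp.coeff_natDegree, one_mul] at hmem
    have h1 : ∑ i ∈ Finset.range p.natDegree, p.coeff i * c ^ i ∈ P := sum_mem fun i hi =>
      Ideal.mul_mem_right _ _ (Ideal.pow_le_self (by have := Finset.mem_range.1 hi; omega) (hcoef i))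
    exact hc (hP.mem_of_pow_mem _ ((Ideal.add_mem_iff_right _ h1).1 hmem))
  · have h2 : Polynomial.aeval (LinearMap.lsmul R C c) p z = 0 := by rw [hz]; rfl
    have h3 : LinearMap.lsmul R C c = algebraMap R (Module.End R C) c := by ext; rfl
    rw [h3, Polynomial.aeval_algebraMap_apply] at h2
    simpa using h2

end PartC4

section PartC5
open IsLocalRing

theorem mem_power_smul_exists {R : Type*} [CommRing R] {d : ℕ} (x : Fin d → R) (t : Fin d → ℕ) {M : Type*}
    [AddCommGroup M] [Module R M] {w : M} (hw : w ∈ powerIdeal x t • (⊤ : Submodule R M)) :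
    ∃ v : Fin d → M, w = ∑ k, x k ^ t k • v k := by
  let L : (Fin d → M) →ₗ[R] M := ∑ k, (x k ^ t k) • LinearMap.proj k
  have : powerIdeal x t • (⊤ : Submodule R M) ≤ LinearMap.range L := by
    rw [powerIdeal_smul_le]
    intro i m
    refine ⟨Pi.single i m, ?_⟩
    simp only [L, LinearMap.sum_apply, LinearMap.smul_apply, LinearMap.proj_apply]
    rw [Finset.sum_eq_single i]
    · simp
    · intro b _ hb; simp [hb]
    · simp
  obtain ⟨v, hv⟩ := this hw
  refine ⟨v, ?_⟩
  rw [← hv]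
  simp [L]

theorem EXT {R : Type*} [CommRing R] {d : ℕ} (x : Fin d → R) (t : Fin d → ℕ) {D : Type*} [CommRing D] [Algebra R D]
    {r h : ℕ} (H : QC (Ideal.span (Set.range x)) ⊥ h
      (⊤ : Submodule R ((Fin r → D) ⧸ (powerIdeal x t • (⊤ : Submodule R (Fin r → D)))))) :
    Dat (fun i => algebraMap R D (x i)) t r h := by
  obtain ⟨c, h0, h1, hc⟩ := H.exists_chain
  choose m hm1 hm2 using fun i : Fin h => hc i.1 i.2
  choose u hu using fun i => Submodule.Quotient.mk_surjective _ (m i)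
  have key : ∀ i ≤ h, ∀ z ∈ c i, ∃ α : Fin h → R, (∀ l : Fin h, i ≤ l.1 → α l = 0) ∧ z = ∑ l, α l • m l := by
    intro i
    induction i with
    | zero =>
      intro _ z hz
      rw [h0] at hz
      exact ⟨0, fun _ _ => rfl, by simpa using hz⟩
    | succ i ih =>
      intro hi z hz
      rw [hm1 ⟨i, hi⟩] at hz
      obtain ⟨z', hz', w, hw, rfl⟩ := Submodule.mem_sup.1 hz
      obtain ⟨e, rfl⟩ := Submodule.mem_span_singleton.1 hw
      obtain ⟨α, hα, rfl⟩ := ih (by omega) z' hz'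
      refine ⟨α + Pi.single ⟨i, hi⟩ e, fun l hl => ?_, ?_⟩
      · rw [Pi.add_apply, hα l (by omega), Pi.single_eq_of_ne, add_zero]
        intro hh
        rw [hh] at hl
        simp at hl
      · simp only [Pi.add_apply, add_smul, Finset.sum_add_distrib]
        congr 1
        rw [Finset.sum_eq_single (⟨i, hi⟩ : Fin h)]
        · simp
        · intro b _ hb; simp [hb]
        · simp
  have key2 : ∀ i ≤ h, ∀ w : Fin r → D, (Submodule.Quotient.mk w : (Fin r → D) ⧸ (powerIdeal x t • (⊤ : Submodule R (Fin r → D)))) ∈ c i →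
      ∃ (α : Fin h → D) (v : Fin d → Fin r → D), (∀ l : Fin h, i ≤ l.1 → α l = 0) ∧
        ∀ b, w b = ∑ l, α l * u l b + ∑ k, algebraMap R D (x k) ^ t k * v k b := by
    intro i hi w hw
    obtain ⟨α, hα, he⟩ := key i hi _ hw
    have h3 : w - ∑ l, α l • u l ∈ powerIdeal x t • (⊤ : Submodule R (Fin r → D)) := by
      rw [← Submodule.Quotient.mk_eq_zero, Submodule.Quotient.mk_sub, he, sub_eq_zero]
      change _ = Submodule.mkQ _ _
      rw [map_sum]
      refine Finset.sum_congr rfl fun l _ => ?_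
      rw [map_smul, ← hu l]
      rfl
    obtain ⟨v, hv⟩ := mem_power_smul_exists x t h3
    refine ⟨fun l => algebraMap R D (α l), v, fun l hl => by simp [hα l hl], fun b => ?_⟩
    have h4 := congrFun (sub_eq_iff_eq_add'.1 hv) b
    simpa [Finset.sum_apply, Algebra.smul_def] using h4
  choose a v ha hav using fun (i : Fin h) (j : Fin d) => key2 i.1 i.2.le (x j • u i) (by
    rw [Submodule.Quotient.mk_smul, hu]
    exact hm2 i _ (Ideal.subset_span ⟨j, rfl⟩))
  choose a' v' _ hav' using fun (b : Fin r) => key2 h le_rfl (Pi.single b 1) (by rw [h1]; trivial)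
  refine ⟨u, a, v, a', v', fun i j l hl => ha i j l hl, fun i j b => ?_, fun b e => ?_⟩
  · rw [← hav i j b, Pi.smul_apply, Algebra.smul_def]
  · rw [← hav' b e, Pi.single_apply]

theorem core_R {R : Type u} [CommRing R] [IsNoetherianRing R] [IsLocalRing R]
    (hfield : ∃ K : Subring R, IsField K) {d : ℕ} (x : Fin d → R)
    (hxparam : (Ideal.span (Set.range x)).radical = maximalIdeal R) (P : Ideal R) [P.IsPrime]
    (hP : (d : WithBot ℕ∞) ≤ ringKrullDim (R ⧸ P)) {t : Fin d → ℕ} (ht : ∀ i, 0 < t i) (r : ℕ) :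
    ((r * ∏ i, t i : ℕ) : ℕ∞) ≤ quasilength R (Ideal.span (Set.range x))
      ((Fin r → R ⧸ P) ⧸ (powerIdeal x t • (⊤ : Submodule R (Fin r → R ⧸ P)))) := by
  by_cases htop : quasilength R (Ideal.span (Set.range x))
      ((Fin r → R ⧸ P) ⧸ (powerIdeal x t • (⊤ : Submodule R (Fin r → R ⧸ P)))) = ⊤
  · rw [htop]; exact le_top
  obtain ⟨h, hh, H⟩ := exists_of_quasilength_ne_top htop
  rw [hh, Nat.cast_le]
  have hD := EXT x t H
  have hloc : IsLocalRing (R ⧸ P) := IsLocalRing.of_surjective' (Ideal.Quotient.mk P) Ideal.Quotient.mk_surjective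
  have hrad : (Ideal.span (Set.range fun i => algebraMap R (R ⧸ P) (x i))).radical = maximalIdeal (R ⧸ P) := by
    have e : Ideal.span (Set.range fun i => algebraMap R (R ⧸ P) (x i)) =
        (Ideal.span (Set.range x)).map (algebraMap R (R ⧸ P)) := by
      rw [Ideal.map_span, ← Set.range_comp]; rfl
    rw [e]
    have hloc' : IsLocalHom (algebraMap R (R ⧸ P)) :=
      IsLocalHom.of_surjective _ Ideal.Quotient.mk_surjective
    have hm : (maximalIdeal R).map (algebraMap R (R ⧸ P)) = maximalIdeal (R ⧸ P) := by
      apply le_antisymm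
      · rw [Ideal.map_le_iff_le_comap, IsLocalRing.maximalIdeal_comap]
      · intro y hy
        obtain ⟨z, rfl⟩ := Ideal.Quotient.mk_surjective y
        refine Ideal.mem_map_of_mem _ ?_
        rw [mem_maximalIdeal, mem_nonunits_iff] at hy ⊢
        exact fun hz => hy (hz.map _)
    apply le_antisymm
    · refine Ideal.IsPrime.radical_le_iff (inferInstance : (maximalIdeal (R ⧸ P)).IsPrime) |>.2 ?_
      rw [← hm]
      refine Ideal.map_mono ?_
      rw [← hxparam]
      exact Ideal.le_radical
    · rw [← hm, ← hxparam]
      exact Ideal.map_radical_le _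
  obtain ⟨K, hK⟩ := hfield
  let _ : Field K := hK.toField
  let g : K →+* R ⧸ P := (Ideal.Quotient.mk P).comp K.subtype
  obtain ⟨p, hp⟩ := CharP.exists K
  have hp' : CharP (R ⧸ P) p := charP_of_injective_ringHom g.injective p
  rcases CharP.char_is_prime_or_zero K p with hpp | rfl
  · exact CORE_p hpp hP hrad ht hD
  · have : CharZero K := CharP.charP_to_charZero K
    let _ : Algebra ℚ (R ⧸ P) := (g.comp (algebraMap ℚ K)).toAlgebra
    exact CORE_0 hP hrad ht hD

end PartC5

section PartC6
open IsLocalRing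
open scoped TensorProduct

theorem ql_right_exact {R : Type*} [CommRing R] {d : ℕ} (x : Fin d → R) (t : Fin d → ℕ) (J : Ideal R)
    {N M M' : Type*} [AddCommGroup N] [Module R N] [AddCommGroup M] [Module R M] [AddCommGroup M'] [Module R M']
    (f : N →ₗ[R] M) (g : M →ₗ[R] M') (hg : Function.Surjective g) (hfg : LinearMap.ker g ≤ LinearMap.range f) :
    quasilength R J (M ⧸ (powerIdeal x t • (⊤ : Submodule R M))) ≤
      quasilength R J (N ⧸ (powerIdeal x t • (⊤ : Submodule R N))) +
      quasilength R J (M' ⧸ (powerIdeal x t • (⊤ : Submodule R M'))) := by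
  have hle2 : powerIdeal x t • (⊤ : Submodule R M) ≤ (powerIdeal x t • (⊤ : Submodule R M')).comap g := by
    rw [← Submodule.map_le_iff_le_comap, Submodule.map_smul'']
    exact Submodule.smul_mono le_rfl le_top
  have hle1 : powerIdeal x t • (⊤ : Submodule R N) ≤ (powerIdeal x t • (⊤ : Submodule R M)).comap f := by
    rw [← Submodule.map_le_iff_le_comap, Submodule.map_smul'']
    exact Submodule.smul_mono le_rfl le_top
  refine quasilength_exact (Submodule.mapQ _ _ f hle1) (Submodule.mapQ _ _ g hle2) ?_ ?_
  · intro y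
    obtain ⟨y, rfl⟩ := Submodule.Quotient.mk_surjective _ y
    obtain ⟨z, rfl⟩ := hg y
    exact ⟨Submodule.Quotient.mk z, rfl⟩
  · intro y hy
    obtain ⟨y, rfl⟩ := Submodule.Quotient.mk_surjective _ y
    rw [LinearMap.mem_ker, Submodule.mapQ_apply, Submodule.Quotient.mk_eq_zero] at hy
    obtain ⟨v, hv⟩ := mem_power_smul_exists x t hy
    choose w hw using fun k => hg (v k)
    have h1 : y - ∑ k, x k ^ t k • w k ∈ LinearMap.ker g := by
      rw [LinearMap.mem_ker, map_sub, map_sum, hv, sub_eq_zero]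
      exact Finset.sum_congr rfl fun k _ => by rw [map_smul, hw]
    obtain ⟨n, hn⟩ := hfg h1
    refine ⟨Submodule.Quotient.mk n, ?_⟩
    rw [Submodule.mapQ_apply, hn, Submodule.Quotient.eq, sub_sub_cancel_left]
    refine neg_mem (sum_mem fun k _ => ?_)
    exact (powerIdeal_smul_le x t _).1 le_rfl k _

theorem num_lower {r T s A : ℕ} {q e : ℕ∞} (hT : 0 < T) (hs : 0 < s) (h1 : ((r * T : ℕ) : ℕ∞) ≤ q + e)
    (h2 : (s : ℕ∞) * e ≤ A * T) : (r : ℝ≥0∞) ≤ (q : ℝ≥0∞) / T + (A : ℝ≥0∞) / s := by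
  have h1' : (r : ℝ≥0∞) * T ≤ (q : ℝ≥0∞) + e := by
    have := ENat.toENNReal_mono h1
    simpa using this
  have h2' : (s : ℝ≥0∞) * e ≤ (A : ℝ≥0∞) * T := by
    have := ENat.toENNReal_mono h2
    simpa using this
  have hT0 : (T : ℝ≥0∞) ≠ 0 := by exact_mod_cast hT.ne'
  have hs0 : (s : ℝ≥0∞) ≠ 0 := by exact_mod_cast hs.ne'
  have hTt : (T : ℝ≥0∞) ≠ ⊤ := ENNReal.natCast_ne_top T
  have hst : (s : ℝ≥0∞) ≠ ⊤ := ENNReal.natCast_ne_top s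
  have h3 : (e : ℝ≥0∞) / T ≤ (A : ℝ≥0∞) / s := by
    rw [ENNReal.div_le_iff hT0 hTt, ← ENNReal.mul_div_right_comm, ENNReal.le_div_iff_mul_le (Or.inl hs0) (Or.inl hst), mul_comm]
    exact h2'
  calc (r : ℝ≥0∞) ≤ ((q : ℝ≥0∞) + e) / T := by
        rw [ENNReal.le_div_iff_mul_le (Or.inl hT0) (Or.inl hTt)]; exact h1'
    _ = (q : ℝ≥0∞) / T + (e : ℝ≥0∞) / T := ENNReal.add_div
    _ ≤ _ := by gcongr

theorem num_upper {r T s A : ℕ} {q e : ℕ∞} (hT : 0 < T) (hs : 0 < s) (h1 : q ≤ ((r * T : ℕ) : ℕ∞) + e)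
    (h2 : (s : ℕ∞) * e ≤ A * T) : (q : ℝ≥0∞) / T ≤ r + (A : ℝ≥0∞) / s := by
  have h1' : (q : ℝ≥0∞) ≤ (r : ℝ≥0∞) * T + e := by
    have := ENat.toENNReal_mono h1
    simpa using this
  have h2' : (s : ℝ≥0∞) * e ≤ (A : ℝ≥0∞) * T := by
    have := ENat.toENNReal_mono h2
    simpa using this
  have hT0 : (T : ℝ≥0∞) ≠ 0 := by exact_mod_cast hT.ne'
  have hs0 : (s : ℝ≥0∞) ≠ 0 := by exact_mod_cast hs.ne'
  have hTt : (T : ℝ≥0∞) ≠ ⊤ := ENNReal.natCast_ne_top T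
  have hst : (s : ℝ≥0∞) ≠ ⊤ := ENNReal.natCast_ne_top s
  rw [ENNReal.div_le_iff hT0 hTt, add_mul]
  refine h1'.trans ?_
  gcongr
  rw [← ENNReal.mul_div_right_comm, ENNReal.le_div_iff_mul_le (Or.inl hs0) (Or.inl hst), mul_comm]
  exact h2'

theorem lim_arg {a b : ℝ≥0∞} (A : ℕ) (s0 : ℕ) (h : ∀ s : ℕ, s0 ≤ s → 0 < s → a ≤ b + (A : ℝ≥0∞) / s) : a ≤ b := by
  have h1 : Filter.Tendsto (fun s : ℕ => b + (A : ℝ≥0∞) / s) Filter.atTop (nhds (b + 0)) := by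
    refine Filter.Tendsto.add tendsto_const_nhds ?_
    have := ENNReal.Tendsto.const_mul (a := (A : ℝ≥0∞)) ENNReal.tendsto_inv_nat_nhds_zero (Or.inr (ENNReal.natCast_ne_top A))
    simpa [div_eq_mul_inv] using this
  rw [add_zero] at h1
  refine ge_of_tendsto h1 ?_
  filter_upwards [Filter.eventually_ge_atTop (s0 + 1)] with s hs
  exact h s (by omega) (by omega)

theorem dim_lt {a : WithBot ℕ∞} {d : ℕ} (h : a + 1 ≤ d) : a < d := by
  by_contra hh
  push Not at hh
  have h1 : (d : WithBot ℕ∞) + 1 ≤ d := le_trans (by gcongr) h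
  have h2 : ((d + 1 : ℕ) : WithBot ℕ∞) ≤ (d : ℕ) := by exact_mod_cast h1
  have h3 : d + 1 ≤ d := by exact_mod_cast h2
  omega

theorem LOWER {R : Type u} [CommRing R] [IsNoetherianRing R] [IsLocalRing R]
    (hfield : ∃ K : Subring R, IsField K) {d : ℕ} (x : Fin d → R)
    (hxparam : (Ideal.span (Set.range x)).radical = maximalIdeal R)
    (M : Type v) [AddCommGroup M] [Module R M] [Module.Finite R M] (P : Ideal R) [P.IsPrime]
    (hP : ringKrullDim (R ⧸ P) = d) :
    (Module.finrank (FractionRing (R ⧸ P))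
          (FractionRing (R ⧸ P) ⊗[R ⧸ P] (M ⧸ (P • (⊤ : Submodule R M)))) : ℝ≥0∞) ≤ content x M := by
  have hfin : Module.Finite (R ⧸ P) (M ⧸ (P • (⊤ : Submodule R M))) := Module.Finite.of_restrictScalars_finite R _ _
  obtain ⟨f, c, hc0, hc⟩ := rank_map (R ⧸ P) (M ⧸ (P • (⊤ : Submodule R M)))
  generalize (Module.finrank (FractionRing (R ⧸ P))
          (FractionRing (R ⧸ P) ⊗[R ⧸ P] (M ⧸ (P • (⊤ : Submodule R M))))) = r at f hc ⊢
  let F : M →ₗ[R] (Fin r → R ⧸ P) := (f.restrictScalars R) ∘ₗ Submodule.mkQ _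
  let φ : R →+* (R ⧸ P) ⧸ Ideal.span {c} := (Ideal.Quotient.mk (Ideal.span {c})).comp (Ideal.Quotient.mk P)
  have hφ : Function.Surjective φ := Ideal.Quotient.mk_surjective.comp Ideal.Quotient.mk_surjective
  have hdim : ringKrullDim (R ⧸ RingHom.ker φ) < d := by
    rw [ringKrullDim_eq_of_ringEquiv (RingHom.quotientKerEquivOfSurjective hφ)]
    apply dim_lt
    rw [← hP]
    exact ringKrullDim_quotient_succ_le_of_nonZeroDivisor (mem_nonZeroDivisors_of_ne_zero hc0)
  have hkill : ∀ a ∈ RingHom.ker φ, ∀ z : (Fin r → R ⧸ P) ⧸ LinearMap.range F, a • z = 0 := by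
    intro a ha z
    obtain ⟨w, rfl⟩ := Submodule.Quotient.mk_surjective _ z
    rw [← Submodule.Quotient.mk_smul, Submodule.Quotient.mk_eq_zero]
    have h1 : Ideal.Quotient.mk P a ∈ Ideal.span {c} := Ideal.Quotient.eq_zero_iff_mem.1 ha
    obtain ⟨e, he⟩ := Ideal.mem_span_singleton'.1 h1
    obtain ⟨n, hn⟩ := hc (e • w)
    obtain ⟨m, rfl⟩ := Submodule.Quotient.mk_surjective _ n
    refine ⟨m, ?_⟩
    refine hn.trans ?_
    rw [← mul_smul, mul_comm, he]
    rfl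
  obtain ⟨A, hA⟩ := TOR x hxparam (RingHom.ker φ) hdim hkill
  refine lim_arg A 0 fun s _ hs => ?_
  have h1 : (r : ℝ≥0∞) ≤ (⨅ t : {t : Fin d → ℕ // ∀ i, s ≤ t i ∧ 0 < t i},
    (quasilength R (Ideal.span (Set.range x))
        (M ⧸ (powerIdeal x (t : Fin d → ℕ) • (⊤ : Submodule R M))) : ℝ≥0∞) /
      ∏ i, ((t : Fin d → ℕ) i : ℝ≥0∞)) + (A : ℝ≥0∞) / s := by
    rw [ENNReal.iInf_add]
    refine le_iInf fun t => ?_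
    have h2 := core_R hfield x hxparam P hP.ge (t := t.1) (fun i => (t.2 i).2) r
    have h3 := ql_right_exact x t.1 (Ideal.span (Set.range x)) F (Submodule.mkQ (LinearMap.range F))
      (Submodule.mkQ_surjective _) (by rw [Submodule.ker_mkQ])
    have h4 := num_lower (Finset.prod_pos fun i _ => (t.2 i).2) hs (h2.trans h3) (hA s hs t.1 fun i => (t.2 i).1)
    rwa [Nat.cast_prod] at h4
  refine h1.trans ?_
  gcongr
  exact le_iSup (fun s : ℕ => ⨅ t : {t : Fin d → ℕ // ∀ i, s ≤ t i ∧ 0 < t i},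
    (quasilength R (Ideal.span (Set.range x))
        (M ⧸ (powerIdeal x (t : Fin d → ℕ) • (⊤ : Submodule R M))) : ℝ≥0∞) /
      ∏ i, ((t : Fin d → ℕ) i : ℝ≥0∞)) s

end PartC6

section PartC7
open IsLocalRing
open scoped TensorProduct

theorem local_gens {R : Type u} [CommRing R] (P : Ideal R) [P.IsPrime]
    (M : Type v) [AddCommGroup M] [Module R M] [Module.Finite R M] {r : ℕ}
    (hr : Module.finrank (FractionRing (R ⧸ P))
          (FractionRing (R ⧸ P) ⊗[R ⧸ P] (M ⧸ (P • (⊤ : Submodule R M)))) ≤ r) :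
    ∃ (m : Fin r → M) (c : R), c ∉ P ∧ ∀ z : M, c • z ∈ Submodule.span R (Set.range m) ⊔ P • (⊤ : Submodule R M) := by
  have hfin : Module.Finite (R ⧸ P) (M ⧸ (P • (⊤ : Submodule R M))) := Module.Finite.of_restrictScalars_finite R _ _
  obtain ⟨n, c, hc0, hc⟩ := rank_gens (R ⧸ P) (M ⧸ (P • (⊤ : Submodule R M))) hr
  choose m hm using fun i => Submodule.Quotient.mk_surjective _ (n i)
  obtain ⟨c, rfl⟩ := Ideal.Quotient.mk_surjective c
  refine ⟨m, c, fun h => hc0 (Ideal.Quotient.eq_zero_iff_mem.2 h), fun z => ?_⟩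
  obtain ⟨e, he⟩ := (Submodule.mem_span_range_iff_exists_fun (R ⧸ P)).1 (hc (Submodule.Quotient.mk z))
  choose e' he' using fun i => Ideal.Quotient.mk_surjective (e i)
  have h1 : c • z - ∑ i, e' i • m i ∈ P • (⊤ : Submodule R M) := by
    rw [← Submodule.Quotient.mk_eq_zero, Submodule.Quotient.mk_sub, sub_eq_zero]
    refine Eq.trans ?_ (he.symm.trans ?_)
    · rfl
    · change _ = Submodule.mkQ _ _
      rw [map_sum]
      refine Finset.sum_congr rfl fun i _ => ?_
      rw [map_smul, ← hm, ← he']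
      rfl
  have h2 : c • z = ∑ i, e' i • m i + (c • z - ∑ i, e' i • m i) := by abel
  rw [h2]
  exact Submodule.add_mem_sup (sum_mem fun i _ => Submodule.smul_mem _ _ (Submodule.subset_span ⟨i, rfl⟩)) h1

theorem dim_ann {R : Type u} [CommRing R] {d : ℕ} (hd : ringKrullDim R = d) (𝔞 : Ideal R)
    (h : ∀ P : Ideal R, P ∈ minimalPrimes R → ringKrullDim (R ⧸ P) = d → ¬ 𝔞 ≤ P) : ringKrullDim (R ⧸ 𝔞) < d := by
  by_contra hlt
  push Not at hlt
  rw [ringKrullDim_quotient] at hlt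
  obtain ⟨l, hl⟩ := Order.le_krullDim_iff.1 hlt
  have hmono : StrictMono (Subtype.val : PrimeSpectrum.zeroLocus (𝔞 : Set R) → PrimeSpectrum R) := fun _ _ hab => hab
  let L : LTSeries (PrimeSpectrum R) := l.map _ hmono
  have hL : L.length = d := hl
  let P : PrimeSpectrum R := L.head
  have hPa : 𝔞 ≤ P.asIdeal := l.head.2
  have hge : (d : WithBot ℕ∞) ≤ ringKrullDim (R ⧸ P.asIdeal) := by
    rw [ringKrullDim_quotient, Order.le_krullDim_iff]
    refine ⟨⟨L.length, fun i => ⟨L i, fun a ha => ?_⟩, fun i => L.step i⟩, hL⟩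
    exact (L.monotone (Fin.zero_le i) : L 0 ≤ L i) ha
  have heq : ringKrullDim (R ⧸ P.asIdeal) = d := le_antisymm (hd ▸ ringKrullDim_quotient_le _) hge
  have hmin : P.asIdeal ∈ minimalPrimes R := by
    refine ⟨⟨P.2, bot_le⟩, fun Q hQ hQP => ?_⟩
    by_contra hne
    have hlt : (⟨Q, hQ.1⟩ : PrimeSpectrum R) < L.head := lt_of_le_not_ge hQP hne
    have h3 : (((L.cons _ hlt).length : ℕ) : WithBot ℕ∞) ≤ ringKrullDim R := Order.le_krullDim_iff.2 ⟨_, rfl⟩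
    rw [hd] at h3
    have h4 : (L.cons _ hlt).length = d + 1 := by rw [RelSeries.cons_length, hL]
    rw [h4] at h3
    have : d + 1 ≤ d := by exact_mod_cast h3
    omega
  exact h _ hmin heq hPa

theorem global_gens {R : Type u} [CommRing R] [IsNoetherianRing R] {d : ℕ} (hd : ringKrullDim R = d)
    (M : Type v) [AddCommGroup M] [Module R M] [Module.Finite R M] {r : ℕ}
    (hr : ∀ P : Ideal R, P ∈ minimalPrimes R → ringKrullDim (R ⧸ P) = d → Module.finrank (FractionRing (R ⧸ P))
          (FractionRing (R ⧸ P) ⊗[R ⧸ P] (M ⧸ (P • (⊤ : Submodule R M)))) ≤ r) :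
    ∃ u : Fin r → M, ∃ 𝔞 : Ideal R, ringKrullDim (R ⧸ 𝔞) < d ∧
      ∀ a ∈ 𝔞, ∀ z : M ⧸ Submodule.span R (Set.range u), a • z = 0 := by
  classical
  let I := {P : Ideal R // P ∈ minimalPrimes R ∧ ringKrullDim (R ⧸ P) = d}
  have hfI : Finite I := ((minimalPrimes.finite_of_isNoetherianRing R).subset (fun P hP => hP.1) :
    {P : Ideal R | P ∈ minimalPrimes R ∧ ringKrullDim (R ⧸ P) = d}.Finite).to_subtype
  let _ : Fintype I := Fintype.ofFinite I
  have hpr : ∀ P : I, P.1.IsPrime := fun P => P.2.1.1.1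
  choose m c hc hm using fun P : I => @local_gens R _ P.1 (hpr P) M _ _ _ r (hr P.1 P.2.1 P.2.2)
  have hb : ∀ P Q : I, ∃ b : R, b ∈ Q.1 ∧ (Q ≠ P → b ∉ P.1) := by
    intro P Q
    by_cases hQP : Q = P
    · exact ⟨0, zero_mem _, fun h => absurd hQP h⟩
    · have : ¬ Q.1 ≤ P.1 := fun hle => hQP (Subtype.ext (le_antisymm hle (P.2.1.2 ⟨hpr Q, bot_le⟩ hle)))
      obtain ⟨b, hb1, hb2⟩ := SetLike.not_le_iff_exists.1 this
      exact ⟨b, hb1, fun _ => hb2⟩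
  choose b hb1 hb2 using hb
  let a : I → R := fun P => ∏ Q ∈ Finset.univ.erase P, b P Q
  have ha1 : ∀ P : I, a P ∉ P.1 := by
    intro P hmem
    obtain ⟨Q, hQ, hQ'⟩ := (hpr P).prod_mem_iff.1 hmem
    exact hb2 P Q (Finset.ne_of_mem_erase hQ) hQ'
  have ha2 : ∀ P Q : I, Q ≠ P → a P ∈ Q.1 := by
    intro P Q hQ
    exact Ideal.mem_of_dvd _ (Finset.dvd_prod_of_mem _ (Finset.mem_erase.2 ⟨hQ, Finset.mem_univ _⟩)) (hb1 P Q)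
  let u : Fin r → M := fun i => ∑ P : I, a P • m P i
  refine ⟨u, Module.annihilator R (M ⧸ Submodule.span R (Set.range u)), dim_ann hd _ ?_,
    fun e he z => Module.mem_annihilator.1 he z⟩
  intro P0 hP1 hP2 hle
  let P : I := ⟨P0, hP1, hP2⟩
  have := hpr P
  obtain ⟨c', hc', hz'⟩ := NAK P.1 (M ⧸ Submodule.span R (Set.range u)) (a P * c P)
    (fun hh => ((hpr P).mem_or_mem hh).elim (ha1 P) (hc P)) (by
      intro z
      obtain ⟨z, rfl⟩ := Submodule.Quotient.mk_surjective _ z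
      let π := Submodule.mkQ (Submodule.span R (Set.range u))
      have hsub : Submodule.span R (Set.range (m P)) ⊔ P.1 • (⊤ : Submodule R M) ≤
          (P.1 • (⊤ : Submodule R (M ⧸ Submodule.span R (Set.range u)))).comap (a P • π) := by
        refine sup_le (Submodule.span_le.2 ?_) ?_
        · rintro _ ⟨i, rfl⟩
          change a P • π (m P i) ∈ P.1 • (⊤ : Submodule R (M ⧸ Submodule.span R (Set.range u)))
          have h1 : π (u i) = 0 := (Submodule.Quotient.mk_eq_zero _).2 (Submodule.subset_span ⟨i, rfl⟩)
          have h2 : π (u i) = a P • π (m P i) + ∑ Q ∈ Finset.univ.erase P, a Q • π (m Q i) := by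
            simp only [u, map_sum, map_smul]
            rw [← Finset.add_sum_erase _ _ (Finset.mem_univ P)]
          rw [h1] at h2
          rw [eq_neg_of_add_eq_zero_left h2.symm]
          exact neg_mem (sum_mem fun Q hQ =>
            Submodule.smul_mem_smul (ha2 Q P (Finset.ne_of_mem_erase hQ).symm) trivial)
        · rw [← Submodule.map_le_iff_le_comap, Submodule.map_smul'']
          exact Submodule.smul_mono le_rfl le_top
      rw [mul_smul]
      exact hsub (hm P z))
  exact hc' (hle (Module.mem_annihilator.2 hz'))

theorem ql_free {R : Type u} [CommRing R] {d : ℕ} (x : Fin d → R) (t : Fin d → ℕ) (ht : ∀ i, 0 < t i) :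
    quasilength R (Ideal.span (Set.range x)) (R ⧸ (powerIdeal x t • (⊤ : Submodule R R))) ≤ ((∏ i, t i : ℕ) : ℕ∞) := by
  have h1 := lam_const (fun t => quasilength R (Ideal.span (Set.range x)) (R ⧸ (powerIdeal x t • (⊤ : Submodule R R))))
    (fun t i a b => ql_sub _ x t i a b) t ht
  refine h1.trans ?_
  have h2 : quasilength R (Ideal.span (Set.range x)) (R ⧸ (powerIdeal x (fun _ => 1) • (⊤ : Submodule R R))) ≤ 1 := by
    refine quasilength_cyclic_le_one (Submodule.Quotient.mk 1) ?_ ?_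
    · rw [eq_top_iff]
      rintro z -
      obtain ⟨z, rfl⟩ := Submodule.Quotient.mk_surjective _ z
      rw [Submodule.mem_span_singleton]
      refine ⟨z, ?_⟩
      rw [← Submodule.Quotient.mk_smul]
      exact congrArg _ (mul_one z)
    · intro a ha
      rw [← Submodule.Quotient.mk_smul, Submodule.Quotient.mk_eq_zero]
      refine Submodule.smul_mem_smul ?_ trivial
      simpa [powerIdeal] using ha
  calc _ ≤ ((∏ i, t i : ℕ) : ℕ∞) * 1 := by gcongr
    _ = _ := mul_one _

theorem UPPER {R : Type u} [CommRing R] [IsNoetherianRing R] [IsLocalRing R]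
    {d : ℕ} (hd : ringKrullDim R = d) (x : Fin d → R)
    (hxparam : (Ideal.span (Set.range x)).radical = maximalIdeal R)
    (M : Type v) [AddCommGroup M] [Module R M] [Module.Finite R M] {r : ℕ}
    (hr : ∀ P : Ideal R, P ∈ minimalPrimes R → ringKrullDim (R ⧸ P) = d → Module.finrank (FractionRing (R ⧸ P))
          (FractionRing (R ⧸ P) ⊗[R ⧸ P] (M ⧸ (P • (⊤ : Submodule R M)))) ≤ r) :
    content x M ≤ r := by
  obtain ⟨u, 𝔞, hdim, hkill⟩ := global_gens hd M hr
  obtain ⟨A, hA⟩ := TOR x hxparam 𝔞 hdim hkill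
  refine iSup_le fun s0 => lim_arg A s0 fun s hs0 hs => ?_
  let t : {t : Fin d → ℕ // ∀ i, s0 ≤ t i ∧ 0 < t i} := ⟨fun _ => s, fun _ => ⟨hs0, hs⟩⟩
  refine (iInf_le _ t).trans ?_
  let G : (Fin r → R) →ₗ[R] M := Fintype.linearCombination R u
  have hG : LinearMap.range G = Submodule.span R (Set.range u) := Fintype.range_linearCombination R u
  have h3 := ql_right_exact x t.1 (Ideal.span (Set.range x)) G (Submodule.mkQ (Submodule.span R (Set.range u)))
      (Submodule.mkQ_surjective _) (by rw [Submodule.ker_mkQ, hG])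
  have h5 : quasilength R (Ideal.span (Set.range x)) ((Fin r → R) ⧸ (powerIdeal x t.1 • (⊤ : Submodule R (Fin r → R)))) ≤
      ((r * ∏ i, t.1 i : ℕ) : ℕ∞) := by
    have hle : ∀ i : Fin r, powerIdeal x t.1 • (⊤ : Submodule R R) ≤
        (powerIdeal x t.1 • (⊤ : Submodule R (Fin r → R))).comap (LinearMap.single R (fun _ => R) i) := by
      intro i
      rw [← Submodule.map_le_iff_le_comap, Submodule.map_smul'']
      exact Submodule.smul_mono le_rfl le_top
    have h6 := quasilength_of_gens (J := Ideal.span (Set.range x)) (Finset.univ : Finset (Fin r))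
      (fun i => Submodule.mapQ _ _ (LinearMap.single R (fun _ => R) i) (hle i)) (by
        rw [eq_top_iff]
        rintro z -
        obtain ⟨z, rfl⟩ := Submodule.Quotient.mk_surjective _ z
        rw [← Finset.univ_sum_single z]
        change Submodule.mkQ _ _ ∈ _
        rw [map_sum]
        refine sum_mem fun i _ => ?_
        exact Submodule.mem_iSup_of_mem i (Submodule.mem_iSup_of_mem (Finset.mem_univ i) ⟨Submodule.Quotient.mk (z i), rfl⟩))
    rw [Finset.card_univ, Fintype.card_fin] at h6
    refine h6.trans ?_
    rw [Nat.cast_mul]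
    gcongr
    exact ql_free x t.1 fun i => (t.2 i).2
  have h4 := num_upper (Finset.prod_pos fun i _ => (t.2 i).2) hs (h3.trans (by gcongr)) (hA s hs t.1 fun i => le_rfl)
  rwa [Nat.cast_prod] at h4

end PartC7

open scoped TensorProduct

/-- Over a `d`-dimensional Noetherian local ring containing a
field, with `x₁, …, x_d` a system of parameters, the content of a finitely
generated module `M` is the maximum of the ranks `rank_{R/P}(M/PM)` over the
minimal primes `P` with `dim R/P = d`. -/
theorem content_eq_max_rank
    {R : Type u} [CommRing R] [IsNoetherianRing R] [IsLocalRing R]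
    (hfield : ∃ K : Subring R, IsField K)
    {d : ℕ} (hd : ringKrullDim R = d)
    (x : Fin d → R) (hx : ∀ i, x i ∈ IsLocalRing.maximalIdeal R)
    (hxparam : (Ideal.span (Set.range x)).radical = IsLocalRing.maximalIdeal R)
    (M : Type u) [AddCommGroup M] [Module R M] [Module.Finite R M] :
    content x M =
      ⨆ P : {P : Ideal R // P ∈ minimalPrimes R ∧ ringKrullDim (R ⧸ P) = d},
        (Module.finrank (FractionRing (R ⧸ P.1))
          (FractionRing (R ⧸ P.1) ⊗[R ⧸ P.1] (M ⧸ (P.1 • (⊤ : Submodule R M)))) : ℝ≥0∞) := by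
  have hfI : Finite {P : Ideal R // P ∈ minimalPrimes R ∧ ringKrullDim (R ⧸ P) = d} :=
    ((minimalPrimes.finite_of_isNoetherianRing R).subset (fun P hP => hP.1) :
    {P : Ideal R | P ∈ minimalPrimes R ∧ ringKrullDim (R ⧸ P) = d}.Finite).to_subtype
  apply le_antisymm
  · rcases isEmpty_or_nonempty {P : Ideal R // P ∈ minimalPrimes R ∧ ringKrullDim (R ⧸ P) = d} with he | hne
    · refine (UPPER hd x hxparam M (r := 0) fun P hP1 hP2 => (he.false ⟨P, hP1, hP2⟩).elim).trans ?_
      simp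
    · obtain ⟨P, hP⟩ := Finite.exists_max
        (fun P : {P : Ideal R // P ∈ minimalPrimes R ∧ ringKrullDim (R ⧸ P) = d} =>
          Module.finrank (FractionRing (R ⧸ P.1))
            (FractionRing (R ⧸ P.1) ⊗[R ⧸ P.1] (M ⧸ (P.1 • (⊤ : Submodule R M)))))
      refine (UPPER hd x hxparam M fun Q hQ1 hQ2 => hP ⟨Q, hQ1, hQ2⟩).trans ?_
      exact le_iSup (fun P : {P : Ideal R // P ∈ minimalPrimes R ∧ ringKrullDim (R ⧸ P) = d} =>
        (Module.finrank (FractionRing (R ⧸ P.1))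
          (FractionRing (R ⧸ P.1) ⊗[R ⧸ P.1] (M ⧸ (P.1 • (⊤ : Submodule R M)))) : ℝ≥0∞)) P
  · refine iSup_le fun P => ?_
    have : P.1.IsPrime := P.2.1.1.1
    exact LOWER hfield x hxparam M P.1 P.2.2
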